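/- Fix c > 0 and suppose f solves the max-matching PDE with parameter c. For each N ≥ 1, let X₁, …, X_N and Y₁, …, Y_N be 2N independent uniform random variables on [0,1]; run the greedy algorithm closest with threshold c/N and offline set {X₁, …, X_N} on the arrival sequence Y₁, Y₂, …, Y_N, and let κ_N(t) be the number of online points matched among the first ⌊tN⌋ arrivals. Then for every t ∈ [0,1], κ_N(t)/N converges in probability, as N → ∞, to 1 − ∫₀^∞ f(x,t) dx. -/

import Mathlib

open MeasureTheory
open scoped ENNReal

/-- One step of the greedy algorithm `closest` with threshold `r ∈ (0, ∞]`: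
given the set `S` of free offline points and an arriving point `y`, if some
`x ∈ S` satisfies `|x - y| < r` then `y` is matched to the `x ∈ S` minimizing
`|x - y|` (ties broken in favor of the smaller `x`), which is removed from `S`;
otherwise `y` stays unmatched.  Returns the new free set and the chosen point. -/
noncomputable def closestStep (r : ℝ≥0∞) (S : Finset ℝ) (y : ℝ) : Finset ℝ × Option ℝ :=
  if h : (S.filter fun x => ENNReal.ofReal |x - y| < r).Nonempty then
    let x0 := (((S.filter fun x => ENNReal.ofReal |x - y| < r)).filter
        (fun x => |x - y| =
          (S.filter fun x => ENNReal.ofReal |x - y| < r).inf' h fun x => |x - y|)).min'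
      (by
        obtain ⟨b, hb, he⟩ :=
          Finset.exists_mem_eq_inf' h (fun x : ℝ => |x - y|)
        exact ⟨b, Finset.mem_filter.2 ⟨hb, he.symm⟩⟩)
    (S.erase x0, some x0)
  else (S, none)

/-- The state of the greedy algorithm `closest` after the first `m` arrivals
`y 0, …, y (m-1)`, starting from the offline set `X`: the set of free offline
points, the number of matched online points, and the total length of the matching. -/
noncomputable def closestState (r : ℝ≥0∞) (X : Finset ℝ) (y : ℕ → ℝ) : ℕ → Finset ℝ × ℕ × ℝ
  | 0 => (X, 0, 0)
  | m + 1 =>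
    match closestStep r (closestState r X y m).1 (y m) with
    | (S', none) => (S', (closestState r X y m).2.1, (closestState r X y m).2.2)
    | (S', some x) =>
        (S', (closestState r X y m).2.1 + 1, (closestState r X y m).2.2 + |x - y m|)

/-- Number of online points matched by `closest` among the first `m` arrivals. -/
noncomputable def closestMatchedCount (r : ℝ≥0∞) (X : Finset ℝ) (y : ℕ → ℝ) (m : ℕ) : ℕ :=
  (closestState r X y m).2.1

/-- The right-hand side of the max-matching PDE with parameter `c`. -/
noncomputable def maxMatchRHS (c : ℝ) (f : ℝ → ℝ → ℝ) (x t : ℝ) : ℝ :=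
  -(min x (2 * c)) * f x t
    - ((∫ x' in Set.Ioi (0 : ℝ), min x' (2 * c) * f x' t) /
        (∫ x' in Set.Ioi (0 : ℝ), f x' t)) * f x t
    + (∫ x' in (0 : ℝ)..x, min x' (2 * c) * f x' t * f (x - x') t) /
        (∫ x' in Set.Ioi (0 : ℝ), f x' t)

/-- `f` solves the max-matching PDE with parameter `c`. -/
def SolvesMaxMatchingPDE (c : ℝ) (f : ℝ → ℝ → ℝ) : Prop :=
  Measurable (Function.uncurry f) ∧
  (∀ x t, 0 ≤ f x t) ∧
  (∀ x t, x < 0 → f x t = 0) ∧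
  (∀ t ∈ Set.Icc (0 : ℝ) 1,
    IntegrableOn (fun x => f x t) (Set.Ioi 0) ∧
    IntegrableOn (fun x => x * f x t) (Set.Ioi 0) ∧
    0 < ∫ x in Set.Ioi (0 : ℝ), f x t) ∧
  (∀ x, 0 ≤ x → f x 0 = Real.exp (-x)) ∧
  (∀ x, 0 ≤ x → ∀ t ∈ Set.Icc (0 : ℝ) 1,
    HasDerivWithinAt (fun s => f x s) (maxMatchRHS c f x t) (Set.Icc 0 1) t)

/-- The product of `N` copies of the uniform distribution on `[0,1]`. -/
noncomputable def unifCube (N : ℕ) : Measure (Fin N → ℝ) :=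
  Measure.pi fun _ => volume.restrict (Set.Icc 0 1)

/-!
Read the free offline points from left to right at scale `1 / N`. The number of free points is the
sum of `φ = 1` over them; more generally let `φ` depend on the first few rescaled gaps to the right
of each point. An arrival removes a free point with probability proportional to the length of the
part of its two adjacent gaps lying within the threshold, so the expected change of `N⁻¹ ∑ φ` is
`N⁻¹` times the sum of `generator c k φ`, a functional of one more gap, up to `O(N⁻²)`.

If `f` solves the PDE, then `gapMoment f t φ = u(t) E[φ(g₀, g₁, …)]`, where `u(t) = ∫ f(x, t) dx`
and the `gᵢ` are i.i.d. with density `f(·, t) / u(t)`, obeys the same linear hierarchy with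
derivative `gapMoment f t (generator c k φ)`. The generator increases `k` by one and has norm
`O(k + 1)`, so its `i`-th iterate has norm at most `i!` times a geometric term, the Taylor
expansion along the hierarchy converges on a short time interval, and finitely many such intervals
cover `[0, 1]`. At time `0` the gaps of `N` uniform points converge to i.i.d. exponential
variables, which is the initial condition `f(x, 0) = exp (-x)`. So the mean number of free points
is asymptotic to `N u(t)`.

Changing one offline or one online point changes the number of free points by at most one, because
two runs whose free sets differ by one point keep this property. The Efron–Stein inequality bounds
the variance by `2 N`, and Chebyshev's inequality concludes.
-/

namespace ClosestMatching
open scoped Convolution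

section Analysis

theorem hasDerivWithinAt_integral_of_dominated {α : Type*} [MeasurableSpace α] {μ : Measure α}
    {s : Set ℝ} (hs : Convex ℝ s) {F F' : ℝ → α → ℝ} {bound : α → ℝ} {t : ℝ} (ht : t ∈ s)
    (hF : ∀ r ∈ s, Integrable (F r) μ) (hbound : Integrable bound μ)
    (hF' : ∀ᵐ x ∂μ, ∀ r ∈ s, |F' r x| ≤ bound x)
    (hderiv : ∀ x, ∀ r ∈ s, HasDerivWithinAt (fun r => F r x) (F' r x) s r) :
    HasDerivWithinAt (fun r => ∫ x, F r x ∂μ) (∫ x, F' t x ∂μ) s t := by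
  rw [hasDerivWithinAt_iff_tendsto_slope]
  have hmem : ∀ᶠ r in nhdsWithin t (s \ {t}), r ∈ s \ {t} := self_mem_nhdsWithin
  have hlim : Filter.Tendsto (fun r => ∫ x, slope (fun r => F r x) t r ∂μ)
      (nhdsWithin t (s \ {t})) (nhds (∫ x, F' t x ∂μ)) := by
    refine tendsto_integral_filter_of_dominated_convergence bound ?_ ?_ hbound ?_
    · filter_upwards [hmem] with r hr
      simp only [slope, vsub_eq_sub]
      exact (((hF r hr.1).sub (hF t ht)).const_mul _).aestronglyMeasurable
    · filter_upwards [hmem] with r hr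
      filter_upwards [hF'] with x hx
      have hlip := hs.norm_image_sub_le_of_norm_hasDerivWithin_le (hderiv x) hx ht hr.1
      have hpos : 0 < ‖r - t‖ := norm_pos_iff.2 (sub_ne_zero.2 hr.2)
      rw [slope, vsub_eq_sub, norm_smul, norm_inv, inv_mul_le_iff₀ hpos, mul_comm]
      exact hlip
    · exact .of_forall fun x => hasDerivWithinAt_iff_tendsto_slope.1 (hderiv x t ht)
  refine hlim.congr' ?_
  filter_upwards [hmem] with r hr
  simp only [slope, vsub_eq_sub, smul_eq_mul]
  rw [integral_const_mul, integral_sub (hF r hr.1) (hF t ht)]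

theorem abs_sub_sub_mul_le_of_hasDerivWithinAt {s : Set ℝ} (hs : Convex ℝ s) {g g' g'' : ℝ → ℝ}
    {K : ℝ} (hg : ∀ r ∈ s, HasDerivWithinAt g (g' r) s r)
    (hg' : ∀ r ∈ s, HasDerivWithinAt g' (g'' r) s r) (hK : ∀ r ∈ s, |g'' r| ≤ K)
    {t r : ℝ} (ht : t ∈ s) (hr : r ∈ s) :
    |g r - g t - (r - t) * g' t| ≤ K * (r - t) ^ 2 := by
  have hsub : Set.uIcc t r ⊆ s := segment_eq_uIcc t r ▸ hs.segment_subset ht hr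
  have hK0 : 0 ≤ K := (abs_nonneg _).trans (hK t ht)
  have hderiv : ∀ z ∈ Set.uIcc t r,
      HasDerivWithinAt (fun z => g z - z * g' t) (g' z - 1 * g' t) (Set.uIcc t r) z := fun z hz =>
    ((hg z (hsub hz)).mono hsub).sub ((hasDerivWithinAt_id z _).mul_const _)
  have hbound : ∀ z ∈ Set.uIcc t r, ‖g' z - 1 * g' t‖ ≤ K * |r - t| := fun z hz => by
    rw [one_mul]
    exact (hs.norm_image_sub_le_of_norm_hasDerivWithin_le hg' hK ht (hsub hz)).trans
      (mul_le_mul_of_nonneg_left (Set.abs_sub_left_of_mem_uIcc hz) hK0)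
  have key := (convex_uIcc t r).norm_image_sub_le_of_norm_hasDerivWithin_le hderiv hbound
    Set.left_mem_uIcc Set.right_mem_uIcc
  calc |g r - g t - (r - t) * g' t| = ‖g r - r * g' t - (g t - t * g' t)‖ := by
        rw [Real.norm_eq_abs]; ring_nf
    _ ≤ K * |r - t| * ‖r - t‖ := key
    _ = K * (r - t) ^ 2 := by rw [Real.norm_eq_abs, mul_assoc, ← sq, sq_abs]

theorem integral_convolution_mul {g h ψ : ℝ → ℝ} (hg : Integrable g) (hh : Integrable h)
    (hψ : Measurable ψ) {M : ℝ} (hM : ∀ x, |ψ x| ≤ M) :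
    ∫ x, (g ⋆ h) x * ψ x = ∫ x, g x * ∫ y, h y * ψ (x + y) := by
  have hint : Integrable (fun q : ℝ × ℝ => (g q.2 * h (q.1 - q.2)) * ψ q.1)
      (volume.prod volume) :=
    (hg.convolution_integrand (ContinuousLinearMap.lsmul ℝ ℝ) hh).mul_bdd
      (hψ.comp measurable_fst).aestronglyMeasurable (.of_forall fun q => hM q.1)
  calc ∫ x, (g ⋆ h) x * ψ x = ∫ x, ∫ y, (g y * h (x - y)) * ψ x := by
        simp only [convolution_lsmul, smul_eq_mul, integral_mul_const]
    _ = ∫ y, ∫ x, (g y * h (x - y)) * ψ x := integral_integral_swap hint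
    _ = ∫ y, g y * ∫ x, h (x - y) * ψ x := by simp only [mul_assoc, integral_const_mul]
    _ = ∫ y, g y * ∫ x, h x * ψ (y + x) := by
        congr! 3 with y
        rw [← integral_add_left_eq_self _ y]
        simp only [add_sub_cancel_left]

theorem abs_convolution_le {g₁ g₂ h₁ h₂ : ℝ → ℝ} {x : ℝ}
    (hex : ConvolutionExistsAt g₂ h₂ x (ContinuousLinearMap.lsmul ℝ ℝ))
    (hg : ∀ y, |g₁ y| ≤ g₂ y) (hh : ∀ y, |h₁ y| ≤ h₂ y) : |(g₁ ⋆ h₁) x| ≤ (g₂ ⋆ h₂) x :=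
  norm_integral_le_of_norm_le (f := fun y => g₁ y • h₁ (x - y)) hex <| .of_forall fun y =>
    (norm_smul _ _).trans_le <|
      mul_le_mul (hg y) (hh _) (norm_nonneg _) ((abs_nonneg _).trans (hg y))

end Analysis

/-! ### The gap law of the PDE -/

/-- The rate `min x (2c)` at which a free offline point with adjacent gap `x` loses mass in the
max-matching PDE, extended by `0` to negative `x` so that it is bounded and continuous on `ℝ`. -/
noncomputable def matchRate (c x : ℝ) : ℝ := max 0 (min x (2 * c))

/-- The mass `∫₀^∞ f(x,t) dx` of a solution of the PDE, the limiting proportion of free offline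
points. The integral is taken over `ℝ` because solutions vanish on the negative half-line. -/
noncomputable def freeMass (f : ℝ → ℝ → ℝ) (t : ℝ) : ℝ := ∫ x, f x t

/-- The normalized solution `f(·,t) / ∫ f(x',t) dx'`, the limiting density of the rescaled gaps
between consecutive free offline points. -/
noncomputable def gapDensity (f : ℝ → ℝ → ℝ) (t x : ℝ) : ℝ := f x t / freeMass f t

/-- The mean of `matchRate c` under the gap density at time `t`. -/
noncomputable def meanRate (c : ℝ) (f : ℝ → ℝ → ℝ) (t : ℝ) : ℝ :=
  ∫ x, matchRate c x * gapDensity f t x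

/-- The right-hand side `(a p ⋆ p) - a p` of the equation satisfied by the gap density `p`, where
`a = matchRate c`. -/
noncomputable def gapDensityDeriv (c : ℝ) (f : ℝ → ℝ → ℝ) (t x : ℝ) : ℝ :=
  ((fun y => matchRate c y * gapDensity f t y) ⋆ gapDensity f t) x
    - matchRate c x * gapDensity f t x

section Rate
variable {c : ℝ}

theorem matchRate_nonneg (c x : ℝ) : 0 ≤ matchRate c x := le_max_left _ _

theorem matchRate_le (hc : 0 < c) (x : ℝ) : matchRate c x ≤ 2 * c :=
  max_le (by positivity) (min_le_right _ _)

theorem abs_matchRate_le (hc : 0 < c) (x : ℝ) : |matchRate c x| ≤ 2 * c := by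
  rw [abs_of_nonneg (matchRate_nonneg c x)]
  exact matchRate_le hc x

theorem continuous_matchRate (c : ℝ) : Continuous (matchRate c) := by
  unfold matchRate
  fun_prop

theorem matchRate_of_nonneg {x : ℝ} (hc : 0 < c) (hx : 0 ≤ x) : matchRate c x = min x (2 * c) :=
  max_eq_right (le_min hx (by positivity))

theorem matchRate_of_nonpos {x : ℝ} (hx : x ≤ 0) : matchRate c x = 0 :=
  max_eq_left ((min_le_left _ _).trans hx)

theorem integrable_matchRate_mul (hc : 0 < c) {g : ℝ → ℝ} (hg : Integrable g) :
    Integrable fun x => matchRate c x * g x :=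
  hg.bdd_mul (continuous_matchRate c).aestronglyMeasurable (.of_forall (abs_matchRate_le hc))

end Rate

end ClosestMatching

namespace SolvesMaxMatchingPDE
open ClosestMatching
open scoped Convolution
variable {c : ℝ} {f : ℝ → ℝ → ℝ} {t : ℝ}

theorem nonneg (hf : SolvesMaxMatchingPDE c f) (x t : ℝ) : 0 ≤ f x t := hf.2.1 x t

theorem eq_zero_of_neg (hf : SolvesMaxMatchingPDE c f) {x : ℝ} (hx : x < 0) (t : ℝ) : f x t = 0 :=
  hf.2.2.1 x t hx

theorem setIntegral_Ioi_mul (hf : SolvesMaxMatchingPDE c f) (g : ℝ → ℝ) (t : ℝ) :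
    ∫ x in Set.Ioi (0 : ℝ), g x * f x t = ∫ x, g x * f x t := by
  rw [← integral_Ici_eq_integral_Ioi]
  refine setIntegral_eq_integral_of_forall_compl_eq_zero fun x hx => ?_
  rw [hf.eq_zero_of_neg (by simpa using hx), mul_zero]

theorem setIntegral_Ioi (hf : SolvesMaxMatchingPDE c f) (t : ℝ) :
    ∫ x in Set.Ioi (0 : ℝ), f x t = freeMass f t := by
  simpa only [Pi.one_apply, one_mul, freeMass] using hf.setIntegral_Ioi_mul 1 t

theorem integrable (hf : SolvesMaxMatchingPDE c f) (ht : t ∈ Set.Icc (0 : ℝ) 1) :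
    Integrable fun x => f x t := by
  rw [← integrableOn_iff_integrable_of_support_subset (s := Set.Ici 0)]
  · exact integrableOn_Ici_iff_integrableOn_Ioi (by simp) |>.2 (hf.2.2.2.1 t ht).1
  · intro x hx
    by_contra h
    exact hx (hf.eq_zero_of_neg (by simpa using h) t)

theorem freeMass_pos (hf : SolvesMaxMatchingPDE c f) (ht : t ∈ Set.Icc (0 : ℝ) 1) :
    0 < freeMass f t :=
  hf.setIntegral_Ioi t ▸ (hf.2.2.2.1 t ht).2.2

theorem freeMass_zero (hf : SolvesMaxMatchingPDE c f) : freeMass f 0 = 1 := by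
  rw [← hf.setIntegral_Ioi, setIntegral_congr_fun measurableSet_Ioi
    fun x hx => hf.2.2.2.2.1 x (le_of_lt hx)]
  exact integral_exp_neg_Ioi_zero

theorem gapDensity_nonneg (hf : SolvesMaxMatchingPDE c f) (ht : t ∈ Set.Icc (0 : ℝ) 1) (x : ℝ) :
    0 ≤ gapDensity f t x :=
  div_nonneg (hf.nonneg x t) (hf.freeMass_pos ht).le

theorem gapDensity_of_neg (hf : SolvesMaxMatchingPDE c f) {x : ℝ} (hx : x < 0) (t : ℝ) :
    gapDensity f t x = 0 := by
  rw [gapDensity, hf.eq_zero_of_neg hx, zero_div]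

theorem gapDensity_zero (hf : SolvesMaxMatchingPDE c f) {x : ℝ} (hx : 0 ≤ x) :
    gapDensity f 0 x = Real.exp (-x) := by
  rw [gapDensity, hf.freeMass_zero, div_one, hf.2.2.2.2.1 x hx]

theorem freeMass_mul_gapDensity (hf : SolvesMaxMatchingPDE c f) (ht : t ∈ Set.Icc (0 : ℝ) 1)
    (x : ℝ) : freeMass f t * gapDensity f t x = f x t :=
  mul_div_cancel₀ _ (hf.freeMass_pos ht).ne'

theorem integrable_gapDensity (hf : SolvesMaxMatchingPDE c f) (ht : t ∈ Set.Icc (0 : ℝ) 1) :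
    Integrable (gapDensity f t) :=
  (hf.integrable ht).div_const _

theorem integral_gapDensity (hf : SolvesMaxMatchingPDE c f) (ht : t ∈ Set.Icc (0 : ℝ) 1) :
    ∫ x, gapDensity f t x = 1 := by
  simp only [gapDensity, integral_div]
  exact div_self (hf.freeMass_pos ht).ne'

theorem meanRate_nonneg (hf : SolvesMaxMatchingPDE c f) (ht : t ∈ Set.Icc (0 : ℝ) 1) :
    0 ≤ meanRate c f t :=
  integral_nonneg fun x => mul_nonneg (matchRate_nonneg c x) (hf.gapDensity_nonneg ht x)

theorem meanRate_le (hc : 0 < c) (hf : SolvesMaxMatchingPDE c f) (ht : t ∈ Set.Icc (0 : ℝ) 1) :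
    meanRate c f t ≤ 2 * c :=
  have hp := hf.integrable_gapDensity ht
  calc meanRate c f t ≤ ∫ x, 2 * c * gapDensity f t x :=
        integral_mono (integrable_matchRate_mul hc hp) (hp.const_mul _) fun x =>
          mul_le_mul_of_nonneg_right (matchRate_le hc x) (hf.gapDensity_nonneg ht x)
    _ = 2 * c := by rw [integral_const_mul, hf.integral_gapDensity ht, mul_one]

theorem convolution_eq_intervalIntegral (hc : 0 < c) (hf : SolvesMaxMatchingPDE c f) (t : ℝ)
    {x : ℝ} (hx : 0 ≤ x) :
    ((fun y => matchRate c y * gapDensity f t y) ⋆ gapDensity f t) x =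
      (∫ y in (0 : ℝ)..x, min y (2 * c) * f y t * f (x - y) t) / freeMass f t ^ 2 := by
  have hsupp : ∀ y ∉ Set.Ioc 0 x, matchRate c y * f y t * f (x - y) t = 0 := by
    intro y hy
    rcases not_and_or.1 hy with h | h
    · rw [matchRate_of_nonpos (not_lt.1 h), zero_mul, zero_mul]
    · rw [hf.eq_zero_of_neg (sub_neg.2 (not_le.1 h)), mul_zero]
  have hint : ∫ y in (0 : ℝ)..x, min y (2 * c) * f y t * f (x - y) t =
      ∫ y, matchRate c y * f y t * f (x - y) t := by
    rw [intervalIntegral.integral_of_le hx, ← setIntegral_eq_integral_of_forall_compl_eq_zero hsupp]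
    refine setIntegral_congr_fun measurableSet_Ioc fun y hy => ?_
    simp only [matchRate_of_nonneg hc hy.1.le]
  rw [hint, ← integral_div, convolution_lsmul]
  congr! 2
  simp only [gapDensity, smul_eq_mul]
  ring

theorem convolution_of_neg (hf : SolvesMaxMatchingPDE c f) (t : ℝ) {x : ℝ} (hx : x < 0) :
    ((fun y => matchRate c y * gapDensity f t y) ⋆ gapDensity f t) x = 0 := by
  rw [convolution_lsmul]
  refine integral_eq_zero_of_ae (.of_forall fun y => ?_)
  rcases lt_or_ge y 0 with hy | hy
  · simp [hf.gapDensity_of_neg hy]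
  · simp [hf.gapDensity_of_neg (show x - y < 0 by linarith)]

/-- In terms of the gap density `p`, the PDE reads `∂ₜ f = u ((a p ⋆ p) - a p - (∫ a p) p)`. -/
theorem hasDerivWithinAt (hc : 0 < c) (hf : SolvesMaxMatchingPDE c f) (x : ℝ)
    (ht : t ∈ Set.Icc (0 : ℝ) 1) :
    HasDerivWithinAt (fun s => f x s)
      (freeMass f t * (gapDensityDeriv c f t x - meanRate c f t * gapDensity f t x))
      (Set.Icc 0 1) t := by
  rcases lt_or_ge x 0 with hx | hx
  · simp only [gapDensityDeriv, hf.eq_zero_of_neg hx, hf.gapDensity_of_neg hx,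
      hf.convolution_of_neg t hx, mul_zero, sub_zero]
    exact hasDerivWithinAt_const ..
  · have hu := (hf.freeMass_pos ht).ne'
    have hmin : ∫ y in Set.Ioi (0 : ℝ), min y (2 * c) * f y t = freeMass f t * meanRate c f t := by
      rw [meanRate, ← integral_const_mul]
      simp only [mul_left_comm (freeMass f t), hf.freeMass_mul_gapDensity ht]
      rw [← hf.setIntegral_Ioi_mul]
      refine setIntegral_congr_fun measurableSet_Ioi fun y hy => ?_
      simp only [matchRate_of_nonneg hc (le_of_lt hy)]
    convert hf.2.2.2.2.2 x hx t ht using 1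
    rw [maxMatchRHS, hf.setIntegral_Ioi, hmin, gapDensityDeriv,
      hf.convolution_eq_intervalIntegral hc t hx, matchRate_of_nonneg hc hx, gapDensity]
    field_simp
    ring

theorem monotoneOn_exp_mul (hc : 0 < c) (hf : SolvesMaxMatchingPDE c f) (x : ℝ) :
    MonotoneOn (fun t => Real.exp (4 * c * t) * f x t) (Set.Icc 0 1) := by
  have hderiv : ∀ t ∈ Set.Icc (0 : ℝ) 1, HasDerivWithinAt (fun t => Real.exp (4 * c * t) * f x t)
      (Real.exp (4 * c * t) * (4 * c * 1) * f x t + Real.exp (4 * c * t) *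
        (freeMass f t * (gapDensityDeriv c f t x - meanRate c f t * gapDensity f t x)))
      (Set.Icc 0 1) t := fun t ht =>
    ((((hasDerivAt_id t).const_mul (4 * c)).exp).hasDerivWithinAt).mul (hf.hasDerivWithinAt hc x ht)
  refine monotoneOn_of_hasDerivWithinAt_nonneg (convex_Icc 0 1)
    (fun t ht => (hderiv t ht).continuousWithinAt)
    (fun t ht => (hderiv t (interior_subset ht)).mono interior_subset) fun t ht => ?_
  replace ht := interior_subset ht
  have hp := hf.gapDensity_nonneg ht x
  have hconv : 0 ≤ ((fun y => matchRate c y * gapDensity f t y) ⋆ gapDensity f t) x :=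
    integral_nonneg fun y => mul_nonneg
      (mul_nonneg (matchRate_nonneg c y) (hf.gapDensity_nonneg ht y)) (hf.gapDensity_nonneg ht _)
  have hrate : 0 ≤ (4 * c - matchRate c x - meanRate c f t) * gapDensity f t x :=
    mul_nonneg (by linarith [matchRate_le hc x, hf.meanRate_le hc ht]) hp
  calc 0 ≤ Real.exp (4 * c * t) * (freeMass f t *
        (((fun y => matchRate c y * gapDensity f t y) ⋆ gapDensity f t) x +
          (4 * c - matchRate c x - meanRate c f t) * gapDensity f t x)) := by
        have := hf.freeMass_pos ht
        positivity
    _ = _ := by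
        rw [gapDensityDeriv, ← hf.freeMass_mul_gapDensity ht x]
        ring

theorem le_exp_mul_one (hc : 0 < c) (hf : SolvesMaxMatchingPDE c f) (ht : t ∈ Set.Icc (0 : ℝ) 1)
    (x : ℝ) : f x t ≤ Real.exp (4 * c) * f x 1 := by
  have hmono := hf.monotoneOn_exp_mul hc x ht (Set.right_mem_Icc.2 zero_le_one) ht.2
  simp only [mul_one] at hmono
  have hexp : 1 ≤ Real.exp (4 * c * t) := Real.one_le_exp (by have := ht.1; positivity)
  exact (le_mul_of_one_le_left (hf.nonneg x t) hexp).trans hmono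

theorem zero_le_exp_mul (hc : 0 < c) (hf : SolvesMaxMatchingPDE c f) (ht : t ∈ Set.Icc (0 : ℝ) 1)
    (x : ℝ) : f x 0 ≤ Real.exp (4 * c) * f x t := by
  have hmono := hf.monotoneOn_exp_mul hc x (Set.left_mem_Icc.2 zero_le_one) ht ht.1
  simp only [mul_zero, Real.exp_zero, one_mul] at hmono
  refine hmono.trans (mul_le_mul_of_nonneg_right (Real.exp_le_exp.2 ?_) (hf.nonneg x t))
  exact mul_le_of_le_one_right (by positivity) ht.2

theorem inv_freeMass_le (hc : 0 < c) (hf : SolvesMaxMatchingPDE c f)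
    (ht : t ∈ Set.Icc (0 : ℝ) 1) : (freeMass f t)⁻¹ ≤ Real.exp (4 * c) := by
  rw [inv_le_iff_one_le_mul₀ (hf.freeMass_pos ht), ← hf.freeMass_zero, freeMass, freeMass,
    ← integral_const_mul]
  exact integral_mono (hf.integrable (Set.left_mem_Icc.2 zero_le_one))
    ((hf.integrable ht).const_mul _) (hf.zero_le_exp_mul hc ht)

/-- An integrable function dominating `gapDensity f t` for all `t ∈ [0,1]`. -/
noncomputable def gapDensityBound (c : ℝ) (f : ℝ → ℝ → ℝ) (x : ℝ) : ℝ :=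
  Real.exp (4 * c) * f x 1 * Real.exp (4 * c)

/-- An integrable function dominating `gapDensityDeriv c f t` for all `t ∈ [0,1]`. -/
noncomputable def gapDensityDerivBound (c : ℝ) (f : ℝ → ℝ → ℝ) (x : ℝ) : ℝ :=
  ((fun y => 2 * c * gapDensityBound c f y) ⋆ gapDensityBound c f) x
    + 2 * c * gapDensityBound c f x

theorem integrable_gapDensityBound (hf : SolvesMaxMatchingPDE c f) :
    Integrable (gapDensityBound c f) :=
  ((hf.integrable (Set.right_mem_Icc.2 zero_le_one)).const_mul _).mul_const _

theorem integrable_gapDensityDerivBound (hf : SolvesMaxMatchingPDE c f) :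
    Integrable (gapDensityDerivBound c f) :=
  have hp := hf.integrable_gapDensityBound
  ((hp.const_mul _).integrable_convolution _ hp).add (hp.const_mul _)

theorem abs_gapDensity_le (hc : 0 < c) (hf : SolvesMaxMatchingPDE c f)
    (ht : t ∈ Set.Icc (0 : ℝ) 1) (x : ℝ) : |gapDensity f t x| ≤ gapDensityBound c f x := by
  rw [abs_of_nonneg (hf.gapDensity_nonneg ht x), gapDensity, div_eq_mul_inv]
  exact mul_le_mul (hf.le_exp_mul_one hc ht x) (hf.inv_freeMass_le hc ht)
    (inv_nonneg.2 (hf.freeMass_pos ht).le) (mul_nonneg (Real.exp_nonneg _) (hf.nonneg x 1))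

theorem abs_matchRate_mul_gapDensity_le (hc : 0 < c) (hf : SolvesMaxMatchingPDE c f)
    (ht : t ∈ Set.Icc (0 : ℝ) 1) (x : ℝ) :
    |matchRate c x * gapDensity f t x| ≤ 2 * c * gapDensityBound c f x := by
  rw [abs_mul]
  exact mul_le_mul (abs_matchRate_le hc x) (hf.abs_gapDensity_le hc ht x) (abs_nonneg _)
    (by positivity)

theorem ae_abs_gapDensityDeriv_le (hc : 0 < c) (hf : SolvesMaxMatchingPDE c f) :
    ∀ᵐ x, ∀ t ∈ Set.Icc (0 : ℝ) 1, |gapDensityDeriv c f t x| ≤ gapDensityDerivBound c f x := by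
  have hp := hf.integrable_gapDensityBound
  filter_upwards [(hp.const_mul (2 * c)).ae_convolution_exists
    (ContinuousLinearMap.lsmul ℝ ℝ) hp] with x hx t ht
  exact (abs_sub _ _).trans <| add_le_add
    (abs_convolution_le hx (hf.abs_matchRate_mul_gapDensity_le hc ht) (hf.abs_gapDensity_le hc ht))
    (hf.abs_matchRate_mul_gapDensity_le hc ht x)

theorem integral_gapDensityDeriv_mul (hc : 0 < c) (hf : SolvesMaxMatchingPDE c f)
    (ht : t ∈ Set.Icc (0 : ℝ) 1) {ψ : ℝ → ℝ} (hψ : Measurable ψ) {M : ℝ} (hM : ∀ x, |ψ x| ≤ M) :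
    ∫ x, gapDensityDeriv c f t x * ψ x =
      (∫ x, matchRate c x * gapDensity f t x * ∫ y, gapDensity f t y * ψ (x + y))
        - ∫ x, matchRate c x * gapDensity f t x * ψ x := by
  have hp := hf.integrable_gapDensity ht
  have hap := integrable_matchRate_mul hc hp
  have hmul {g : ℝ → ℝ} (hg : Integrable g) : Integrable fun x => g x * ψ x :=
    hg.mul_bdd hψ.aestronglyMeasurable (.of_forall hM)
  simp only [gapDensityDeriv, sub_mul]
  rw [integral_sub (hmul (hap.integrable_convolution _ hp)) (hmul hap),
    integral_convolution_mul hap hp hψ hM]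

theorem integral_gapDensityDeriv (hc : 0 < c) (hf : SolvesMaxMatchingPDE c f)
    (ht : t ∈ Set.Icc (0 : ℝ) 1) : ∫ x, gapDensityDeriv c f t x = 0 := by
  have h := hf.integral_gapDensityDeriv_mul hc ht (measurable_const (a := (1 : ℝ)))
    (fun _ => abs_one.le)
  simpa only [mul_one, hf.integral_gapDensity ht, sub_self] using h

theorem freeMass_le (hc : 0 < c) (hf : SolvesMaxMatchingPDE c f) (ht : t ∈ Set.Icc (0 : ℝ) 1) :
    freeMass f t ≤ Real.exp (4 * c) * freeMass f 1 := by
  rw [freeMass, freeMass, ← integral_const_mul]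
  exact integral_mono (hf.integrable ht)
    ((hf.integrable (Set.right_mem_Icc.2 zero_le_one)).const_mul _) (hf.le_exp_mul_one hc ht)

theorem hasDerivWithinAt_freeMass (hc : 0 < c) (hf : SolvesMaxMatchingPDE c f)
    (ht : t ∈ Set.Icc (0 : ℝ) 1) :
    HasDerivWithinAt (freeMass f) (-(freeMass f t * meanRate c f t)) (Set.Icc 0 1) t := by
  have hp := hf.integrable_gapDensity ht
  have hp' : Integrable (gapDensityDeriv c f t) :=
    ((integrable_matchRate_mul hc hp).integrable_convolution _ hp).sub
      (integrable_matchRate_mul hc hp)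
  have hbound : Integrable fun x => Real.exp (4 * c) * freeMass f 1 *
      (gapDensityDerivBound c f x + 2 * c * gapDensityBound c f x) :=
    (hf.integrable_gapDensityDerivBound.add (hf.integrable_gapDensityBound.const_mul _)).const_mul _
  have hderiv := hasDerivWithinAt_integral_of_dominated (convex_Icc 0 1) ht
    (fun r hr => hf.integrable hr) hbound (F := fun r x => f x r)
    (by
      filter_upwards [hf.ae_abs_gapDensityDeriv_le hc] with x hx r hr
      have hrate : |meanRate c f r| ≤ 2 * c := by
        rw [abs_of_nonneg (hf.meanRate_nonneg hr)]
        exact hf.meanRate_le hc hr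
      rw [abs_mul, abs_of_pos (hf.freeMass_pos hr)]
      refine mul_le_mul (hf.freeMass_le hc hr) ((abs_sub _ _).trans (add_le_add (hx r hr) ?_))
        (abs_nonneg _) (mul_nonneg (Real.exp_nonneg _) (integral_nonneg fun y => hf.nonneg y 1))
      rw [abs_mul]
      exact mul_le_mul hrate (hf.abs_gapDensity_le hc hr x) (abs_nonneg _) (by positivity))
    (fun x r hr => hf.hasDerivWithinAt hc x hr)
  rwa [integral_const_mul, integral_sub hp' (hp.const_mul _), integral_const_mul,
    hf.integral_gapDensity ht, hf.integral_gapDensityDeriv hc ht, zero_sub, mul_one,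
    mul_neg] at hderiv

theorem hasDerivWithinAt_gapDensity (hc : 0 < c) (hf : SolvesMaxMatchingPDE c f) (x : ℝ)
    (ht : t ∈ Set.Icc (0 : ℝ) 1) :
    HasDerivWithinAt (fun s => gapDensity f s x) (gapDensityDeriv c f t x) (Set.Icc 0 1) t := by
  have hu := (hf.freeMass_pos ht).ne'
  refine ((hf.hasDerivWithinAt hc x ht).div (hf.hasDerivWithinAt_freeMass hc ht) hu).congr_deriv ?_
  rw [← hf.freeMass_mul_gapDensity ht x]
  field_simp
  ring

end SolvesMaxMatchingPDE

namespace ClosestMatching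
open scoped BoundedContinuousFunction

/-! ### Functionals of gap sequences -/

section Sequences
variable {α : Type*}

/-- The sequence with first term `x` followed by the terms of `g`. -/
def consSeq (x : α) (g : ℕ → α) : ℕ → α
  | 0 => x
  | j + 1 => g j

/-- The sequence `g` without its first term. -/
def tailSeq (g : ℕ → α) (j : ℕ) : α := g (j + 1)

@[simp] theorem consSeq_zero (x : α) (g : ℕ → α) : consSeq x g 0 = x := rfl

@[simp] theorem consSeq_succ (x : α) (g : ℕ → α) (j : ℕ) : consSeq x g (j + 1) = g j := rfl

@[simp] theorem tailSeq_apply (g : ℕ → α) (j : ℕ) : tailSeq g j = g (j + 1) := rfl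

@[simp] theorem tailSeq_consSeq (x : α) (g : ℕ → α) : tailSeq (consSeq x g) = g := rfl

theorem consSeq_preimage_pi (s : Finset ℕ) (t : ℕ → Set α) :
    (fun q : α × (ℕ → α) => consSeq q.1 q.2) ⁻¹' Set.pi s t =
      (if 0 ∈ s then t 0 else Set.univ) ×ˢ
        Set.pi (s.preimage Nat.succ Nat.succ_injective.injOn) (tailSeq t) := by
  ext ⟨x, g⟩
  simp only [Set.mem_preimage, Set.mem_pi, SetLike.mem_coe, Set.mem_prod, Finset.mem_preimage,
    tailSeq_apply]
  constructor
  · intro h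
    refine ⟨?_, fun j hj => h (j + 1) hj⟩
    split_ifs with h0
    exacts [h 0 h0, Set.mem_univ x]
  · rintro ⟨hx, hg⟩ (_ | j) hj
    · rwa [if_pos hj] at hx
    · exact hg j hj

theorem measurable_consSeq [MeasurableSpace α] :
    Measurable fun q : α × (ℕ → α) => consSeq q.1 q.2 := by
  refine measurable_pi_lambda _ fun j => ?_
  cases j with
  | zero => exact measurable_fst
  | succ j => exact (measurable_pi_apply j).comp measurable_snd

theorem measurePreserving_consSeq [MeasurableSpace α] (ν : Measure α) [IsProbabilityMeasure ν] :
    MeasurePreserving (fun q : α × (ℕ → α) => consSeq q.1 q.2)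
      (ν.prod (Measure.infinitePi fun _ : ℕ => ν)) (Measure.infinitePi fun _ : ℕ => ν) := by
  refine ⟨measurable_consSeq, Measure.eq_infinitePi _ fun s t ht => ?_⟩
  rw [Measure.map_apply measurable_consSeq (.pi s.countable_toSet fun i _ => ht i),
    consSeq_preimage_pi, Measure.prod_prod,
    Measure.infinitePi_pi (t := tailSeq t) _ fun i _ => ht (i + 1),
    ← Finset.prod_filter_mul_prod_filter_not s (· = 0)]
  congr 1
  · split_ifs with h0 <;> simp [Finset.filter_eq', h0]
  · have himage : s.filter (¬ · = 0) =
        (s.preimage Nat.succ Nat.succ_injective.injOn).image Nat.succ := by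
      ext j
      cases j <;> simp
    rw [himage, Finset.prod_image Nat.succ_injective.injOn]
    rfl

theorem integral_infinitePi_consSeq [MeasurableSpace α] (ν : Measure α) [IsProbabilityMeasure ν]
    {φ : (ℕ → α) → ℝ} (hφ : Integrable φ (Measure.infinitePi fun _ : ℕ => ν)) :
    ∫ g, φ g ∂(Measure.infinitePi fun _ : ℕ => ν) =
      ∫ x, ∫ g, φ (consSeq x g) ∂(Measure.infinitePi fun _ : ℕ => ν) ∂ν := by
  have hcons := measurePreserving_consSeq ν
  conv_lhs => rw [← hcons.map_eq, integral_map hcons.measurable.aemeasurable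
    (hcons.map_eq.symm ▸ hφ.aestronglyMeasurable)]
  exact integral_prod _ ((hcons.integrable_comp hφ.aestronglyMeasurable).2 hφ)

end Sequences

section Maps

theorem continuous_consSeq : Continuous fun q : ℝ × (ℕ → ℝ) => consSeq q.1 q.2 := by
  refine continuous_pi fun j => ?_
  cases j with
  | zero => exact continuous_fst
  | succ j => exact (continuous_apply j).comp continuous_snd

/-- Prepending a fixed gap, as a continuous map on gap sequences. -/
def consMap (x : ℝ) : C(ℕ → ℝ, ℕ → ℝ) :=
  ⟨consSeq x, continuous_consSeq.comp (Continuous.prodMk_right x)⟩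

/-- Dropping the first gap, as a continuous map on gap sequences. -/
def tailMap : C(ℕ → ℝ, ℕ → ℝ) := ⟨tailSeq, by unfold tailSeq; fun_prop⟩

/-- The effect on a gap sequence of removing the point between the gaps `i` and `i + 1`: these two
gaps are replaced by their sum. -/
def mergeMap (i : ℕ) : C(ℕ → ℝ, ℕ → ℝ) where
  toFun g j := if j < i then g j else if j = i then g i + g (i + 1) else g (j + 1)
  continuous_toFun := continuous_pi fun j => by split_ifs <;> fun_prop

@[simp] theorem consMap_apply (x : ℝ) (g : ℕ → ℝ) : consMap x g = consSeq x g := rfl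

@[simp] theorem tailMap_apply (g : ℕ → ℝ) : tailMap g = tailSeq g := rfl

theorem mergeMap_apply (i : ℕ) (g : ℕ → ℝ) (j : ℕ) :
    mergeMap i g j = if j < i then g j else if j = i then g i + g (i + 1) else g (j + 1) := rfl

theorem mergeMap_zero_consSeq_consSeq (x y : ℝ) (g : ℕ → ℝ) :
    mergeMap 0 (consSeq x (consSeq y g)) = consSeq (x + y) g := by
  ext j
  cases j <;> simp [mergeMap_apply]

theorem mergeMap_succ_consSeq (i : ℕ) (x : ℝ) (g : ℕ → ℝ) :
    mergeMap (i + 1) (consSeq x g) = consSeq x (mergeMap i g) := by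
  ext j
  cases j <;> simp [mergeMap_apply]

end Maps

section Generator
open BoundedContinuousFunction

/-- The rate `matchRate c` of the `i`-th gap, as a bounded continuous function of the sequence. -/
noncomputable def gapRate (c : ℝ) (i : ℕ) : (ℕ → ℝ) →ᵇ ℝ :=
  BoundedContinuousFunction.ofNormedAddCommGroup (fun g => matchRate c (g i))
    ((continuous_matchRate c).comp (continuous_apply i)) |2 * c| fun g => by
      rw [Real.norm_of_nonneg (matchRate_nonneg c _)]
      exact max_le (abs_nonneg _) ((min_le_right _ _).trans (le_abs_self _))

@[simp] theorem gapRate_apply (c : ℝ) (i : ℕ) (g : ℕ → ℝ) : gapRate c i g = matchRate c (g i) :=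
  rfl

/-- The change of `φ` caused by matching one of the `k` points that separate the first `k + 1` gaps.
The point between the gaps `i` and `i + 1` is matched at the half-sum of their rates, which merges
the two gaps. -/
noncomputable def mergeGenerator (c : ℝ) (k : ℕ) (φ : (ℕ → ℝ) →ᵇ ℝ) : (ℕ → ℝ) →ᵇ ℝ :=
  ∑ i ∈ Finset.range k, ((1 / 2 : ℝ) • (gapRate c i + gapRate c (i + 1))) *
    (φ.compContinuous (mergeMap i) - φ)

/-- The generator of the limiting gap process on test functions of the first `k` gaps, acting on
sums `∑ φ` over the free points. The subtracted term is the loss of the summand of a matched point,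
whose rate is the half-sum of the rates of its right gap `g 0` and of its left gap; the latter half
is charged to the preceding point, from which the lost summand is `φ ∘ tail`. -/
noncomputable def generator (c : ℝ) (k : ℕ) (φ : (ℕ → ℝ) →ᵇ ℝ) : (ℕ → ℝ) →ᵇ ℝ :=
  mergeGenerator c k φ - ((1 / 2 : ℝ) • gapRate c 0) * (φ + φ.compContinuous tailMap)

variable {c : ℝ} {k : ℕ} {φ : (ℕ → ℝ) →ᵇ ℝ}

theorem mergeGenerator_apply (c : ℝ) (k : ℕ) (φ : (ℕ → ℝ) →ᵇ ℝ) (g : ℕ → ℝ) :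
    mergeGenerator c k φ g = ∑ i ∈ Finset.range k,
      (matchRate c (g i) + matchRate c (g (i + 1))) / 2 * (φ (mergeMap i g) - φ g) := by
  simp [mergeGenerator, BoundedContinuousFunction.coe_sum, div_eq_inv_mul, mul_add]

theorem generator_apply (c : ℝ) (k : ℕ) (φ : (ℕ → ℝ) →ᵇ ℝ) (g : ℕ → ℝ) :
    generator c k φ g =
      mergeGenerator c k φ g - matchRate c (g 0) / 2 * (φ g + φ (tailSeq g)) := by
  simp [generator, div_eq_inv_mul]

theorem abs_mergeGenerator_apply_le (hc : 0 < c) (k : ℕ) (φ : (ℕ → ℝ) →ᵇ ℝ) (g : ℕ → ℝ) :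
    |mergeGenerator c k φ g| ≤ 4 * c * k * ‖φ‖ := by
  have hterm (i : ℕ) :
      |(matchRate c (g i) + matchRate c (g (i + 1))) / 2 * (φ (mergeMap i g) - φ g)|
        ≤ 4 * c * ‖φ‖ := by
    have hrate : |(matchRate c (g i) + matchRate c (g (i + 1))) / 2| ≤ 2 * c := by
      rw [abs_of_nonneg (by linarith [matchRate_nonneg c (g i), matchRate_nonneg c (g (i + 1))])]
      linarith [matchRate_le hc (g i), matchRate_le hc (g (i + 1))]
    calc _ ≤ 2 * c * (2 * ‖φ‖) := by
          rw [abs_mul]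
          gcongr
          exact φ.dist_le_two_norm _ _
      _ = 4 * c * ‖φ‖ := by ring
  rw [mergeGenerator_apply]
  calc _ ≤ k * (4 * c * ‖φ‖) := (Finset.abs_sum_le_sum_abs _ _).trans <|
        (Finset.sum_le_card_nsmul _ _ _ fun i _ => hterm i).trans (by simp)
    _ = 4 * c * k * ‖φ‖ := by ring

theorem norm_generator_le (hc : 0 < c) (k : ℕ) (φ : (ℕ → ℝ) →ᵇ ℝ) :
    ‖generator c k φ‖ ≤ 4 * c * (k + 1) * ‖φ‖ := by
  refine (BoundedContinuousFunction.norm_le (by positivity)).2 fun g => ?_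
  have hsum : |φ g + φ (tailSeq g)| ≤ ‖φ‖ + ‖φ‖ :=
    (abs_add_le _ _).trans (add_le_add (φ.norm_coe_le_norm g) (φ.norm_coe_le_norm _))
  have hloss : |matchRate c (g 0) / 2 * (φ g + φ (tailSeq g))| ≤ 2 * c / 2 * (‖φ‖ + ‖φ‖) := by
    rw [abs_mul, abs_div, abs_two]
    gcongr
    exact abs_matchRate_le hc _
  rw [generator_apply, Real.norm_eq_abs]
  calc _ ≤ 4 * c * k * ‖φ‖ + 2 * c / 2 * (‖φ‖ + ‖φ‖) :=
        (abs_sub _ _).trans (add_le_add (abs_mergeGenerator_apply_le hc k φ g) hloss)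
    _ ≤ 4 * c * (k + 1) * ‖φ‖ := by nlinarith [mul_nonneg hc.le (norm_nonneg φ)]

theorem mergeGenerator_succ_consSeq (c : ℝ) (k : ℕ) (φ : (ℕ → ℝ) →ᵇ ℝ) (x : ℝ) (g : ℕ → ℝ) :
    mergeGenerator c (k + 1) φ (consSeq x g) =
      (matchRate c x + matchRate c (g 0)) / 2 * (φ (mergeMap 0 (consSeq x g)) - φ (consSeq x g))
        + mergeGenerator c k (φ.compContinuous (consMap x)) g := by
  simp only [mergeGenerator_apply, Finset.sum_range_succ' _ k, mergeMap_succ_consSeq,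
    consSeq_succ, consSeq_zero, compContinuous_apply, consMap_apply, add_comm]

theorem dependsOn_generator (hφ : DependsOn φ (Set.Iio k)) :
    DependsOn (generator c k φ) (Set.Iio (k + 1)) := by
  intro g h hgh
  have hk {j : ℕ} (hj : j ≤ k) : g j = h j := hgh j (Nat.lt_succ_of_le hj)
  have hself : φ g = φ h := hφ fun j hj => hk (le_of_lt hj)
  have htail : φ (tailSeq g) = φ (tailSeq h) := hφ fun j hj => hk hj
  have hmerge {i : ℕ} (hi : i < k) : φ (mergeMap i g) = φ (mergeMap i h) := hφ fun j hj => by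
    simp only [mergeMap_apply, hk (le_of_lt hj), hk hj, hk hi.le, hk hi]
  rw [generator_apply, generator_apply, mergeGenerator_apply, mergeGenerator_apply, hself, htail,
    hk k.zero_le]
  congr 1
  refine Finset.sum_congr rfl fun i hi => ?_
  rw [hmerge (Finset.mem_range.1 hi), hk (Finset.mem_range.1 hi).le, hk (Finset.mem_range.1 hi)]

theorem dependsOn_compContinuous_consMap (hφ : DependsOn φ (Set.Iio (k + 1))) (x : ℝ) :
    DependsOn (φ.compContinuous (consMap x)) (Set.Iio k) := by
  intro g h hgh
  refine hφ fun i hi => ?_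
  cases i with
  | zero => rfl
  | succ i => exact hgh i (Nat.lt_of_succ_lt_succ hi)

/-- The exchange of the first two gaps, as a continuous map on gap sequences. -/
def swapMap : C(ℕ → ℝ, ℕ → ℝ) := ⟨fun g => g ∘ Equiv.swap 0 1, by unfold Function.comp; fun_prop⟩

theorem swapMap_apply (g : ℕ → ℝ) (j : ℕ) : swapMap g j = g (Equiv.swap 0 1 j) := rfl

theorem swapMap_swapMap (g : ℕ → ℝ) : swapMap (swapMap g) = g := by
  ext j
  simp [swapMap_apply]

theorem mergeMap_zero_swapMap (g : ℕ → ℝ) : mergeMap 0 (swapMap g) = mergeMap 0 g := by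
  ext j
  rcases j with _ | j
  · simp [mergeMap_apply, swapMap_apply, add_comm]
  · simp [mergeMap_apply, swapMap_apply, Equiv.swap_apply_of_ne_of_ne]

theorem tailSeq_swapMap_consSeq (x : ℝ) (g : ℕ → ℝ) :
    tailSeq (swapMap (consSeq x g)) = consSeq x (tailSeq g) := by
  ext j
  rcases j with _ | j
  · simp [swapMap_apply]
  · simp [swapMap_apply, Equiv.swap_apply_of_ne_of_ne]

/-- The part of `generator c (k + 1) φ` that changes sign when the first two gaps are exchanged,
and therefore has mean zero under every law of independent and identically distributed gaps. -/
noncomputable def swapDefect (c : ℝ) (φ : (ℕ → ℝ) →ᵇ ℝ) : (ℕ → ℝ) →ᵇ ℝ :=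
  (1 / 2 : ℝ) • ((gapRate c 1 - gapRate c 0) * φ.compContinuous (mergeMap 0)
    + gapRate c 1 * φ.compContinuous (tailMap.comp swapMap)
    - gapRate c 0 * φ.compContinuous tailMap)

theorem swapDefect_apply (c : ℝ) (φ : (ℕ → ℝ) →ᵇ ℝ) (g : ℕ → ℝ) :
    swapDefect c φ g = 1 / 2 * ((matchRate c (g 1) - matchRate c (g 0)) * φ (mergeMap 0 g)
      + matchRate c (g 1) * φ (tailSeq (swapMap g)) - matchRate c (g 0) * φ (tailSeq g)) := rfl

theorem swapDefect_swapMap (c : ℝ) (φ : (ℕ → ℝ) →ᵇ ℝ) (g : ℕ → ℝ) :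
    swapDefect c φ (swapMap g) = -swapDefect c φ g := by
  rw [swapDefect_apply, swapDefect_apply, swapMap_swapMap, mergeMap_zero_swapMap, swapMap_apply,
    swapMap_apply, Equiv.swap_apply_left, Equiv.swap_apply_right]
  ring

/-- The change of `φ` when the first two gaps are merged, weighted with the rate of the first. -/
noncomputable def mergeFirst (c : ℝ) (φ : (ℕ → ℝ) →ᵇ ℝ) : (ℕ → ℝ) →ᵇ ℝ :=
  gapRate c 0 * (φ.compContinuous (mergeMap 0) - φ)

theorem mergeFirst_apply (c : ℝ) (φ : (ℕ → ℝ) →ᵇ ℝ) (g : ℕ → ℝ) :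
    mergeFirst c φ g = matchRate c (g 0) * (φ (mergeMap 0 g) - φ g) := rfl

theorem generator_compContinuous_consMap (c : ℝ) (k : ℕ) (φ : (ℕ → ℝ) →ᵇ ℝ) (x : ℝ) :
    generator c k (φ.compContinuous (consMap x)) =
      (generator c (k + 1) φ - (mergeFirst c φ + swapDefect c φ)).compContinuous (consMap x) := by
  ext g
  simp only [compContinuous_apply, consMap_apply, BoundedContinuousFunction.sub_apply,
    BoundedContinuousFunction.add_apply, generator_apply, mergeGenerator_succ_consSeq,
    mergeFirst_apply, swapDefect_apply, consSeq_succ, consSeq_zero, tailSeq_consSeq,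
    tailSeq_swapMap_consSeq]
  ring

theorem integral_swapDefect (ν : Measure ℝ) [IsProbabilityMeasure ν] (c : ℝ) (φ : (ℕ → ℝ) →ᵇ ℝ) :
    ∫ g, swapDefect c φ g ∂(Measure.infinitePi fun _ : ℕ => ν) = 0 := by
  have hswap : MeasurePreserving
      (MeasurableEquiv.piCongrLeft (fun _ : ℕ => ℝ) (Equiv.swap 0 1))
      (Measure.infinitePi fun _ : ℕ => ν) (Measure.infinitePi fun _ : ℕ => ν) :=
    ⟨MeasurableEquiv.measurable _, Measure.infinitePi_map_piCongrLeft (fun _ => ν) _⟩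
  have hneg : ∫ g, swapDefect c φ g ∂(Measure.infinitePi fun _ : ℕ => ν) =
      ∫ g, swapDefect c φ (swapMap g) ∂(Measure.infinitePi fun _ : ℕ => ν) := by
    rw [← hswap.integral_comp']
    congr! 3
    ext j
    exact Equiv.piCongrLeft_apply_eq_cast ..
  simp only [swapDefect_swapMap, integral_neg] at hneg
  linarith

end Generator

/-- The limiting law at time `t` of a rescaled gap between consecutive free offline points. -/
noncomputable def gapLaw (f : ℝ → ℝ → ℝ) (t : ℝ) : Measure ℝ :=
  volume.withDensity fun x => ENNReal.ofReal (gapDensity f t x)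

/-- The law of a sequence of independent gaps with law `gapLaw f t`. -/
noncomputable def gapSeqLaw (f : ℝ → ℝ → ℝ) (t : ℝ) : Measure (ℕ → ℝ) :=
  Measure.infinitePi fun _ : ℕ => gapLaw f t

/-- The limit of `N⁻¹ ∑ φ`, where the sum runs over the gap sequences to the right of the free
offline points at time `t`. -/
noncomputable def gapMoment (f : ℝ → ℝ → ℝ) (t : ℝ) (φ : (ℕ → ℝ) →ᵇ ℝ) : ℝ :=
  freeMass f t * ∫ g, φ g ∂gapSeqLaw f t

end ClosestMatching

namespace SolvesMaxMatchingPDE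
open ClosestMatching BoundedContinuousFunction
open scoped BoundedContinuousFunction
variable {c : ℝ} {f : ℝ → ℝ → ℝ} {t : ℝ}

theorem integral_gapLaw (hf : SolvesMaxMatchingPDE c f) (ht : t ∈ Set.Icc (0 : ℝ) 1)
    (ψ : ℝ → ℝ) : ∫ x, ψ x ∂gapLaw f t = ∫ x, gapDensity f t x * ψ x := by
  rw [gapLaw, integral_withDensity_eq_integral_toReal_smul₀
    (hf.integrable_gapDensity ht).aemeasurable.ennreal_ofReal
    (.of_forall fun _ => ENNReal.ofReal_lt_top)]
  simp only [ENNReal.toReal_ofReal (hf.gapDensity_nonneg ht _), smul_eq_mul]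

theorem isProbabilityMeasure_gapLaw (hf : SolvesMaxMatchingPDE c f)
    (ht : t ∈ Set.Icc (0 : ℝ) 1) : IsProbabilityMeasure (gapLaw f t) := by
  constructor
  rw [gapLaw, withDensity_apply _ .univ, Measure.restrict_univ,
    ← ofReal_integral_eq_lintegral_ofReal (hf.integrable_gapDensity ht)
      (.of_forall (hf.gapDensity_nonneg ht)), hf.integral_gapDensity ht, ENNReal.ofReal_one]

theorem isProbabilityMeasure_gapSeqLaw (hf : SolvesMaxMatchingPDE c f)
    (ht : t ∈ Set.Icc (0 : ℝ) 1) : IsProbabilityMeasure (gapSeqLaw f t) := by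
  have := hf.isProbabilityMeasure_gapLaw ht
  unfold gapSeqLaw
  infer_instance

theorem integrable_gapSeqLaw (hf : SolvesMaxMatchingPDE c f) (ht : t ∈ Set.Icc (0 : ℝ) 1)
    (φ : (ℕ → ℝ) →ᵇ ℝ) : Integrable φ (gapSeqLaw f t) :=
  have := hf.isProbabilityMeasure_gapSeqLaw ht
  φ.integrable _

theorem gapMoment_add (hf : SolvesMaxMatchingPDE c f) (ht : t ∈ Set.Icc (0 : ℝ) 1)
    (φ ψ : (ℕ → ℝ) →ᵇ ℝ) : gapMoment f t (φ + ψ) = gapMoment f t φ + gapMoment f t ψ := by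
  rw [gapMoment, gapMoment, gapMoment, ← mul_add,
    ← integral_add (hf.integrable_gapSeqLaw ht φ) (hf.integrable_gapSeqLaw ht ψ)]
  rfl

theorem gapMoment_sub (hf : SolvesMaxMatchingPDE c f) (ht : t ∈ Set.Icc (0 : ℝ) 1)
    (φ ψ : (ℕ → ℝ) →ᵇ ℝ) : gapMoment f t (φ - ψ) = gapMoment f t φ - gapMoment f t ψ := by
  rw [eq_sub_iff_add_eq, ← hf.gapMoment_add ht, sub_add_cancel]

theorem abs_gapMoment_le (hc : 0 < c) (hf : SolvesMaxMatchingPDE c f)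
    (ht : t ∈ Set.Icc (0 : ℝ) 1) (φ : (ℕ → ℝ) →ᵇ ℝ) :
    |gapMoment f t φ| ≤ Real.exp (4 * c) * freeMass f 1 * ‖φ‖ := by
  have := hf.isProbabilityMeasure_gapSeqLaw ht
  rw [gapMoment, abs_mul, abs_of_pos (hf.freeMass_pos ht)]
  exact mul_le_mul (hf.freeMass_le hc ht) (φ.norm_integral_le_norm _) (abs_nonneg _)
    (mul_nonneg (Real.exp_nonneg _) (hf.freeMass_pos (Set.right_mem_Icc.2 zero_le_one)).le)

theorem measurable_gapMoment_consMap (hf : SolvesMaxMatchingPDE c f)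
    (ht : t ∈ Set.Icc (0 : ℝ) 1) (φ : (ℕ → ℝ) →ᵇ ℝ) :
    Measurable fun x => gapMoment f t (φ.compContinuous (consMap x)) := by
  have := hf.isProbabilityMeasure_gapSeqLaw ht
  have hφ : StronglyMeasurable fun q : ℝ × (ℕ → ℝ) => φ (consSeq q.1 q.2) :=
    (φ.continuous.measurable.comp measurable_consSeq).stronglyMeasurable
  exact hφ.integral_prod_right.measurable.const_mul _

theorem abs_gapMoment_consMap_le (hc : 0 < c) (hf : SolvesMaxMatchingPDE c f)
    (ht : t ∈ Set.Icc (0 : ℝ) 1) (φ : (ℕ → ℝ) →ᵇ ℝ) (x : ℝ) :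
    |gapMoment f t (φ.compContinuous (consMap x))|
      ≤ Real.exp (4 * c) * freeMass f 1 * ‖φ‖ := by
  refine (hf.abs_gapMoment_le hc ht _).trans ?_
  have hu := (hf.freeMass_pos (Set.right_mem_Icc.2 zero_le_one)).le
  gcongr
  exact φ.norm_compContinuous_le _

theorem integrable_mul_gapMoment_consMap (hc : 0 < c) (hf : SolvesMaxMatchingPDE c f)
    (ht : t ∈ Set.Icc (0 : ℝ) 1) {p : ℝ → ℝ} (hp : Integrable p) (φ : (ℕ → ℝ) →ᵇ ℝ) :
    Integrable fun x => p x * gapMoment f t (φ.compContinuous (consMap x)) :=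
  hp.mul_bdd (hf.measurable_gapMoment_consMap ht φ).aestronglyMeasurable
    (.of_forall (hf.abs_gapMoment_consMap_le hc ht φ))

theorem gapMoment_eq_integral_consMap (hf : SolvesMaxMatchingPDE c f)
    (ht : t ∈ Set.Icc (0 : ℝ) 1) (φ : (ℕ → ℝ) →ᵇ ℝ) :
    gapMoment f t φ =
      ∫ x, gapDensity f t x * gapMoment f t (φ.compContinuous (consMap x)) := by
  have := hf.isProbabilityMeasure_gapLaw ht
  simp only [gapMoment, gapSeqLaw, mul_left_comm _ (freeMass f t), integral_const_mul]
  rw [integral_infinitePi_consSeq _ (hf.integrable_gapSeqLaw ht φ), hf.integral_gapLaw ht]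
  rfl

theorem gapMoment_swapDefect (hf : SolvesMaxMatchingPDE c f) (ht : t ∈ Set.Icc (0 : ℝ) 1)
    (φ : (ℕ → ℝ) →ᵇ ℝ) : gapMoment f t (swapDefect c φ) = 0 := by
  have := hf.isProbabilityMeasure_gapLaw ht
  rw [gapMoment, gapSeqLaw, integral_swapDefect, mul_zero]

theorem gapMoment_mergeFirst (hc : 0 < c) (hf : SolvesMaxMatchingPDE c f)
    (ht : t ∈ Set.Icc (0 : ℝ) 1) (φ : (ℕ → ℝ) →ᵇ ℝ) :
    gapMoment f t (mergeFirst c φ) =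
      ∫ x, gapDensityDeriv c f t x * gapMoment f t (φ.compContinuous (consMap x)) := by
  have hap := integrable_matchRate_mul hc (hf.integrable_gapDensity ht)
  have hcons (x : ℝ) : (mergeFirst c φ).compContinuous (consMap x) =
      matchRate c x • ((φ.compContinuous (mergeMap 0)).compContinuous (consMap x)
        - φ.compContinuous (consMap x)) := rfl
  have hmerge (x y : ℝ) :
      ((φ.compContinuous (mergeMap 0)).compContinuous (consMap x)).compContinuous (consMap y) =
        φ.compContinuous (consMap (x + y)) := by
    ext g
    exact congrArg φ (mergeMap_zero_consSeq_consSeq x y g)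
  have hsmul (r : ℝ) (ψ : (ℕ → ℝ) →ᵇ ℝ) : gapMoment f t (r • ψ) = r * gapMoment f t ψ := by
    simp only [gapMoment, BoundedContinuousFunction.coe_smul, smul_eq_mul, integral_const_mul]
    ring
  rw [hf.integral_gapDensityDeriv_mul hc ht (hf.measurable_gapMoment_consMap ht φ)
    (hf.abs_gapMoment_consMap_le hc ht φ)]
  simp only [← hmerge, ← hf.gapMoment_eq_integral_consMap ht]
  rw [← integral_sub (hf.integrable_mul_gapMoment_consMap hc ht hap _)
    (hf.integrable_mul_gapMoment_consMap hc ht hap _), hf.gapMoment_eq_integral_consMap ht]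
  congr! 2 with x
  rw [hcons, hsmul, hf.gapMoment_sub ht]
  ring

theorem hasDerivWithinAt_gapMoment_of_dependsOn_zero (hc : 0 < c) (hf : SolvesMaxMatchingPDE c f)
    (ht : t ∈ Set.Icc (0 : ℝ) 1) {φ : (ℕ → ℝ) →ᵇ ℝ} (hφ : DependsOn φ (Set.Iio 0)) :
    HasDerivWithinAt (fun t => gapMoment f t φ) (gapMoment f t (generator c 0 φ))
      (Set.Icc 0 1) t := by
  have hconst (g : ℕ → ℝ) : φ g = φ 0 := hφ fun j hj => absurd hj (Nat.not_lt_zero j)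
  have hmoment {s : ℝ} (hs : s ∈ Set.Icc (0 : ℝ) 1) : gapMoment f s φ = freeMass f s * φ 0 := by
    have := hf.isProbabilityMeasure_gapSeqLaw hs
    simp only [gapMoment, hconst, integral_const, probReal_univ, one_smul]
  have hgen : gapMoment f t (generator c 0 φ) = -(freeMass f t * meanRate c f t) * φ 0 := by
    have := hf.isProbabilityMeasure_gapLaw ht
    have heval : ∫ g, matchRate c (g 0) ∂gapSeqLaw f t = meanRate c f t := by
      rw [gapSeqLaw, ← integral_map (φ := fun g : ℕ → ℝ => g 0)
        (measurable_pi_apply 0).aemeasurable (continuous_matchRate c).aestronglyMeasurable,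
        (measurePreserving_eval_infinitePi _ 0).map_eq, hf.integral_gapLaw ht]
      simp only [mul_comm, meanRate]
    have hgen_apply (g : ℕ → ℝ) : generator c 0 φ g = matchRate c (g 0) * -φ 0 := by
      rw [generator_apply, mergeGenerator_apply, hconst g, hconst (tailSeq g),
        Finset.sum_range_zero]
      ring
    simp only [gapMoment, hgen_apply, integral_mul_const, heval]
    ring
  rw [hgen]
  exact ((hf.hasDerivWithinAt_freeMass hc ht).mul_const _).congr (fun _ hs => hmoment hs)
    (hmoment ht)

theorem hasDerivWithinAt_gapMoment (hc : 0 < c) (hf : SolvesMaxMatchingPDE c f) {k : ℕ}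
    {φ : (ℕ → ℝ) →ᵇ ℝ} (hφ : DependsOn φ (Set.Iio k)) (ht : t ∈ Set.Icc (0 : ℝ) 1) :
    HasDerivWithinAt (fun t => gapMoment f t φ) (gapMoment f t (generator c k φ))
      (Set.Icc 0 1) t := by
  induction k generalizing φ t with
  | zero => exact hf.hasDerivWithinAt_gapMoment_of_dependsOn_zero hc ht hφ
  | succ k ih =>
    set χ := generator c (k + 1) φ - (mergeFirst c φ + swapDefect c φ) with hχ
    set K := Real.exp (4 * c) * freeMass f 1
    have hp := hf.integrable_gapDensity ht
    have hap := integrable_matchRate_mul hc hp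
    have hp' : Integrable (gapDensityDeriv c f t) := (hap.integrable_convolution _ hp).sub hap
    have hderiv (x r : ℝ) (hr : r ∈ Set.Icc (0 : ℝ) 1) : HasDerivWithinAt
        (fun r => gapDensity f r x * gapMoment f r (φ.compContinuous (consMap x)))
        (gapDensityDeriv c f r x * gapMoment f r (φ.compContinuous (consMap x))
          + gapDensity f r x * gapMoment f r (χ.compContinuous (consMap x))) (Set.Icc 0 1) r := by
      have := ih (dependsOn_compContinuous_consMap hφ x) hr
      rw [generator_compContinuous_consMap] at this
      exact (hf.hasDerivWithinAt_gapDensity hc x hr).mul this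
    have hbound : Integrable fun x =>
        gapDensityDerivBound c f x * (K * ‖φ‖) + gapDensityBound c f x * (K * ‖χ‖) :=
      (hf.integrable_gapDensityDerivBound.mul_const _).add
        (hf.integrable_gapDensityBound.mul_const _)
    have hmain := hasDerivWithinAt_integral_of_dominated (convex_Icc 0 1) ht
      (fun r hr => hf.integrable_mul_gapMoment_consMap hc hr (hf.integrable_gapDensity hr) φ)
      hbound (by
        filter_upwards [hf.ae_abs_gapDensityDeriv_le hc] with x hx r hr
        refine (abs_add_le _ _).trans (add_le_add ?_ ?_) <;> rw [abs_mul]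
        · exact mul_le_mul (hx r hr) (hf.abs_gapMoment_consMap_le hc hr φ x) (abs_nonneg _)
            ((abs_nonneg _).trans (hx r hr))
        · exact mul_le_mul (hf.abs_gapDensity_le hc hr x) (hf.abs_gapMoment_consMap_le hc hr χ x)
            (abs_nonneg _) ((abs_nonneg _).trans (hf.abs_gapDensity_le hc hr x))) hderiv
    rw [integral_add (hf.integrable_mul_gapMoment_consMap hc ht hp' φ)
      (hf.integrable_mul_gapMoment_consMap hc ht hp χ), ← hf.gapMoment_mergeFirst hc ht,
      ← hf.gapMoment_eq_integral_consMap ht, hχ, hf.gapMoment_sub ht, hf.gapMoment_add ht,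
      hf.gapMoment_swapDefect ht, add_zero, add_sub_cancel] at hmain
    exact hmain.congr (fun s hs => hf.gapMoment_eq_integral_consMap hs φ)
      (hf.gapMoment_eq_integral_consMap ht φ)

theorem abs_gapMoment_sub_sub_le (hc : 0 < c) (hf : SolvesMaxMatchingPDE c f) {k : ℕ}
    {φ : (ℕ → ℝ) →ᵇ ℝ} (hφ : DependsOn φ (Set.Iio k)) {r : ℝ} (ht : t ∈ Set.Icc (0 : ℝ) 1)
    (hr : r ∈ Set.Icc (0 : ℝ) 1) :
    |gapMoment f r φ - gapMoment f t φ - (r - t) * gapMoment f t (generator c k φ)|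
      ≤ Real.exp (4 * c) * freeMass f 1 * ‖generator c (k + 1) (generator c k φ)‖
        * (r - t) ^ 2 :=
  abs_sub_sub_mul_le_of_hasDerivWithinAt (convex_Icc 0 1)
    (fun _ hs => hf.hasDerivWithinAt_gapMoment hc hφ hs)
    (fun _ hs => hf.hasDerivWithinAt_gapMoment hc (dependsOn_generator hφ) hs)
    (fun _ hs => hf.abs_gapMoment_le hc hs _) ht hr

end SolvesMaxMatchingPDE

namespace ClosestMatching
open scoped BoundedContinuousFunction

/-! ### One step of the algorithm -/

section Algorithm
variable {r : ℝ} {S : Finset ℝ} {y x : ℝ}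

/-- The offline point `x` is chosen by `closest` with threshold `r` and free set `S` when `y`
arrives. -/
def IsClosest (r : ℝ) (S : Finset ℝ) (y x : ℝ) : Prop :=
  |x - y| < r ∧ ∀ x' ∈ S, |x - y| < |x' - y| ∨ (|x - y| = |x' - y| ∧ x ≤ x')

open Classical in
/-- The free set `S` after the arrival of `y`. -/
noncomputable def freeAfter (r : ℝ) (S : Finset ℝ) (y : ℝ) : Finset ℝ :=
  S.filter fun x => ¬ IsClosest r S y x

/-- The free set after the arrivals `y 0, …, y (m - 1)`, starting from `S`. -/
noncomputable def freeSet (r : ℝ) (S : Finset ℝ) (y : ℕ → ℝ) : ℕ → Finset ℝ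
  | 0 => S
  | m + 1 => freeAfter r (freeSet r S y m) (y m)

theorem IsClosest.unique {x' : ℝ} (hx : x ∈ S) (hx' : x' ∈ S) (h : IsClosest r S y x)
    (h' : IsClosest r S y x') : x = x' := by
  rcases h.2 x' hx' with hlt | hle <;> rcases h'.2 x hx with hlt' | hle'
  · exact absurd (hlt.trans hlt') (lt_irrefl _)
  · exact absurd hle'.1 hlt.ne'
  · exact absurd hle.1 hlt'.ne'
  · exact le_antisymm hle.2 hle'.2

theorem freeAfter_of_isClosest (hx : x ∈ S) (h : IsClosest r S y x) :
    freeAfter r S y = S.erase x := by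
  classical
  ext z
  simp only [freeAfter, Finset.mem_filter, Finset.mem_erase]
  exact ⟨fun hz => ⟨fun hzx => hz.2 (hzx ▸ h), hz.1⟩,
    fun hz => ⟨hz.2, fun h' => hz.1 (h'.unique hz.2 hx h)⟩⟩

theorem freeAfter_of_forall_not_isClosest (h : ∀ x ∈ S, ¬ IsClosest r S y x) :
    freeAfter r S y = S := by
  classical exact Finset.filter_true_of_mem h

theorem freeAfter_subset (r : ℝ) (S : Finset ℝ) (y : ℝ) : freeAfter r S y ⊆ S := by
  classical exact Finset.filter_subset _ _

theorem closestStep_eq_some_or_eq_none (hr : 0 < r) (S : Finset ℝ) (y : ℝ) :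
    (∃ x ∈ S, IsClosest r S y x ∧ closestStep (ENNReal.ofReal r) S y = (S.erase x, some x)) ∨
      ((∀ x ∈ S, ¬ IsClosest r S y x) ∧ closestStep (ENNReal.ofReal r) S y = (S, none)) := by
  have hlt (x : ℝ) : ENNReal.ofReal |x - y| < ENNReal.ofReal r ↔ |x - y| < r :=
    ENNReal.ofReal_lt_ofReal_iff hr
  by_cases h : (S.filter fun x => ENNReal.ofReal |x - y| < ENNReal.ofReal r).Nonempty
  · left
    simp only [closestStep, dif_pos h]
    set A := S.filter fun x => ENNReal.ofReal |x - y| < ENNReal.ofReal r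
    set d := A.inf' h fun x => |x - y|
    have hne : (A.filter fun x => |x - y| = d).Nonempty := by
      obtain ⟨b, hb, hbd⟩ := Finset.exists_mem_eq_inf' h (fun x : ℝ => |x - y|)
      exact ⟨b, Finset.mem_filter.2 ⟨hb, hbd.symm⟩⟩
    set z := (A.filter fun x => |x - y| = d).min' hne
    obtain ⟨hzA, hzd⟩ := Finset.mem_filter.1 (Finset.min'_mem _ hne)
    obtain ⟨hzS, hzr⟩ := Finset.mem_filter.1 hzA
    refine ⟨z, hzS, ⟨(hlt _).1 hzr, fun x hx => ?_⟩, rfl⟩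
    rcases lt_or_ge |x - y| r with hxr | hxr
    · have hxA : x ∈ A := Finset.mem_filter.2 ⟨hx, (hlt _).2 hxr⟩
      rw [hzd]
      refine (Finset.inf'_le (fun x => |x - y|) hxA).lt_or_eq.imp_right fun hxd => ⟨hxd, ?_⟩
      exact Finset.min'_le _ _ (Finset.mem_filter.2 ⟨hxA, hxd.symm⟩)
    · exact .inl (((hlt _).1 hzr).trans_le hxr)
  · right
    refine ⟨fun x hx hxy => h ⟨x, Finset.mem_filter.2 ⟨hx, (hlt _).2 hxy.1⟩⟩, ?_⟩
    simp only [closestStep, dif_neg h]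

theorem closestState_eq_freeSet (hr : 0 < r) (X : Finset ℝ) (y : ℕ → ℝ) (m : ℕ) :
    (closestState (ENNReal.ofReal r) X y m).1 = freeSet r X y m ∧
      closestMatchedCount (ENNReal.ofReal r) X y m + (freeSet r X y m).card = X.card := by
  induction m with
  | zero => simp [closestMatchedCount, closestState, freeSet]
  | succ m ih =>
    obtain ⟨hfree, hcount⟩ := ih
    rw [closestMatchedCount] at hcount ⊢
    rw [closestState, freeSet, hfree]
    rcases closestStep_eq_some_or_eq_none hr (freeSet r X y m) (y m) with
      ⟨x, hx, hxy, hstep⟩ | ⟨hnone, hstep⟩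
    · have := Finset.card_erase_add_one hx
      simp only [hstep, freeAfter_of_isClosest hx hxy, true_and]
      lia
    · simp only [hstep, freeAfter_of_forall_not_isClosest hnone, hcount, and_self]

theorem freeSet_succ_eq_tailSeq (r : ℝ) (S : Finset ℝ) (y : ℕ → ℝ) (m : ℕ) :
    freeSet r S y (m + 1) = freeSet r (freeAfter r S (y 0)) (tailSeq y) m := by
  induction m with
  | zero => rfl
  | succ m ih => rw [freeSet, ih]; rfl

theorem freeSet_congr (r : ℝ) (S : Finset ℝ) {y y' : ℕ → ℝ} {m : ℕ} (h : ∀ i < m, y i = y' i) :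
    freeSet r S y m = freeSet r S y' m := by
  induction m with
  | zero => rfl
  | succ m ih => rw [freeSet, freeSet, ih fun i hi => h i (hi.trans m.lt_succ_self),
      h m m.lt_succ_self]

theorem freeSet_subset (r : ℝ) (S : Finset ℝ) (y : ℕ → ℝ) (m : ℕ) : freeSet r S y m ⊆ S := by
  induction m with
  | zero => exact subset_rfl
  | succ m ih => exact (freeAfter_subset _ _ _).trans ih

end Algorithm

section OneStep

/-- The uniform distribution on `[0,1]`, as a measure on `ℝ`. -/
noncomputable def unifInterval : Measure ℝ := volume.restrict (Set.Icc 0 1)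

instance : IsProbabilityMeasure unifInterval := ⟨by simp [unifInterval]⟩

/-- The transition operator of the free set: the mean of `H` after one uniform arrival. -/
noncomputable def stepMean (r : ℝ) (H : Finset ℝ → ℝ) (S : Finset ℝ) : ℝ :=
  ∫ y, H (freeAfter r S y) ∂unifInterval

/-- The probability that a uniform arrival is matched to `z`. -/
noncomputable def matchProb (r : ℝ) (S : Finset ℝ) (z : ℝ) : ℝ :=
  unifInterval.real {y | IsClosest r S y z}

variable {r : ℝ} {S : Finset ℝ} {y z : ℝ}

theorem measurableSet_isClosest (r : ℝ) (S : Finset ℝ) (z : ℝ) :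
    MeasurableSet {y | IsClosest r S y z} := by
  have habs (x : ℝ) : Measurable fun y : ℝ => |x - y| := by fun_prop
  have hset : {y | IsClosest r S y z} = {y | |z - y| < r} ∩ ⋂ x ∈ S,
      ({y | |z - y| < |x - y|} ∪ ({y | |z - y| = |x - y|} ∩ {_y | z ≤ x})) := by
    ext y
    simp [IsClosest]
  rw [hset]
  exact (measurableSet_lt (habs z) measurable_const).inter <|
    Finset.measurableSet_biInter _ fun x _ => (measurableSet_lt (habs z) (habs x)).union
      ((measurableSet_eq_fun (habs z) (habs x)).inter (.const _))

theorem comp_freeAfter_eq_add_sum_indicator (r : ℝ) (H : Finset ℝ → ℝ) (S : Finset ℝ) (y : ℝ) :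
    H (freeAfter r S y) =
      H S + ∑ z ∈ S, {y | IsClosest r S y z}.indicator (fun _ => H (S.erase z) - H S) y := by
  by_cases h : ∃ x ∈ S, IsClosest r S y x
  · obtain ⟨x, hx, hxy⟩ := h
    rw [freeAfter_of_isClosest hx hxy, Finset.sum_eq_single_of_mem x hx fun z hz hzx =>
      Set.indicator_of_notMem (s := {y | IsClosest r S y z})
        (fun hzy => hzx (IsClosest.unique hz hx hzy hxy)) _,
      Set.indicator_of_mem (s := {y | IsClosest r S y x}) hxy, add_sub_cancel]
  · push Not at h
    rw [freeAfter_of_forall_not_isClosest h, Finset.sum_eq_zero fun z hz =>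
      Set.indicator_of_notMem (s := {y | IsClosest r S y z}) (h z hz) _, add_zero]

theorem stepMean_eq_add_sum (r : ℝ) (H : Finset ℝ → ℝ) (S : Finset ℝ) :
    stepMean r H S = H S + ∑ z ∈ S, matchProb r S z * (H (S.erase z) - H S) := by
  have hint (z : ℝ) : Integrable
      ({y | IsClosest r S y z}.indicator fun _ => H (S.erase z) - H S) unifInterval :=
    (integrable_const _).indicator (measurableSet_isClosest r S z)
  simp_rw [stepMean, comp_freeAfter_eq_add_sum_indicator r H S]
  rw [integral_add (integrable_const _) (integrable_finsetSum _ fun z _ => hint z),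
    integral_finsetSum _ fun z _ => hint z]
  simp only [integral_const, probReal_univ, one_mul, smul_eq_mul, matchProb,
    integral_indicator_const _ (measurableSet_isClosest r S _)]

theorem matchProb_nonneg (r : ℝ) (S : Finset ℝ) (z : ℝ) : 0 ≤ matchProb r S z :=
  measureReal_nonneg

theorem matchProb_le (hr : 0 < r) (S : Finset ℝ) (z : ℝ) : matchProb r S z ≤ 2 * r := by
  have hsub : {y | IsClosest r S y z} ⊆ Set.Icc (z - r) (z + r) := fun y hy => by
    have := abs_lt.1 hy.1
    constructor <;> linarith
  calc matchProb r S z ≤ volume.real (Set.Icc (z - r) (z + r)) := by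
        rw [matchProb, unifInterval, measureReal_restrict_apply (measurableSet_isClosest r S z)]
        exact measureReal_mono (Set.inter_subset_left.trans hsub) (by simp)
    _ = 2 * r := by rw [Real.volume_real_Icc_of_le (by linarith)]; ring

theorem IsClosest.mem_Icc {l s : ℝ} (hl : l ∈ S) (hs : s ∈ S) (hlz : l < z) (hzs : z < s)
    (h : IsClosest r S y z) :
    y ∈ Set.Icc (max (z - r) ((l + z) / 2)) (min (z + r) ((z + s) / 2)) := by
  have hzr := abs_lt.1 h.1
  have hle {x : ℝ} (hx : x ∈ S) : (z - y) ^ 2 ≤ (x - y) ^ 2 :=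
    sq_le_sq.2 ((h.2 x hx).elim le_of_lt fun hx => hx.1.le)
  exact ⟨max_le (by linarith) (by nlinarith [hle hl]), le_min (by linarith) (by nlinarith [hle hs])⟩

theorem isClosest_of_mem_Ioo {l s : ℝ} (hlz : l < z) (hzs : z < s)
    (hgap : ∀ x ∈ S, x ≤ l ∨ x = z ∨ s ≤ x)
    (hy : y ∈ Set.Ioo (max (z - r) ((l + z) / 2)) (min (z + r) ((z + s) / 2))) :
    IsClosest r S y z := by
  obtain ⟨hr, hl⟩ := max_lt_iff.1 hy.1
  obtain ⟨hr', hs⟩ := lt_min_iff.1 hy.2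
  refine ⟨abs_lt.2 ⟨by linarith, by linarith⟩, fun x hx => ?_⟩
  rcases hgap x hx with hxl | rfl | hsx
  · exact .inl (sq_lt_sq.1 (by nlinarith))
  · exact .inr ⟨rfl, le_rfl⟩
  · exact .inl (sq_lt_sq.1 (by nlinarith))

theorem matchProb_eq (hr : 0 < r) {l s : ℝ} (hl : l ∈ S) (hs : s ∈ S) (hlz : l < z) (hzs : z < s)
    (h01 : ∀ x ∈ S, x ∈ Set.Icc (0 : ℝ) 1) (hgap : ∀ x ∈ S, x ≤ l ∨ x = z ∨ s ≤ x) :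
    matchProb r S z = min r ((z - l) / 2) + min r ((s - z) / 2) := by
  have ha : max (z - r) ((l + z) / 2) = z - min r ((z - l) / 2) := by
    rw [← max_sub_sub_left]; ring_nf
  have hb : min (z + r) ((z + s) / 2) = z + min r ((s - z) / 2) := by
    rw [← min_add_add_left]; ring_nf
  set a := max (z - r) ((l + z) / 2)
  set b := min (z + r) ((z + s) / 2)
  have hab : a ≤ b := by
    have := lt_min hr (half_pos (sub_pos.2 hlz))
    have := lt_min hr (half_pos (sub_pos.2 hzs))
    linarith
  have hsub : Set.Icc a b ⊆ Set.Icc 0 1 := Set.Icc_subset_Icc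
    (le_max_of_le_right (by linarith [(h01 l hl).1]))
    (min_le_of_right_le (by linarith [(h01 s hs).2]))
  have hIcc : unifInterval.real (Set.Icc a b) = b - a := by
    rw [unifInterval, measureReal_restrict_apply measurableSet_Icc, Set.inter_eq_left.2 hsub,
      Real.volume_real_Icc_of_le hab]
  have hIoo : unifInterval.real (Set.Ioo a b) = b - a := by
    rw [unifInterval, measureReal_restrict_apply measurableSet_Ioo,
      Set.inter_eq_left.2 (Set.Ioo_subset_Icc_self.trans hsub), Real.volume_real_Ioo_of_le hab]
  have hle : matchProb r S z ≤ b - a :=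
    hIcc ▸ measureReal_mono fun _ hy => IsClosest.mem_Icc hl hs hlz hzs hy
  have hge : b - a ≤ matchProb r S z :=
    hIoo ▸ measureReal_mono fun _ hy => isClosest_of_mem_Ioo hlz hzs hgap hy
  linarith

end OneStep

/-! ### Gaps of a finite set -/

section Gaps
variable {n : ℝ} {S S' : Finset ℝ} {x y z : ℝ}

/-- The points of `S` to the right of `x`. -/
noncomputable def pointsAbove (S : Finset ℝ) (x : ℝ) : Finset ℝ := S.filter (x < ·)

/-- The successor of `x` in `S`; it is `x` itself if no point of `S` lies to the right of `x`. -/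
noncomputable def nextPoint (S : Finset ℝ) (x : ℝ) : ℝ :=
  if h : (pointsAbove S x).Nonempty then (pointsAbove S x).min' h else x

/-- The gaps, scaled by `n`, between consecutive points of `S` to the right of `x`, starting with
the gap between `x` and its successor. All gaps after the last point of `S` are `0`. -/
noncomputable def gaps (n : ℝ) (S : Finset ℝ) (x : ℝ) (i : ℕ) : ℝ :=
  n * (nextPoint S ((nextPoint S)^[i] x) - (nextPoint S)^[i] x)

theorem mem_pointsAbove : y ∈ pointsAbove S x ↔ y ∈ S ∧ x < y := Finset.mem_filter

theorem self_notMem_pointsAbove : x ∉ pointsAbove S x := fun h =>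
  lt_irrefl _ (mem_pointsAbove.1 h).2

theorem nextPoint_mem (h : (pointsAbove S x).Nonempty) : nextPoint S x ∈ S ∧ x < nextPoint S x := by
  rw [nextPoint, dif_pos h]
  exact mem_pointsAbove.1 (Finset.min'_mem _ h)

theorem nextPoint_le (hy : y ∈ S) (hxy : x < y) : nextPoint S x ≤ y := by
  have hmem : y ∈ pointsAbove S x := mem_pointsAbove.2 ⟨hy, hxy⟩
  rw [nextPoint, dif_pos ⟨y, hmem⟩]
  exact Finset.min'_le _ _ hmem

theorem nextPoint_of_not_nonempty (h : ¬ (pointsAbove S x).Nonempty) : nextPoint S x = x :=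
  dif_neg h

theorem le_nextPoint (S : Finset ℝ) (x : ℝ) : x ≤ nextPoint S x := by
  by_cases h : (pointsAbove S x).Nonempty
  · exact (nextPoint_mem h).2.le
  · exact (nextPoint_of_not_nonempty h).ge

theorem nextPoint_eq (hy : y ∈ S) (hxy : x < y) (h : ∀ z ∈ S, x < z → y ≤ z) :
    nextPoint S x = y := by
  obtain ⟨hmem, hlt⟩ := nextPoint_mem (S := S) ⟨y, mem_pointsAbove.2 ⟨hy, hxy⟩⟩
  exact le_antisymm (nextPoint_le hy hxy) (h _ hmem hlt)

theorem gaps_zero (n : ℝ) (S : Finset ℝ) (x : ℝ) : gaps n S x 0 = n * (nextPoint S x - x) := rfl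

theorem tailSeq_gaps (n : ℝ) (S : Finset ℝ) (x : ℝ) :
    tailSeq (gaps n S x) = gaps n S (nextPoint S x) := rfl

theorem gaps_eq_consSeq (n : ℝ) (S : Finset ℝ) (x : ℝ) :
    gaps n S x = consSeq (n * (nextPoint S x - x)) (gaps n S (nextPoint S x)) := by
  ext i
  cases i <;> rfl

theorem pointsAbove_congr_of_le (h : pointsAbove S x = pointsAbove S' x) (hxy : x ≤ y) :
    pointsAbove S y = pointsAbove S' y := by
  ext z
  have hz := Finset.ext_iff.1 h z
  simp only [mem_pointsAbove] at hz ⊢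
  exact and_congr_left fun hyz => by simpa only [hxy.trans_lt hyz, and_true] using hz

theorem nextPoint_congr (h : pointsAbove S x = pointsAbove S' x) :
    nextPoint S x = nextPoint S' x := by
  simp only [nextPoint, h]

theorem gaps_congr (h : pointsAbove S x = pointsAbove S' x) : gaps n S x = gaps n S' x := by
  ext i
  induction i generalizing x with
  | zero => rw [gaps_zero, gaps_zero, nextPoint_congr h]
  | succ i ih =>
    have htail := ih (pointsAbove_congr_of_le h (le_nextPoint S x))
    rwa [nextPoint_congr h, ← nextPoint_congr h, ← tailSeq_gaps, nextPoint_congr h,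
      ← tailSeq_gaps] at htail

theorem pointsAbove_erase (hzx : z ≤ x) : pointsAbove (S.erase z) x = pointsAbove S x := by
  ext y
  simp only [mem_pointsAbove, Finset.mem_erase]
  exact and_congr_left fun hxy => and_iff_right (hzx.trans_lt hxy).ne'

theorem pointsAbove_eq_insert (h : (pointsAbove S x).Nonempty) :
    pointsAbove S x = insert (nextPoint S x) (pointsAbove S (nextPoint S x)) := by
  ext y
  obtain ⟨hmem, hlt⟩ := nextPoint_mem h
  simp only [mem_pointsAbove, Finset.mem_insert]
  constructor
  · rintro ⟨hy, hxy⟩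
    exact (nextPoint_le hy hxy).eq_or_lt.imp Eq.symm fun hlt => ⟨hy, hlt⟩
  · rintro (rfl | ⟨hy, hlt'⟩)
    exacts [⟨hmem, hlt⟩, ⟨hy, hlt.trans hlt'⟩]

theorem card_pointsAbove (h : (pointsAbove S x).Nonempty) :
    (pointsAbove S x).card = (pointsAbove S (nextPoint S x)).card + 1 := by
  rw [← Finset.card_insert_of_notMem self_notMem_pointsAbove, ← pointsAbove_eq_insert h]

theorem nextPoint_erase (h : (pointsAbove S x).Nonempty) (hz : z ≠ nextPoint S x) :
    nextPoint (S.erase z) x = nextPoint S x := by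
  obtain ⟨hmem, hlt⟩ := nextPoint_mem h
  exact nextPoint_eq (Finset.mem_erase.2 ⟨hz.symm, hmem⟩) hlt fun y hy hxy =>
    nextPoint_le (Finset.mem_of_mem_erase hy) hxy

theorem nextPoint_erase_nextPoint (h : (pointsAbove S x).Nonempty)
    (h' : (pointsAbove S (nextPoint S x)).Nonempty) :
    nextPoint (S.erase (nextPoint S x)) x = nextPoint S (nextPoint S x) := by
  obtain ⟨-, hlt⟩ := nextPoint_mem h
  obtain ⟨hmem', hlt'⟩ := nextPoint_mem h'
  refine nextPoint_eq (Finset.mem_erase.2 ⟨hlt'.ne', hmem'⟩) (hlt.trans hlt') fun z hz hxz => ?_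
  obtain ⟨hne, hz⟩ := Finset.mem_erase.1 hz
  exact nextPoint_le hz ((nextPoint_le hz hxz).lt_of_ne hne.symm)

theorem gaps_erase_nextPoint (h : (pointsAbove S x).Nonempty)
    (h' : (pointsAbove S (nextPoint S x)).Nonempty) :
    gaps n (S.erase (nextPoint S x)) x = mergeMap 0 (gaps n S x) := by
  rw [gaps_eq_consSeq n S x, gaps_eq_consSeq n S (nextPoint S x), mergeMap_zero_consSeq_consSeq,
    gaps_eq_consSeq, nextPoint_erase_nextPoint h h',
    gaps_congr (pointsAbove_erase (nextPoint_mem h').2.le)]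
  ring_nf

theorem card_pointsAbove_injOn : Set.InjOn (fun x => (pointsAbove S x).card) (S : Set ℝ) := by
  have hanti : ∀ x ∈ S, ∀ y ∈ S, x < y → (pointsAbove S y).card < (pointsAbove S x).card := by
    refine fun x _ y hy hxy => Finset.card_lt_card ⟨fun z hz => ?_, fun h => ?_⟩
    · obtain ⟨hz, hyz⟩ := mem_pointsAbove.1 hz
      exact mem_pointsAbove.2 ⟨hz, hxy.trans hyz⟩
    · exact self_notMem_pointsAbove (h (mem_pointsAbove.2 ⟨hy, hxy⟩))
  intro x hx y hy hcard
  rcases lt_trichotomy x y with h | h | h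
  · exact absurd hcard (hanti x hx y hy h).ne'
  · exact h
  · exact absurd hcard (hanti y hy x hx h).ne

theorem card_filter_card_pointsAbove_le (S : Finset ℝ) (k : ℕ) :
    (S.filter fun x => (pointsAbove S x).card ≤ k).card ≤ k + 1 := by
  have hcard := Finset.card_le_card_of_injOn (t := Finset.range (k + 1))
    (s := S.filter fun x => (pointsAbove S x).card ≤ k) (fun x => (pointsAbove S x).card)
    (fun x hx => Finset.mem_coe.2 <| Finset.mem_range.2 <| Nat.lt_succ_of_le <|
      (Finset.mem_filter.1 (Finset.mem_coe.1 hx)).2)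
    (card_pointsAbove_injOn.mono (Finset.coe_subset.2 (Finset.filter_subset _ _)))
  rwa [Finset.card_range] at hcard

theorem abs_sum_le_of_eq_zero_of_lt_card_pointsAbove {T : Finset ℝ} {k : ℕ} {B : ℝ} {e : ℝ → ℝ}
    (hT : T ⊆ S) (hB : 0 ≤ B) (hzero : ∀ x ∈ T, k < (pointsAbove S x).card → e x = 0)
    (hle : ∀ x ∈ T, |e x| ≤ B) : |∑ x ∈ T, e x| ≤ (k + 1) * B := by
  have hsum : ∑ x ∈ T, e x = ∑ x ∈ T with (pointsAbove S x).card ≤ k, e x :=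
    (Finset.sum_filter_of_ne fun x hx hne => not_lt.1 fun h => hne (hzero x hx h)).symm
  calc |∑ x ∈ T, e x| ≤ ∑ x ∈ T with (pointsAbove S x).card ≤ k, |e x| :=
        hsum ▸ Finset.abs_sum_le_sum_abs _ _
    _ ≤ (T.filter fun x => (pointsAbove S x).card ≤ k).card • B :=
        Finset.sum_le_card_nsmul _ _ B fun x hx => hle x (Finset.mem_filter.1 hx).1
    _ ≤ (k + 1) * B := by
        rw [nsmul_eq_mul]
        gcongr
        exact_mod_cast (Finset.card_le_card (Finset.filter_subset_filter _ hT)).trans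
          (card_filter_card_pointsAbove_le S k)

theorem nextPoint_injOn (S : Finset ℝ) :
    Set.InjOn (nextPoint S) (S.filter fun x => (pointsAbove S x).Nonempty : Finset ℝ) := by
  intro x hx y hy hxy
  obtain ⟨hxS, hx⟩ := Finset.mem_filter.1 (Finset.mem_coe.1 hx)
  obtain ⟨hyS, hy⟩ := Finset.mem_filter.1 (Finset.mem_coe.1 hy)
  rcases lt_trichotomy x y with h | h | h
  · exact absurd (nextPoint_le hyS h) (hxy ▸ (nextPoint_mem hy).2).not_ge
  · exact h
  · exact absurd (nextPoint_le hxS h) (hxy ▸ (nextPoint_mem hx).2).not_ge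

theorem image_nextPoint (hS : S.Nonempty) :
    (S.filter fun x => (pointsAbove S x).Nonempty).image (nextPoint S) = S.erase (S.min' hS) := by
  ext z
  simp only [Finset.mem_image, Finset.mem_filter, Finset.mem_erase]
  constructor
  · rintro ⟨x, ⟨hx, h⟩, rfl⟩
    obtain ⟨hmem, hlt⟩ := nextPoint_mem h
    exact ⟨((Finset.min'_le _ _ hx).trans_lt hlt).ne', hmem⟩
  · rintro ⟨hne, hz⟩
    have hbelow : (S.filter (· < z)).Nonempty :=
      ⟨_, Finset.mem_filter.2 ⟨S.min'_mem hS, (S.min'_le _ hz).lt_of_ne hne.symm⟩⟩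
    obtain ⟨hmem, hlt⟩ := Finset.mem_filter.1 (Finset.max'_mem _ hbelow)
    refine ⟨(S.filter (· < z)).max' hbelow, ⟨hmem, z, mem_pointsAbove.2 ⟨hz, hlt⟩⟩,
      nextPoint_eq hz hlt fun y hy hlty => not_lt.1 fun hyz => hlty.not_ge ?_⟩
    exact Finset.le_max' _ _ (Finset.mem_filter.2 ⟨hy, hyz⟩)

theorem sum_eq_sum_comp_nextPoint_add (h : ℝ → ℝ) (hS : S.Nonempty) :
    ∑ z ∈ S, h z =
      ∑ x ∈ S with (pointsAbove S x).Nonempty, h (nextPoint S x) + h (S.min' hS) := by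
  rw [← Finset.sum_image (nextPoint_injOn S), image_nextPoint hS,
    Finset.sum_erase_add _ _ (S.min'_mem hS)]

end Gaps

section GapSum
variable {c n : ℝ} {S : Finset ℝ} {x : ℝ}

/-- The statistic `∑ φ` of the free set `S`, summed over the scaled gap sequences of its points. -/
noncomputable def gapSum (n : ℝ) (φ : (ℕ → ℝ) →ᵇ ℝ) (S : Finset ℝ) : ℝ := ∑ x ∈ S, φ (gaps n S x)

/-- The expected change, in time scaled by `n`, of the summand of `gapSum n φ S` at `x` due to
matches to the right of `x`. -/
noncomputable def gapDrift (c n : ℝ) (φ : (ℕ → ℝ) →ᵇ ℝ) (S : Finset ℝ) (x : ℝ) : ℝ :=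
  ∑ z ∈ pointsAbove S x,
    n * matchProb (c / n) S z * (φ (gaps n (S.erase z) x) - φ (gaps n S x))

theorem mul_matchProb_nonneg (hn : 0 < n) (S : Finset ℝ) (z : ℝ) :
    0 ≤ n * matchProb (c / n) S z := mul_nonneg hn.le (matchProb_nonneg _ _ _)

theorem mul_matchProb_le (hc : 0 < c) (hn : 0 < n) (S : Finset ℝ) (z : ℝ) :
    n * matchProb (c / n) S z ≤ 2 * c :=
  calc n * matchProb (c / n) S z ≤ n * (2 * (c / n)) := by
        gcongr
        exact matchProb_le (div_pos hc hn) S z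
    _ = 2 * c := by field_simp

theorem mul_min_div_eq_matchRate (hc : 0 < c) (hn : 0 < n) {d : ℝ} (hd : 0 ≤ d) :
    n * min (c / n) (d / 2) = matchRate c (n * d) / 2 := by
  rw [matchRate_of_nonneg hc (by positivity), mul_min_of_nonneg _ _ hn.le, min_comm,
    mul_div_cancel₀ _ hn.ne', ← min_div_div_right zero_le_two, mul_div_assoc,
    mul_div_cancel_left₀ c two_ne_zero]

theorem mul_matchProb_nextPoint (hc : 0 < c) (hn : 0 < n) (h01 : ∀ x ∈ S, x ∈ Set.Icc (0 : ℝ) 1)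
    (hx : x ∈ S) (h : (pointsAbove S x).Nonempty)
    (h' : (pointsAbove S (nextPoint S x)).Nonempty) :
    n * matchProb (c / n) S (nextPoint S x) =
      (matchRate c (gaps n S x 0) + matchRate c (gaps n S x 1)) / 2 := by
  obtain ⟨-, hlt⟩ := nextPoint_mem h
  obtain ⟨hmem', hlt'⟩ := nextPoint_mem h'
  rw [matchProb_eq (div_pos hc hn) hx hmem' hlt hlt' h01 fun y hy => ?_, mul_add,
    mul_min_div_eq_matchRate hc hn (sub_nonneg.2 hlt.le),
    mul_min_div_eq_matchRate hc hn (sub_nonneg.2 hlt'.le), ← add_div]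
  · rfl
  · rcases le_or_gt y x with hyx | hxy
    · exact .inl hyx
    · exact .inr ((nextPoint_le hy hxy).eq_or_lt.imp Eq.symm (nextPoint_le hy))

theorem gapDrift_eq_add (φ : (ℕ → ℝ) →ᵇ ℝ) (h : (pointsAbove S x).Nonempty) :
    gapDrift c n φ S x =
      n * matchProb (c / n) S (nextPoint S x) *
          (φ (gaps n (S.erase (nextPoint S x)) x) - φ (gaps n S x)) +
        gapDrift c n (φ.compContinuous (consMap (gaps n S x 0))) S (nextPoint S x) := by
  rw [gapDrift, pointsAbove_eq_insert h, Finset.sum_insert self_notMem_pointsAbove, gapDrift]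
  congr 1
  refine Finset.sum_congr rfl fun z hz => ?_
  rw [gaps_eq_consSeq n S x, gaps_eq_consSeq n (S.erase z) x,
    nextPoint_erase h (mem_pointsAbove.1 hz).2.ne']
  rfl

theorem gapDrift_zero {φ : (ℕ → ℝ) →ᵇ ℝ} (hφ : DependsOn φ (Set.Iio 0)) :
    gapDrift c n φ S x = 0 :=
  Finset.sum_eq_zero fun _ _ => by rw [sub_eq_zero.2 (hφ fun _ hi => by simp at hi), mul_zero]

theorem gapDrift_eq_mergeGenerator (hc : 0 < c) (hn : 0 < n)
    (h01 : ∀ x ∈ S, x ∈ Set.Icc (0 : ℝ) 1) {k : ℕ} {φ : (ℕ → ℝ) →ᵇ ℝ}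
    (hφ : DependsOn φ (Set.Iio k)) (hx : x ∈ S) (hk : k < (pointsAbove S x).card) :
    gapDrift c n φ S x = mergeGenerator c k φ (gaps n S x) := by
  induction k generalizing φ x with
  | zero => rw [gapDrift_zero hφ, mergeGenerator_apply, Finset.sum_range_zero]
  | succ k ih =>
    have h : (pointsAbove S x).Nonempty := Finset.card_pos.1 (by lia)
    have hcard := card_pointsAbove h
    have h' : (pointsAbove S (nextPoint S x)).Nonempty := Finset.card_pos.1 (by lia)
    rw [gapDrift_eq_add φ h, mul_matchProb_nextPoint hc hn h01 hx h h',
      gaps_erase_nextPoint h h',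
      ih (dependsOn_compContinuous_consMap hφ _) (nextPoint_mem h).1 (by lia),
      gaps_eq_consSeq n S x, mergeGenerator_succ_consSeq]
    rfl

theorem abs_gapDrift_le (hc : 0 < c) (hn : 0 < n) {k : ℕ} {φ : (ℕ → ℝ) →ᵇ ℝ}
    (hφ : DependsOn φ (Set.Iio k)) (S : Finset ℝ) (x : ℝ) :
    |gapDrift c n φ S x| ≤ 4 * c * k * ‖φ‖ := by
  induction k generalizing φ x with
  | zero => simp [gapDrift_zero hφ]
  | succ k ih =>
    by_cases h : (pointsAbove S x).Nonempty
    · rw [gapDrift_eq_add φ h]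
      set ψ := φ.compContinuous (consMap (gaps n S x 0))
      calc _ ≤ 2 * c * (2 * ‖φ‖) + 4 * c * k * ‖ψ‖ := by
            refine (abs_add_le _ _).trans
              (add_le_add ?_ (ih (dependsOn_compContinuous_consMap hφ _) _))
            rw [abs_mul, abs_of_nonneg (mul_matchProb_nonneg hn _ _)]
            exact mul_le_mul (mul_matchProb_le hc hn _ _) (φ.dist_le_two_norm _ _)
              (abs_nonneg _) (by positivity)
        _ ≤ 2 * c * (2 * ‖φ‖) + 4 * c * k * ‖φ‖ := by
            gcongr
            exact φ.norm_compContinuous_le _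
        _ = 4 * c * (k + 1 : ℕ) * ‖φ‖ := by push_cast; ring
    · rw [gapDrift, Finset.not_nonempty_iff_eq_empty.1 h, Finset.sum_empty, abs_zero]
      positivity

theorem mul_stepMean_gapSum_sub (c n : ℝ) (φ : (ℕ → ℝ) →ᵇ ℝ) (S : Finset ℝ) :
    n * (stepMean (c / n) (gapSum n φ) S - gapSum n φ S) =
      ∑ x ∈ S, (gapDrift c n φ S x - n * matchProb (c / n) S x * φ (gaps n S x)) := by
  have hdrift (x : ℝ) : gapDrift c n φ S x =
      ∑ z ∈ S, n * matchProb (c / n) S z * (φ (gaps n (S.erase z) x) - φ (gaps n S x)) :=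
    Finset.sum_subset (Finset.filter_subset _ _) fun z hz hzx => by
      have hzx : z ≤ x := not_lt.1 fun h => hzx (mem_pointsAbove.2 ⟨hz, h⟩)
      rw [gaps_congr (pointsAbove_erase hzx), sub_self, mul_zero]
  simp_rw [stepMean_eq_add_sum, add_sub_cancel_left, Finset.mul_sum, Finset.sum_sub_distrib, hdrift]
  rw [Finset.sum_comm, ← Finset.sum_sub_distrib]
  refine Finset.sum_congr rfl fun z hz => ?_
  rw [← Finset.mul_sum, Finset.sum_sub_distrib, gapSum, gapSum, Finset.sum_erase_eq_sub hz,
    gaps_congr (pointsAbove_erase le_rfl)]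
  ring

/-- The part of the expected loss of the summand at `z` that is due to the gap to the left of
`z`. -/
noncomputable def leftLoss (c n : ℝ) (φ : (ℕ → ℝ) →ᵇ ℝ) (S : Finset ℝ) (z : ℝ) : ℝ :=
  (n * matchProb (c / n) S z - matchRate c (gaps n S z 0) / 2) * φ (gaps n S z)

theorem abs_leftLoss_le (hc : 0 < c) (hn : 0 < n) (φ : (ℕ → ℝ) →ᵇ ℝ) (S : Finset ℝ) (z : ℝ) :
    |leftLoss c n φ S z| ≤ 2 * c * ‖φ‖ := by
  rw [leftLoss, abs_mul]
  refine mul_le_mul (abs_le.2 ⟨?_, ?_⟩) (φ.norm_coe_le_norm _) (abs_nonneg _) (by positivity) <;>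
    linarith [mul_matchProb_nonneg (c := c) hn S z, mul_matchProb_le hc hn S z,
      matchRate_nonneg c (gaps n S z 0), matchRate_le hc (gaps n S z 0)]

theorem leftLoss_nextPoint (hc : 0 < c) (hn : 0 < n) (h01 : ∀ x ∈ S, x ∈ Set.Icc (0 : ℝ) 1)
    (φ : (ℕ → ℝ) →ᵇ ℝ) (hx : x ∈ S) (h : (pointsAbove S x).Nonempty)
    (h' : (pointsAbove S (nextPoint S x)).Nonempty) :
    leftLoss c n φ S (nextPoint S x) =
      matchRate c (gaps n S x 0) / 2 * φ (tailSeq (gaps n S x)) := by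
  rw [leftLoss, mul_matchProb_nextPoint hc hn h01 hx h h', add_div, ← tailSeq_gaps, tailSeq_apply,
    add_sub_cancel_right]

theorem abs_sum_leftLoss_sub_le (hc : 0 < c) (hn : 0 < n) (h01 : ∀ x ∈ S, x ∈ Set.Icc (0 : ℝ) 1)
    (φ : (ℕ → ℝ) →ᵇ ℝ) :
    |∑ x ∈ S, leftLoss c n φ S x -
        ∑ x ∈ S, matchRate c (gaps n S x 0) / 2 * φ (tailSeq (gaps n S x))| ≤
      8 * c * ‖φ‖ := by
  rcases S.eq_empty_or_nonempty with rfl | hS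
  · simpa using by positivity
  set u : ℝ → ℝ := fun x => matchRate c (gaps n S x 0) / 2 * φ (tailSeq (gaps n S x))
  have hu (x : ℝ) : |u x| ≤ c * ‖φ‖ := by
    rw [abs_mul, abs_of_nonneg (div_nonneg (matchRate_nonneg c _) zero_le_two)]
    exact mul_le_mul (by linarith [matchRate_le hc (gaps n S x 0)]) (φ.norm_coe_le_norm _)
      (abs_nonneg _) hc.le
  have hu_zero {x : ℝ} (h : ¬ (pointsAbove S x).Nonempty) : u x = 0 := by
    simp only [u, gaps_zero, nextPoint_of_not_nonempty h, sub_self, mul_zero,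
      matchRate_of_nonpos le_rfl, zero_div, zero_mul]
  have he : |∑ x ∈ S with (pointsAbove S x).Nonempty, (leftLoss c n φ S (nextPoint S x) - u x)| ≤
      ((1 : ℕ) + 1) * (3 * c * ‖φ‖) := by
    refine abs_sum_le_of_eq_zero_of_lt_card_pointsAbove (Finset.filter_subset _ _) (by positivity)
      (fun x hx hcard => ?_) fun x _ => ?_
    · obtain ⟨hx, h⟩ := Finset.mem_filter.1 hx
      have hsucc := card_pointsAbove h
      rw [leftLoss_nextPoint hc hn h01 φ hx h (Finset.card_pos.1 (by lia)), sub_self]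
    · linarith [abs_sub (leftLoss c n φ S (nextPoint S x)) (u x), hu x,
        abs_leftLoss_le hc hn φ S (nextPoint S x)]
  rw [sum_eq_sum_comp_nextPoint_add _ hS,
    ← Finset.sum_filter_of_ne (f := u) fun x _ hne => not_not.1 fun h => hne (hu_zero h),
    add_sub_right_comm, ← Finset.sum_sub_distrib]
  refine (abs_add_le _ _).trans ((add_le_add he (abs_leftLoss_le hc hn φ S _)).trans_eq ?_)
  push_cast
  ring

theorem abs_mul_stepMean_gapSum_sub_sub_le (hc : 0 < c) (hn : 0 < n)
    (h01 : ∀ x ∈ S, x ∈ Set.Icc (0 : ℝ) 1) {k : ℕ} {φ : (ℕ → ℝ) →ᵇ ℝ}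
    (hφ : DependsOn φ (Set.Iio k)) :
    |n * (stepMean (c / n) (gapSum n φ) S - gapSum n φ S) - gapSum n (generator c k φ) S| ≤
      8 * (k * (k + 1) + 1) * c * ‖φ‖ := by
  have hdrift : |∑ x ∈ S, (gapDrift c n φ S x - mergeGenerator c k φ (gaps n S x))| ≤
      (k + 1) * (8 * c * k * ‖φ‖) := by
    refine abs_sum_le_of_eq_zero_of_lt_card_pointsAbove subset_rfl (by positivity)
      (fun x hx hcard => ?_) fun x _ => ?_
    · rw [gapDrift_eq_mergeGenerator hc hn h01 hφ hx hcard, sub_self]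
    · linarith [abs_sub (gapDrift c n φ S x) (mergeGenerator c k φ (gaps n S x)),
        abs_gapDrift_le hc hn hφ S x, abs_mergeGenerator_apply_le hc k φ (gaps n S x)]
  have hsplit : n * (stepMean (c / n) (gapSum n φ) S - gapSum n φ S) -
        gapSum n (generator c k φ) S =
      ∑ x ∈ S, (gapDrift c n φ S x - mergeGenerator c k φ (gaps n S x)) -
        (∑ x ∈ S, leftLoss c n φ S x -
          ∑ x ∈ S, matchRate c (gaps n S x 0) / 2 * φ (tailSeq (gaps n S x))) := by
    rw [mul_stepMean_gapSum_sub]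
    simp only [gapSum, ← Finset.sum_sub_distrib, generator_apply, leftLoss]
    exact Finset.sum_congr rfl fun x _ => by ring
  rw [hsplit]
  linarith [abs_sub (∑ x ∈ S, (gapDrift c n φ S x - mergeGenerator c k φ (gaps n S x)))
    (∑ x ∈ S, leftLoss c n φ S x -
      ∑ x ∈ S, matchRate c (gaps n S x 0) / 2 * φ (tailSeq (gaps n S x))),
    abs_sum_leftLoss_sub_le hc hn h01 φ]

end GapSum

/-! ### Expectation of the algorithm -/

section Measurability
variable {K : ℕ} {r : ℝ} {H : Finset ℝ → ℝ}

theorem measurable_apply_index {α ι : Type*} [MeasurableSpace α] [Countable ι] {b : α → ι}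
    (hb : ∀ i, MeasurableSet (b ⁻¹' {i})) {h : ι → α → ℝ} (hh : ∀ i, Measurable (h i)) :
    Measurable fun a => h (b a) a := by
  let : MeasurableSpace ι := ⊤
  exact (measurable_from_prod_countable_right (f := fun q : ι × α => h q.1 q.2) hh).comp
    ((measurable_to_countable' hb).prodMk measurable_id)

/-- Functionals `H` of finite sets that depend measurably on an enumeration of the set. -/
def MeasurableOnTuples (H : Finset ℝ → ℝ) : Prop :=
  ∀ (K : ℕ) (B : Finset (Fin K)), Measurable fun X : Fin K → ℝ => H (B.image X)

open Classical in
/-- The indices in `B` whose points are free after the arrival of `y`, if the free points before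
are those with index in `B`. -/
noncomputable def freeIndices (r : ℝ) (X : Fin K → ℝ) (B : Finset (Fin K)) (y : ℝ) :
    Finset (Fin K) :=
  B.filter fun i => ¬ IsClosest r (B.image X) y (X i)

theorem freeAfter_image (r : ℝ) (X : Fin K → ℝ) (B : Finset (Fin K)) (y : ℝ) :
    freeAfter r (B.image X) y = (freeIndices r X B y).image X := by
  classical
  rw [freeAfter, freeIndices, Finset.filter_image]

theorem measurableSet_preimage_freeIndices (r : ℝ) (B B' : Finset (Fin K)) :
    MeasurableSet ((fun q : (Fin K → ℝ) × ℝ => freeIndices r q.1 B q.2) ⁻¹' {B'}) := by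
  have hpoint (i : Fin K) : Measurable fun q : (Fin K → ℝ) × ℝ => q.1 i := by fun_prop
  have hdist (i : Fin K) : Measurable fun q : (Fin K → ℝ) × ℝ => |q.1 i - q.2| := by fun_prop
  have hclosest (i : Fin K) :
      Measurable fun q : (Fin K → ℝ) × ℝ => IsClosest r (B.image q.1) q.2 (q.1 i) := by
    simp only [IsClosest, Finset.forall_mem_image]
    exact ((hdist i).lt measurable_const).and <| .forall fun j => measurable_const.imp <|
      ((hdist i).lt (hdist j)).or (((hdist i).eq (hdist j)).and ((hpoint i).le' (hpoint j)))
  have hset : (fun q : (Fin K → ℝ) × ℝ => freeIndices r q.1 B q.2) ⁻¹' {B'} =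
      {q | ∀ i, (i ∈ B ∧ ¬ IsClosest r (B.image q.1) q.2 (q.1 i)) ↔ i ∈ B'} := by
    ext q
    simp [Finset.ext_iff, freeIndices]
  rw [hset]
  exact Measurable.setOf <| .forall fun i =>
    (measurable_const.and (hclosest i).not).iff measurable_const

theorem measurable_comp_freeAfter_image (hH : MeasurableOnTuples H) (r : ℝ)
    (B : Finset (Fin K)) :
    Measurable fun q : (Fin K → ℝ) × ℝ => H (freeAfter r (B.image q.1) q.2) := by
  simp_rw [freeAfter_image]
  exact measurable_apply_index (h := fun B' q => H (B'.image q.1))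
    (measurableSet_preimage_freeIndices r B) fun B' => (hH K B').comp measurable_fst

theorem measurable_comp_freeSet_image (hH : MeasurableOnTuples H) (r : ℝ) (m : ℕ)
    (B : Finset (Fin K)) :
    Measurable fun q : (Fin K → ℝ) × (ℕ → ℝ) => H (freeSet r (B.image q.1) q.2 m) := by
  induction m generalizing B with
  | zero => exact (hH K B).comp measurable_fst
  | succ m ih =>
    have hhead : Measurable fun q : (Fin K → ℝ) × (ℕ → ℝ) => (q.1, q.2 0) := by fun_prop
    have htail : Measurable fun q : (Fin K → ℝ) × (ℕ → ℝ) => (q.1, tailSeq q.2) := by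
      unfold tailSeq
      fun_prop
    simp_rw [freeSet_succ_eq_tailSeq, freeAfter_image]
    exact measurable_apply_index
      (b := fun q : (Fin K → ℝ) × (ℕ → ℝ) => freeIndices r q.1 B (q.2 0))
      (h := fun B' q => H (freeSet r (B'.image q.1) (tailSeq q.2) m))
      (fun B' => hhead (measurableSet_preimage_freeIndices r B B')) fun B' => (ih B').comp htail

theorem MeasurableOnTuples.stepMean (hH : MeasurableOnTuples H) (r : ℝ) :
    MeasurableOnTuples (stepMean r H) := fun _ B =>
  ((measurable_comp_freeAfter_image hH r B).stronglyMeasurable.integral_prod_right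
    (ν := unifInterval)).measurable

theorem MeasurableOnTuples.iterate_stepMean (hH : MeasurableOnTuples H) (r : ℝ) (m : ℕ) :
    MeasurableOnTuples ((ClosestMatching.stepMean r)^[m] H) := by
  induction m with
  | zero => exact hH
  | succ m ih =>
    rw [Function.iterate_succ_apply']
    exact ih.stepMean r

theorem nextPoint_insert (a : ℝ) (S : Finset ℝ) (x : ℝ) :
    nextPoint (insert a S) x =
      if x < a then (if x < nextPoint S x then min a (nextPoint S x) else a)
      else nextPoint S x := by
  split_ifs with hxa hx
  · have h : (pointsAbove S x).Nonempty := by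
      by_contra h
      exact hx.ne' (nextPoint_of_not_nonempty h)
    refine nextPoint_eq ?_ (lt_min hxa hx) fun z hz hxz => ?_
    · rcases min_choice a (nextPoint S x) with h' | h' <;> rw [h']
      exacts [Finset.mem_insert_self _ _, Finset.mem_insert_of_mem (nextPoint_mem h).1]
    · rcases Finset.mem_insert.1 hz with rfl | hz
      exacts [min_le_left _ _, min_le_of_right_le (nextPoint_le hz hxz)]
  · refine nextPoint_eq (Finset.mem_insert_self _ _) hxa fun z hz hxz => ?_
    rcases Finset.mem_insert.1 hz with rfl | hz
    exacts [le_rfl, absurd (nextPoint_mem ⟨z, mem_pointsAbove.2 ⟨hz, hxz⟩⟩).2 hx]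
  · rw [nextPoint, nextPoint, pointsAbove, Finset.filter_insert, if_neg hxa, ← pointsAbove]

theorem measurable_nextPoint_image (B : Finset (Fin K)) :
    Measurable fun q : (Fin K → ℝ) × ℝ => nextPoint (B.image q.1) q.2 := by
  induction B using Finset.induction_on with
  | empty => simpa [nextPoint, pointsAbove] using measurable_snd
  | insert i B _ ih =>
    have hpoint : Measurable fun q : (Fin K → ℝ) × ℝ => q.1 i := by fun_prop
    simp_rw [Finset.image_insert, nextPoint_insert]
    exact .ite (measurableSet_lt measurable_snd hpoint)
      (.ite (measurableSet_lt measurable_snd ih) (hpoint.min ih) hpoint) ih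

theorem measurable_gaps_image (n : ℝ) (B : Finset (Fin K)) :
    Measurable fun q : (Fin K → ℝ) × ℝ => gaps n (B.image q.1) q.2 := by
  have hiter (i : ℕ) :
      Measurable fun q : (Fin K → ℝ) × ℝ => (nextPoint (B.image q.1))^[i] q.2 := by
    induction i with
    | zero => exact measurable_snd
    | succ i ih =>
      simp_rw [Function.iterate_succ_apply']
      exact (measurable_nextPoint_image B).comp (measurable_fst.prodMk ih)
  exact measurable_pi_lambda _ fun i => (((measurable_nextPoint_image B).comp
    (measurable_fst.prodMk (hiter i))).sub (hiter i)).const_mul n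

theorem measurable_sum_image {F : (Fin K → ℝ) → ℝ → ℝ} (hF : Measurable F.uncurry)
    (B : Finset (Fin K)) : Measurable fun X : Fin K → ℝ => ∑ x ∈ B.image X, F X x := by
  induction B using Finset.induction_on with
  | empty => simp
  | insert i B _ ih =>
    have hmem : MeasurableSet {X : Fin K → ℝ | X i ∈ B.image X} := by
      simp only [Finset.mem_image]
      exact Measurable.setOf <| .exists fun j => measurable_const.and <|
        (measurable_pi_apply j).eq (measurable_pi_apply i)
    have hsum (X : Fin K → ℝ) : ∑ x ∈ (insert i B).image X, F X x =
        if X i ∈ B.image X then ∑ x ∈ B.image X, F X x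
        else F X (X i) + ∑ x ∈ B.image X, F X x := by
      rw [Finset.image_insert]
      split_ifs with h
      exacts [by rw [Finset.insert_eq_of_mem h], Finset.sum_insert h]
    simp_rw [hsum]
    exact .ite hmem ih ((hF.comp (measurable_id.prodMk (measurable_pi_apply i))).add ih)

theorem measurableOnTuples_gapSum (n : ℝ) (φ : (ℕ → ℝ) →ᵇ ℝ) :
    MeasurableOnTuples (gapSum n φ) := fun _ B =>
  measurable_sum_image (F := fun X x => φ (gaps n (B.image X) x))
    (φ.continuous.measurable.comp (measurable_gaps_image n B)) B

end Measurability

section UnifCube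

instance (N : ℕ) : IsProbabilityMeasure (unifCube N) :=
  inferInstanceAs (IsProbabilityMeasure (Measure.pi fun _ : Fin N => unifInterval))

theorem measurePreserving_insertNth (n : ℕ) (i : Fin (n + 1)) :
    MeasurePreserving (fun q : ℝ × (Fin n → ℝ) => (i.insertNth q.1 q.2 : Fin (n + 1) → ℝ))
      (unifInterval.prod (unifCube n)) (unifCube (n + 1)) :=
  (measurePreserving_piFinSuccAbove (fun _ : Fin (n + 1) => unifInterval) i).symm

theorem integral_unifCube_succ {n : ℕ} (i : Fin (n + 1)) {f : (Fin (n + 1) → ℝ) → ℝ}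
    (hf : Integrable f (unifCube (n + 1))) :
    ∫ X, f X ∂unifCube (n + 1) =
      ∫ x, ∫ X, f (i.insertNth x X) ∂unifCube n ∂unifInterval := by
  have h := measurePreserving_insertNth n i
  have hf' : Integrable f ((unifInterval.prod (unifCube n)).map _) := h.map_eq.symm ▸ hf
  rw [← h.map_eq, integral_map h.aemeasurable hf'.aestronglyMeasurable]
  exact integral_prod _ (hf'.comp_measurable h.measurable)

theorem ae_mem_Icc_unifCube (N : ℕ) : ∀ᵐ X ∂unifCube N, ∀ i, X i ∈ Set.Icc (0 : ℝ) 1 := by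
  have h : ∀ᵐ x ∂unifInterval, x ∈ Set.Icc (0 : ℝ) 1 := ae_restrict_mem measurableSet_Icc
  exact ae_all_iff.2 fun i =>
    (measurePreserving_eval (fun _ : Fin N => unifInterval) i).quasiMeasurePreserving.ae h

/-- The arrival sequence given by a tuple of online points, as in the statement of the theorem. -/
noncomputable def extendZero {N : ℕ} (Y : Fin N → ℝ) : ℕ → ℝ :=
  fun i => if h : i < N then Y ⟨i, h⟩ else 0

theorem measurable_extendZero (N : ℕ) : Measurable (extendZero (N := N)) := by
  refine measurable_pi_lambda _ fun i => ?_
  unfold extendZero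
  split_ifs <;> fun_prop

theorem extendZero_insertNth_zero {N : ℕ} (y : ℝ) (Y : Fin N → ℝ) :
    extendZero ((0 : Fin (N + 1)).insertNth y Y : Fin (N + 1) → ℝ) =
      consSeq y (extendZero Y) := by
  ext i
  cases i with
  | zero => rfl
  | succ i =>
    simp only [extendZero, consSeq, Nat.add_lt_add_iff_right]
    rfl

end UnifCube

section Iterate
variable {r : ℝ} {H : Finset ℝ → ℝ} {S : Finset ℝ} {B : ℝ}

theorem isLinearMap_iterate_stepMean (r : ℝ) (m : ℕ) : IsLinearMap ℝ (stepMean r)^[m] := by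
  have h : IsLinearMap ℝ (stepMean r) := by
    constructor <;> intros <;> ext S <;>
      simp only [stepMean_eq_add_sum, Pi.add_apply, Pi.smul_apply, smul_eq_mul, mul_add,
        Finset.mul_sum, add_add_add_comm, ← Finset.sum_add_distrib] <;>
      congr! 2 <;> ring
  have hpow := (h.mk' _ ^ m).isLinear
  rw [Module.End.coe_pow] at hpow
  exact hpow

theorem abs_iterate_stepMean_le (r : ℝ) (h : ∀ S' ⊆ S, |H S'| ≤ B) (m : ℕ) :
    |(stepMean r)^[m] H S| ≤ B := by
  induction m generalizing S with
  | zero => exact h S subset_rfl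
  | succ m ih =>
    rw [Function.iterate_succ_apply', stepMean]
    simpa using norm_integral_le_of_norm_le_const (μ := unifInterval) (C := B)
      (f := fun y => (stepMean r)^[m] H (freeAfter r S y)) <|
      .of_forall fun y => ih fun S' hS' => h S' (hS'.trans (freeAfter_subset r S y))

theorem integral_comp_freeSet_image (hH : MeasurableOnTuples H) (r : ℝ) {K : ℕ} (X : Fin K → ℝ)
    (B : Finset (Fin K)) {m N : ℕ} (hm : m ≤ N) :
    ∫ Y, H (freeSet r (B.image X) (extendZero Y) m) ∂unifCube N =
      (stepMean r)^[m] H (B.image X) := by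
  induction m generalizing N B with
  | zero => simp [freeSet]
  | succ m ih =>
    obtain ⟨N, rfl⟩ : ∃ N', N = N' + 1 := ⟨N - 1, by lia⟩
    have hmeas : Measurable fun Y : Fin (N + 1) → ℝ =>
        H (freeSet r (B.image X) (extendZero Y) (m + 1)) :=
      (measurable_comp_freeSet_image hH r (m + 1) B).comp
        (measurable_const.prodMk (measurable_extendZero _))
    have hint : Integrable (fun Y => H (freeSet r (B.image X) (extendZero Y) (m + 1)))
        (unifCube (N + 1)) :=
      .of_bound hmeas.aestronglyMeasurable (∑ S' ∈ (B.image X).powerset, |H S'|) <|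
        .of_forall fun Y => Finset.single_le_sum (f := fun S' => |H S'|)
          (fun _ _ => abs_nonneg _) (Finset.mem_powerset.2 (freeSet_subset _ _ _ _))
    rw [integral_unifCube_succ 0 hint, Function.iterate_succ_apply', stepMean]
    refine integral_congr_ae (.of_forall fun y => ?_)
    simp only [extendZero_insertNth_zero, freeSet_succ_eq_tailSeq, tailSeq_consSeq, consSeq_zero,
      freeAfter_image]
    exact ih _ (by lia)

end Iterate

section MeanGapSum
variable {c : ℝ} {N : ℕ}

theorem abs_gapSum_le (n : ℝ) (φ : (ℕ → ℝ) →ᵇ ℝ) (S : Finset ℝ) :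
    |gapSum n φ S| ≤ S.card * ‖φ‖ := by
  calc |gapSum n φ S| ≤ ∑ x ∈ S, |φ (gaps n S x)| := Finset.abs_sum_le_sum_abs _ _
    _ ≤ S.card • ‖φ‖ := Finset.sum_le_card_nsmul _ _ _ fun _ _ => φ.norm_coe_le_norm _
    _ = S.card * ‖φ‖ := nsmul_eq_mul _ _

/-- The expectation, over `N` uniform offline points and `m` uniform arrivals, of the sum of `φ`
over the rescaled gap sequences of the free points, divided by `N`. -/
noncomputable def meanGapSum (c : ℝ) (N : ℕ) (φ : (ℕ → ℝ) →ᵇ ℝ) (m : ℕ) : ℝ :=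
  (N : ℝ)⁻¹ *
    ∫ X, (stepMean (c / N))^[m] (gapSum N φ) (Finset.univ.image X) ∂unifCube N

theorem abs_iterate_stepMean_gapSum_image_le (r n : ℝ) (φ : (ℕ → ℝ) →ᵇ ℝ) (m : ℕ)
    (X : Fin N → ℝ) :
    |(stepMean r)^[m] (gapSum n φ) (Finset.univ.image X)| ≤ N * ‖φ‖ := by
  refine abs_iterate_stepMean_le r (fun S hS => (abs_gapSum_le n φ S).trans ?_) m
  gcongr
  simpa using (Finset.card_le_card hS).trans Finset.card_image_le

theorem integrable_iterate_stepMean_gapSum_image (r n : ℝ) (φ : (ℕ → ℝ) →ᵇ ℝ) (m : ℕ) :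
    Integrable (fun X => (stepMean r)^[m] (gapSum n φ) (Finset.univ.image X)) (unifCube N) :=
  .of_bound (((measurableOnTuples_gapSum n φ).iterate_stepMean r m) N _).aestronglyMeasurable
    (N * ‖φ‖) (.of_forall fun X => abs_iterate_stepMean_gapSum_image_le r n φ m X)

theorem abs_inv_mul_integral_unifCube_le {F : (Fin N → ℝ) → ℝ} {b : ℝ} (hN : 0 < N)
    (h : ∀ᵐ X ∂unifCube N, |F X| ≤ N * b) : |(N : ℝ)⁻¹ * ∫ X, F X ∂unifCube N| ≤ b := by
  have hN' : (0 : ℝ) < N := mod_cast hN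
  rw [abs_mul, abs_of_pos (inv_pos.2 hN'), inv_mul_le_iff₀ hN']
  simpa using norm_integral_le_of_norm_le_const (f := F) h

theorem abs_meanGapSum_le (c : ℝ) (hN : 0 < N) (φ : (ℕ → ℝ) →ᵇ ℝ) (m : ℕ) :
    |meanGapSum c N φ m| ≤ ‖φ‖ :=
  abs_inv_mul_integral_unifCube_le hN <|
    .of_forall fun X => abs_iterate_stepMean_gapSum_image_le _ _ φ m X

theorem abs_iterate_stepMean_gapSum_succ_sub_sub_le {n : ℝ} (hc : 0 < c) (hn : 0 < n)
    {S : Finset ℝ} (h01 : ∀ x ∈ S, x ∈ Set.Icc (0 : ℝ) 1) {k : ℕ} {φ : (ℕ → ℝ) →ᵇ ℝ}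
    (hφ : DependsOn φ (Set.Iio k)) (m : ℕ) :
    |(stepMean (c / n))^[m + 1] (gapSum n φ) S - (stepMean (c / n))^[m] (gapSum n φ) S -
      n⁻¹ * (stepMean (c / n))^[m] (gapSum n (generator c k φ)) S| ≤
      n⁻¹ * (8 * (k * (k + 1) + 1) * c * ‖φ‖) := by
  have hlin := isLinearMap_iterate_stepMean (c / n) m
  have hone : ∀ S' ⊆ S, |(stepMean (c / n) (gapSum n φ) - gapSum n φ -
      n⁻¹ • gapSum n (generator c k φ)) S'| ≤ n⁻¹ * (8 * (k * (k + 1) + 1) * c * ‖φ‖) := by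
    intro S' hS'
    have hscale : (stepMean (c / n) (gapSum n φ) - gapSum n φ -
        n⁻¹ • gapSum n (generator c k φ)) S' =
        n⁻¹ * (n * (stepMean (c / n) (gapSum n φ) S' - gapSum n φ S') -
          gapSum n (generator c k φ) S') := by
      simp only [Pi.sub_apply, Pi.smul_apply, smul_eq_mul]
      field_simp
    rw [hscale, abs_mul, abs_of_pos (inv_pos.2 hn)]
    gcongr
    exact abs_mul_stepMean_gapSum_sub_sub_le hc hn (fun x hx => h01 x (hS' hx)) hφ
  simpa only [hlin.map_sub, hlin.map_smul, Pi.sub_apply, Pi.smul_apply, smul_eq_mul,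
    Function.iterate_succ_apply] using abs_iterate_stepMean_le (c / n) hone m

theorem abs_meanGapSum_succ_sub_sub_le (hc : 0 < c) (hN : 0 < N) {k : ℕ} {φ : (ℕ → ℝ) →ᵇ ℝ}
    (hφ : DependsOn φ (Set.Iio k)) (m : ℕ) :
    |meanGapSum c N φ (m + 1) - meanGapSum c N φ m -
      (N : ℝ)⁻¹ * meanGapSum c N (generator c k φ) m| ≤
      8 * (k * (k + 1) + 1) * c * ‖φ‖ * (N : ℝ)⁻¹ ^ 2 := by
  have hN' : (0 : ℝ) < N := mod_cast hN
  have hint (ψ : (ℕ → ℝ) →ᵇ ℝ) (j : ℕ) :=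
    integrable_iterate_stepMean_gapSum_image (N := N) (c / N) N ψ j
  simp_rw [meanGapSum, ← mul_sub, ← integral_const_mul]
  rw [← integral_sub' (hint _ _) (hint _ _),
    ← integral_sub (.sub (hint _ _) (hint _ _)) ((hint _ _).const_mul _)]
  refine abs_inv_mul_integral_unifCube_le hN ?_
  filter_upwards [ae_mem_Icc_unifCube N] with X hX
  refine (abs_iterate_stepMean_gapSum_succ_sub_sub_le hc hN'
    (Finset.forall_mem_image.2 fun i _ => hX i) hφ m).trans_eq ?_
  field_simp

end MeanGapSum

/-! ### Gaps of uniform points -/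

section AlmostSure
variable {n : ℕ}

theorem ae_ne_unifCube {i j : Fin n} (hij : i ≠ j) : ∀ᵐ X ∂unifCube n, X i ≠ X j := by
  have hrestrict : unifCube n =
      (volume : Measure (Fin n → ℝ)).restrict (Set.univ.pi fun _ => Set.Icc (0 : ℝ) 1) := by
    rw [volume_pi, Measure.restrict_pi_pi]
    rfl
  let L : (Fin n → ℝ) →ₗ[ℝ] ℝ := LinearMap.proj (R := ℝ) (φ := fun _ : Fin n => ℝ) i -
    LinearMap.proj (R := ℝ) (φ := fun _ : Fin n => ℝ) j
  have hL : LinearMap.ker L ≠ ⊤ := fun h => by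
    simpa [L, Pi.single_apply, hij.symm] using Submodule.eq_top_iff'.1 h (Pi.single i 1)
  rw [hrestrict]
  refine ae_restrict_of_ae (ae_iff.2 ?_)
  convert Measure.addHaar_submodule (volume : Measure (Fin n → ℝ)) _ hL using 2
  ext X
  simp [L, sub_eq_zero]

theorem ae_injective_unifCube (n : ℕ) : ∀ᵐ X ∂unifCube n, Function.Injective X := by
  have h : ∀ᵐ X ∂unifCube n, ∀ i j : Fin n, i ≠ j → X i ≠ X j := by
    simp_rw [ae_all_iff]
    exact fun i j hij => ae_ne_unifCube hij
  filter_upwards [h] with X hX i j hij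
  exact not_imp_not.1 (hX i j) hij

theorem measureReal_unifCube_univ_pi (n : ℕ) (s : Set ℝ) :
    (unifCube n).real (Set.univ.pi fun _ => s) = unifInterval.real s ^ n := by
  have h : unifCube n (Set.univ.pi fun _ => s) = unifInterval s ^ n := 
    (Measure.pi_pi (fun _ : Fin n => unifInterval) fun _ => s).trans (by simp)
  rw [Measure.real, h, ENNReal.toReal_pow, Measure.real]

theorem integral_indicator_univ_pi_unifCube {s : Set ℝ} (hs : MeasurableSet s) (b : ℝ) :
    ∫ X, (Set.univ.pi fun _ : Fin n => s).indicator (fun _ => b) X ∂unifCube n =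
      unifInterval.real s ^ n * b := by
  rw [integral_indicator_const _ (.univ_pi fun _ => hs), measureReal_unifCube_univ_pi,
    smul_eq_mul]

theorem unifInterval_real_compl_Ioc {w x : ℝ} (hw : 0 ≤ w) (hwx : w ≤ x) (hx : x ≤ 1) :
    unifInterval.real (Set.Ioc w x)ᶜ = 1 - (x - w) := by
  have hsub : Set.Ioc w x ⊆ Set.Icc 0 1 := fun y hy => ⟨hw.trans hy.1.le, hy.2.trans hx⟩
  rw [probReal_compl_eq_one_sub measurableSet_Ioc, unifInterval,
    measureReal_restrict_apply measurableSet_Ioc, Set.inter_eq_left.2 hsub,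
    Real.volume_real_Ioc_of_le hwx]

theorem unifInterval_real_Iic {w : ℝ} (hw : 0 ≤ w) (hw1 : w ≤ 1) :
    unifInterval.real (Set.Iic w) = w := by
  have hset : Set.Iic w ∩ Set.Icc 0 1 = Set.Icc 0 w := by
    ext y
    simp only [Set.mem_inter_iff, Set.mem_Iic, Set.mem_Icc]
    exact ⟨fun h => ⟨h.2.1, h.1⟩, fun h => ⟨h.2, h.1, h.2.trans hw1⟩⟩
  rw [unifInterval, measureReal_restrict_apply measurableSet_Iic, hset,
    Real.volume_real_Icc_of_le hw, sub_zero]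

theorem integrable_comp_removeNth {F : ℝ → (Fin n → ℝ) → ℝ} {b : ℝ} (hF : Measurable F.uncurry)
    (hb : ∀ y X, |F y X| ≤ b) (i : Fin (n + 1)) :
    Integrable (fun X : Fin (n + 1) → ℝ => F (X i) (i.removeNth X)) (unifCube (n + 1)) := by
  have hpair : Measurable fun X : Fin (n + 1) → ℝ => (X i, i.removeNth X) :=
    (measurable_pi_apply i).prodMk (measurable_pi_iff.2 fun _ => measurable_pi_apply _)
  exact .of_bound (hF.comp hpair).aestronglyMeasurable b (.of_forall fun X => hb _ _)

theorem integral_sum_removeNth {F : ℝ → (Fin n → ℝ) → ℝ} {b : ℝ} (hF : Measurable F.uncurry)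
    (hb : ∀ y X, |F y X| ≤ b) :
    ∫ X, ∑ i : Fin (n + 1), F (X i) (i.removeNth X) ∂unifCube (n + 1) =
      (n + 1) * ∫ y, ∫ X, F y X ∂unifCube n ∂unifInterval := by
  have hint := integrable_comp_removeNth hF hb
  rw [integral_finsetSum _ fun i _ => hint i]
  have hterm (i : Fin (n + 1)) : ∫ X, F (X i) (i.removeNth X) ∂unifCube (n + 1) =
      ∫ y, ∫ X, F y X ∂unifCube n ∂unifInterval := by
    simp_rw [integral_unifCube_succ i (hint i), Fin.insertNth_apply_same,
      Fin.removeNth_insertNth]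
  simp [hterm]

end AlmostSure

section VoidMoment
variable {n : ℕ} {ν w x : ℝ}

open Classical in
/-- The value of `φ` on the gap sequence at `x` of a configuration, if the configuration has no
point in `(w, x]`, and `0` otherwise. -/
noncomputable def voidTerm (ν w x : ℝ) (φ : (ℕ → ℝ) → ℝ) (X : Fin n → ℝ) : ℝ :=
  if ∀ i, X i ∉ Set.Ioc w x then φ (gaps ν (Finset.univ.image X) x) else 0

/-- The contribution to `voidTerm ν w x φ` of the configurations whose first point above `x` is
`y` and whose other points are `X`. -/
noncomputable def nextVoidTerm (ν w x : ℝ) (φ : (ℕ → ℝ) → ℝ) (y : ℝ) (X : Fin n → ℝ) : ℝ :=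
  if x < y then voidTerm ν w y (fun g => φ (consSeq (ν * (y - x)) g)) X else 0

/-- The mean of `voidTerm ν w x φ` over `n` uniform points: the joint law of the gaps to the right
of `x` on the event that `(w, x]` is void. -/
noncomputable def voidMoment (n : ℕ) (ν w x : ℝ) (φ : (ℕ → ℝ) → ℝ) : ℝ :=
  ∫ X : Fin n → ℝ, voidTerm ν w x φ X ∂unifCube n

theorem measurable_voidTerm {α : Type*} [MeasurableSpace α] {w y : α → ℝ} {X : α → Fin n → ℝ}
    {ψ : α → (ℕ → ℝ) → ℝ} (hw : Measurable w) (hy : Measurable y) (hX : Measurable X)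
    (hψ : Measurable ψ.uncurry) : Measurable fun a => voidTerm ν (w a) (y a) (ψ a) (X a) := by
  have hXi (i : Fin n) : Measurable fun a => X a i := (measurable_pi_apply i).comp hX
  refine Measurable.ite (Measurable.setOf <| .forall fun i =>
    (((hw.lt (hXi i)).and ((hXi i).le' hy)).not)) ?_ measurable_const
  exact hψ.comp (measurable_id.prodMk
    ((measurable_gaps_image ν Finset.univ).comp (hX.prodMk hy)))

theorem measurable_nextVoidTerm {φ : (ℕ → ℝ) → ℝ} (hφ : Measurable φ) :
    Measurable (nextVoidTerm (n := n) ν w x φ).uncurry := by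
  have hpair : Measurable fun q : (ℝ × (Fin n → ℝ)) × (ℕ → ℝ) => (ν * (q.1.1 - x), q.2) := by
    fun_prop
  have hcons : Measurable fun q : (ℝ × (Fin n → ℝ)) × (ℕ → ℝ) =>
      φ (consSeq (ν * (q.1.1 - x)) q.2) := hφ.comp (measurable_consSeq.comp hpair)
  exact .ite (measurableSet_lt measurable_const measurable_fst)
    (measurable_voidTerm measurable_const measurable_fst measurable_snd hcons) measurable_const

theorem abs_voidTerm_le {φ : (ℕ → ℝ) → ℝ} {b : ℝ} (hb : ∀ g, |φ g| ≤ b) (X : Fin n → ℝ) :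
    |voidTerm ν w x φ X| ≤ (Set.univ.pi fun _ => (Set.Ioc w x)ᶜ).indicator (fun _ => b) X := by
  classical
  rw [voidTerm, Set.indicator_apply]
  simp only [Set.mem_univ_pi, Set.mem_compl_iff]
  split_ifs
  exacts [hb _, abs_zero.le]

theorem abs_voidTerm_le_const {φ : (ℕ → ℝ) → ℝ} {b : ℝ} (hb : ∀ g, |φ g| ≤ b) (X : Fin n → ℝ) :
    |voidTerm ν w x φ X| ≤ b :=
  (abs_voidTerm_le hb X).trans <|
    Set.indicator_le_self' (fun _ _ => (abs_nonneg _).trans (hb 0)) X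

theorem abs_nextVoidTerm_le {φ : (ℕ → ℝ) → ℝ} {b : ℝ} (hb : ∀ g, |φ g| ≤ b) (y : ℝ)
    (X : Fin n → ℝ) : |nextVoidTerm ν w x φ y X| ≤ b := by
  rw [nextVoidTerm]
  split_ifs
  exacts [abs_voidTerm_le_const (fun _ => hb _) X, abs_zero.trans_le ((abs_nonneg _).trans (hb 0))]

theorem abs_voidMoment_le (hw : 0 ≤ w) (hwx : w ≤ x) (hx : x ≤ 1) {φ : (ℕ → ℝ) → ℝ} {b : ℝ}
    (hb : ∀ g, |φ g| ≤ b) : |voidMoment n ν w x φ| ≤ (1 - (x - w)) ^ n * b := by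
  rw [← unifInterval_real_compl_Ioc hw hwx hx,
    ← integral_indicator_univ_pi_unifCube measurableSet_Ioc.compl]
  exact norm_integral_le_of_norm_le (f := voidTerm (n := n) ν w x φ)
    ((integrable_const b).indicator (.univ_pi fun _ => measurableSet_Ioc.compl))
    (.of_forall (abs_voidTerm_le hb))

theorem voidMoment_const (hw : 0 ≤ w) (hwx : w ≤ x) (hx : x ≤ 1) (a : ℝ) :
    voidMoment n ν w x (fun _ => a) = (1 - (x - w)) ^ n * a := by
  classical
  rw [← unifInterval_real_compl_Ioc hw hwx hx,
    ← integral_indicator_univ_pi_unifCube measurableSet_Ioc.compl, voidMoment]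
  simp only [voidTerm, Set.indicator_apply, Set.mem_univ_pi, Set.mem_compl_iff]

theorem pointsAbove_image_removeNth (X : Fin (n + 1) → ℝ) (i : Fin (n + 1)) :
    pointsAbove (Finset.univ.image (i.removeNth X)) (X i) =
      pointsAbove (Finset.univ.image X) (X i) := by
  ext y
  simp only [mem_pointsAbove, Finset.mem_image, Finset.mem_univ, true_and, Fin.removeNth]
  constructor
  · rintro ⟨⟨j, rfl⟩, h⟩
    exact ⟨⟨_, rfl⟩, h⟩
  · rintro ⟨⟨j, rfl⟩, h⟩
    have hji : j ≠ i := by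
      rintro rfl
      exact h.false
    obtain ⟨l, rfl⟩ := Fin.exists_succAbove_eq hji
    exact ⟨⟨l, rfl⟩, h⟩

theorem voidTerm_eq_nextVoidTerm (φ : (ℕ → ℝ) → ℝ) {X : Fin (n + 1) → ℝ}
    (hX : Function.Injective X) {i : Fin (n + 1)} (hi : x < X i) (hmin : ∀ j, x < X j → X i ≤ X j) :
    voidTerm ν w x φ X = nextVoidTerm ν w x φ (X i) (i.removeNth X) := by
  have hvoid : (∀ j, X j ∉ Set.Ioc w x) ↔ ∀ j, i.removeNth X j ∉ Set.Ioc w (X i) := by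
    refine ⟨fun h j hj => ?_, fun h j hj => ?_⟩
    · have hx : x < X (i.succAbove j) := not_le.1 fun hle => h _ ⟨hj.1, hle⟩
      exact Fin.succAbove_ne i j (hX (hj.2.antisymm (hmin _ hx)))
    · have hji : j ≠ i := by
        rintro rfl
        exact hj.2.not_gt hi
      obtain ⟨l, rfl⟩ := Fin.exists_succAbove_eq hji
      exact h l ⟨hj.1, hj.2.trans hi.le⟩
  have hnext : nextPoint (Finset.univ.image X) x = X i :=
    nextPoint_eq (Finset.mem_image_of_mem _ (Finset.mem_univ i)) hi <|
      Finset.forall_mem_image.2 fun j _ => hmin j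
  rw [nextVoidTerm, if_pos hi, voidTerm, voidTerm, gaps_eq_consSeq ν (Finset.univ.image X) x, hnext,
    gaps_congr (pointsAbove_image_removeNth X i)]
  exact if_congr hvoid rfl rfl

theorem nextVoidTerm_eq_zero (hwx : w ≤ x) (φ : (ℕ → ℝ) → ℝ) {X : Fin (n + 1) → ℝ}
    {i j : Fin (n + 1)} (hij : i ≠ j) (hi : x < X i) (hle : X i ≤ X j) :
    nextVoidTerm ν w x φ (X j) (j.removeNth X) = 0 := by
  obtain ⟨l, hl⟩ := Fin.exists_succAbove_eq hij
  rw [nextVoidTerm, if_pos (hi.trans_le hle), voidTerm, if_neg]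
  exact fun h => h l (by simpa only [Fin.removeNth, hl] using ⟨hwx.trans_lt hi, hle⟩)

open Classical in
theorem voidTerm_eq_add_sum_nextVoidTerm (hwx : w ≤ x) (φ : (ℕ → ℝ) → ℝ) {X : Fin (n + 1) → ℝ}
    (hX : Function.Injective X) :
    voidTerm ν w x φ X = (if ∀ i, X i ≤ w then φ (gaps ν (Finset.univ.image X) x) else 0) +
      ∑ i, nextVoidTerm ν w x φ (X i) (i.removeNth X) := by
  by_cases hne : ∃ i, x < X i
  · obtain ⟨i, hi, hmin⟩ := ({i | x < X i} : Finset (Fin (n + 1))).exists_min_image X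
      (hne.imp fun i hi => by simpa using hi)
    simp only [Finset.mem_filter, Finset.mem_univ, true_and] at hi hmin
    rw [if_neg fun h => ((h i).trans hwx).not_gt hi, zero_add,
      voidTerm_eq_nextVoidTerm φ hX hi hmin]
    refine Eq.symm (Finset.sum_eq_single i (fun j _ hji => ?_)
      fun h => absurd (Finset.mem_univ i) h)
    by_cases hj : x < X j
    · exact nextVoidTerm_eq_zero hwx φ hji.symm hi (hmin j hj)
    · exact if_neg hj
  · push Not at hne
    have hzero (i : Fin (n + 1)) : nextVoidTerm ν w x φ (X i) (i.removeNth X) = 0 :=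
      if_neg (hne i).not_gt
    simp only [hzero, Finset.sum_const_zero, add_zero, voidTerm]
    exact if_congr (forall_congr' fun i => by simp [hne i]) rfl rfl

theorem integral_nextVoidTerm (hx0 : 0 ≤ x) (hx : x ≤ 1) (φ : (ℕ → ℝ) → ℝ) :
    ∫ y, ∫ X : Fin n → ℝ, nextVoidTerm ν w x φ y X ∂unifCube n ∂unifInterval =
      ∫ y in x..1, voidMoment n ν w y fun g => φ (consSeq (ν * (y - x)) g) := by
  have hind (y : ℝ) : ∫ X : Fin n → ℝ, nextVoidTerm ν w x φ y X ∂unifCube n =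
      (Set.Ioi x).indicator (fun y => voidMoment n ν w y fun g => φ (consSeq (ν * (y - x)) g))
        y := by
    rw [Set.indicator_apply]
    simp only [nextVoidTerm, Set.mem_Ioi]
    split_ifs
    exacts [rfl, integral_zero _ _]
  have hset : Set.Ioi x ∩ Set.Icc 0 1 = Set.Ioc x 1 := by
    ext y
    simp only [Set.mem_inter_iff, Set.mem_Ioi, Set.mem_Icc, Set.mem_Ioc]
    exact and_congr_right fun h => and_iff_right (hx0.trans h.le)
  simp_rw [hind]
  rw [integral_indicator measurableSet_Ioi, unifInterval,
    Measure.restrict_restrict measurableSet_Ioi, hset, intervalIntegral.integral_of_le hx]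

theorem integrable_voidTerm {φ : (ℕ → ℝ) → ℝ} {b : ℝ} (hφ : Measurable φ)
    (hb : ∀ g, |φ g| ≤ b) : Integrable (voidTerm ν w x φ) (unifCube n) :=
  .of_bound (measurable_voidTerm (ψ := fun _ => φ) measurable_const measurable_const measurable_id
    (hφ.comp measurable_snd)).aestronglyMeasurable b (.of_forall (abs_voidTerm_le_const hb))

theorem abs_voidMoment_succ_sub_le (hw : 0 ≤ w) (hwx : w ≤ x) (hx : x ≤ 1) {φ : (ℕ → ℝ) → ℝ}
    {b : ℝ} (hφ : Measurable φ) (hb : ∀ g, |φ g| ≤ b) :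
    |voidMoment (n + 1) ν w x φ - (n + 1) * ∫ y in x..1,
      voidMoment n ν w y fun g => φ (consSeq (ν * (y - x)) g)| ≤ w ^ (n + 1) * b := by
  have hsum : Integrable (fun X : Fin (n + 1) → ℝ =>
      ∑ i, nextVoidTerm ν w x φ (X i) (i.removeNth X)) (unifCube (n + 1)) :=
    integrable_finsetSum _ fun i _ =>
      integrable_comp_removeNth (measurable_nextVoidTerm hφ) (abs_nextVoidTerm_le hb) i
  rw [← integral_nextVoidTerm (hw.trans hwx) hx,
    ← integral_sum_removeNth (measurable_nextVoidTerm hφ) (abs_nextVoidTerm_le hb), voidMoment,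
    ← integral_sub (integrable_voidTerm hφ hb) hsum]
  have hind : Integrable ((Set.univ.pi fun _ : Fin (n + 1) => Set.Iic w).indicator fun _ => b)
      (unifCube (n + 1)) := (integrable_const b).indicator (.univ_pi fun _ => measurableSet_Iic)
  refine (norm_integral_le_of_norm_le (f := fun X => voidTerm ν w x φ X -
    ∑ i, nextVoidTerm ν w x φ (X i) (i.removeNth X)) hind ?_).trans_eq ?_
  · filter_upwards [ae_injective_unifCube (n + 1)] with X hX
    classical
    rw [voidTerm_eq_add_sum_nextVoidTerm hwx φ hX, add_sub_cancel_right, Set.indicator_apply]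
    simp only [Set.mem_univ_pi, Set.mem_Iic]
    split_ifs
    exacts [hb _, norm_zero.le]
  · rw [integral_indicator_univ_pi_unifCube measurableSet_Iic,
      unifInterval_real_Iic hw (hwx.trans hx)]

theorem measurable_voidMoment {α : Type*} [MeasurableSpace α] {y : α → ℝ}
    {ψ : α → (ℕ → ℝ) → ℝ} (hy : Measurable y) (hψ : Measurable ψ.uncurry) :
    Measurable fun a => voidMoment n ν w (y a) (ψ a) := by
  have hψ' : Measurable fun q : (α × (Fin n → ℝ)) × (ℕ → ℝ) => ψ q.1.1 q.2 :=
    hψ.comp ((measurable_fst.comp measurable_fst).prodMk measurable_snd)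
  exact (measurable_voidTerm measurable_const (hy.comp measurable_fst) measurable_snd
    hψ').stronglyMeasurable.integral_prod_right.measurable

theorem abs_voidMoment_le_exp (hw : 0 ≤ w) (hwx : w ≤ x) (hx : x ≤ 1) {φ : (ℕ → ℝ) → ℝ} {b : ℝ}
    (hb : ∀ g, |φ g| ≤ b) : |voidMoment n ν w x φ| ≤ Real.exp (-(n * (x - w))) * b := by
  refine (abs_voidMoment_le hw hwx hx hb).trans ?_
  have hb0 : 0 ≤ b := (abs_nonneg _).trans (hb 0)
  have h0 : 0 ≤ 1 - (x - w) := by linarith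
  rw [← mul_neg, Real.exp_nat_mul]
  gcongr
  exact Real.one_sub_le_exp_neg _

theorem intervalIntegral_voidMoment_consSeq (hν : ν ≠ 0) (φ : (ℕ → ℝ) → ℝ) :
    ∫ y in x..1, voidMoment n ν w y (fun g => φ (consSeq (ν * (y - x)) g)) =
      ν⁻¹ * ∫ z in 0..ν * (1 - x), voidMoment n ν w (x + z / ν) fun g => φ (consSeq z g) := by
  have h := intervalIntegral.integral_comp_add_div (a := 0) (b := ν * (1 - x))
    (fun y => voidMoment n ν w y fun g => φ (consSeq (ν * (y - x)) g)) hν x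
  simp only [add_sub_cancel_left, mul_div_cancel₀ _ hν, mul_div_cancel_left₀ _ hν, zero_div,
    add_zero, add_sub_cancel, smul_eq_mul] at h
  rw [h, inv_mul_cancel_left₀ hν]

end VoidMoment

section Limit
variable {w z : ℝ}

theorem eventually_add_div_lt_one (hw1 : w < 1) (z : ℝ) :
    ∀ᶠ N : ℕ in .atTop, w + z / N < 1 := by
  have h : Filter.Tendsto (fun N : ℕ => w + z / N) .atTop (nhds (w + 0)) :=
    tendsto_const_nhds.add (tendsto_const_div_atTop_nhds_zero_nat z)
  exact h.eventually_lt_const (by simpa using hw1)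

theorem abs_voidMoment_sub_le_exp_half {N j : ℕ} (hN : 2 * j ≤ N) (hN0 : 0 < N) (hw : 0 ≤ w)
    (hz : 0 ≤ z) (hwz : w + z / N ≤ 1) {φ : (ℕ → ℝ) → ℝ} {b : ℝ} (hb : ∀ g, |φ g| ≤ b) :
    |voidMoment (N - j) N w (w + z / N) φ| ≤ Real.exp (-(1 / 2) * z) * b := by
  have hN' : (N : ℝ) ≠ 0 := mod_cast hN0.ne'
  have hb0 : 0 ≤ b := (abs_nonneg _).trans (hb 0)
  have hhalf : (N : ℝ) / 2 ≤ (N - j : ℕ) := by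
    rw [div_le_iff₀ two_pos]
    exact_mod_cast (by lia : N ≤ (N - j) * 2)
  refine (abs_voidMoment_le_exp hw (le_add_of_nonneg_right (by positivity)) hwz hb).trans ?_
  gcongr
  rw [add_sub_cancel_left, neg_mul, neg_le_neg_iff]
  calc 1 / 2 * z = N / 2 * (z / N) := by field_simp
    _ ≤ (N - j : ℕ) * (z / N) := by gcongr

theorem tendsto_pow_one_sub_div (j : ℕ) (z : ℝ) :
    Filter.Tendsto (fun N : ℕ => (1 - z / N) ^ (N - j)) .atTop (nhds (Real.exp (-z))) := by
  have hbase : Filter.Tendsto (fun N : ℕ => 1 - z / N) .atTop (nhds 1) := by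
    simpa using (tendsto_const_div_atTop_nhds_zero_nat z).const_sub 1
  have hpow : Filter.Tendsto (fun N : ℕ => (1 - z / N) ^ N) .atTop (nhds (Real.exp (-z))) := by
    simpa [sub_eq_add_neg, neg_div] using Real.tendsto_one_add_div_pow_exp (-z)
  have h := hpow.div (hbase.pow j) (by simp)
  rw [one_pow, div_one] at h
  refine h.congr' ?_
  filter_upwards [hbase.eventually_ne one_ne_zero, Filter.eventually_ge_atTop j] with N hN hj
  rw [Pi.div_apply, pow_sub₀ _ hN hj, div_eq_mul_inv]

theorem tendsto_voidMoment_const (hw : 0 ≤ w) (hw1 : w < 1) (hz : 0 ≤ z) (j : ℕ) (a : ℝ) :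
    Filter.Tendsto (fun N : ℕ => voidMoment (N - j) N w (w + z / N) fun _ => a) .atTop
      (nhds (Real.exp (-z) * a)) := by
  refine ((tendsto_pow_one_sub_div j z).mul_const a).congr' ?_
  filter_upwards [eventually_add_div_lt_one hw1 z] with N hN
  rw [voidMoment_const hw (le_add_of_nonneg_right (by positivity)) hN.le, add_sub_cancel_left]

theorem mem_Iic_mul_one_sub_iff {n x : ℝ} (hn : 0 < n) :
    x ∈ Set.Iic (n * (1 - (w + z / n))) ↔ w + (z + x) / n ≤ 1 := by
  rw [Set.mem_Iic, ← div_le_iff₀' hn, add_div, le_sub_iff_add_le', add_assoc]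

theorem abs_indicator_voidMoment_le {N j : ℕ} (hN : 2 * j ≤ N) (hN0 : 0 < N) (hw : 0 ≤ w)
    (hz : 0 ≤ z) {x : ℝ} (hx : 0 ≤ x) (φ : (ℕ → ℝ) →ᵇ ℝ) :
    |(Set.Iic (N * (1 - (w + z / N)))).indicator
      (fun x => voidMoment (N - j) N w (w + (z + x) / N) (φ.compContinuous (consMap x))) x| ≤
      Real.exp (-(1 / 2) * x) * ‖φ‖ := by
  by_cases hxN : x ∈ Set.Iic (N * (1 - (w + z / N)))
  · rw [Set.indicator_of_mem hxN]
    refine (abs_voidMoment_sub_le_exp_half hN hN0 hw (by positivity)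
      ((mem_Iic_mul_one_sub_iff (Nat.cast_pos.2 hN0)).1 hxN)
      fun g => φ.norm_coe_le_norm _).trans ?_
    exact mul_le_mul_of_nonneg_right (Real.exp_le_exp.2 (by linarith)) (norm_nonneg _)
  · rw [Set.indicator_of_notMem hxN, abs_zero]
    positivity

end Limit

end ClosestMatching

namespace SolvesMaxMatchingPDE
open ClosestMatching
open scoped BoundedContinuousFunction
variable {c w z : ℝ} {f : ℝ → ℝ → ℝ}

theorem gapMoment_zero_eq (hf : SolvesMaxMatchingPDE c f)
    (φ : (ℕ → ℝ) →ᵇ ℝ) :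
    gapMoment f 0 φ =
      ∫ x in Set.Ioi 0, Real.exp (-x) * gapMoment f 0 (φ.compContinuous (consMap x)) := by
  rw [hf.gapMoment_eq_integral_consMap (Set.left_mem_Icc.2 zero_le_one),
    ← integral_Ici_eq_integral_Ioi, ← integral_indicator measurableSet_Ici]
  congr 1 with x
  by_cases hx : 0 ≤ x
  · rw [Set.indicator_of_mem (Set.mem_Ici.2 hx), hf.gapDensity_zero hx]
  · rw [Set.indicator_of_notMem (s := Set.Ici 0) hx, hf.gapDensity_of_neg (not_le.1 hx), zero_mul]

theorem gapMoment_zero_const (hf : SolvesMaxMatchingPDE c f) (a : ℝ) :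
    gapMoment f 0 (BoundedContinuousFunction.const _ a) = a := by
  have := hf.isProbabilityMeasure_gapSeqLaw (Set.left_mem_Icc.2 zero_le_one)
  rw [gapMoment, hf.freeMass_zero]
  simp

theorem tendsto_integral_voidMoment (hf : SolvesMaxMatchingPDE c f)
    (hw : 0 ≤ w) (hw1 : w < 1) (hz : 0 ≤ z) (j : ℕ) {φ : (ℕ → ℝ) →ᵇ ℝ}
    (h : ∀ x, 0 ≤ x → Filter.Tendsto
      (fun N : ℕ => voidMoment (N - j) N w (w + (z + x) / N) (φ.compContinuous (consMap x))) .atTop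
      (nhds (Real.exp (-(z + x)) * gapMoment f 0 (φ.compContinuous (consMap x))))) :
    Filter.Tendsto (fun N : ℕ => ∫ x in 0..N * (1 - (w + z / N)),
      voidMoment (N - j) N w (w + z / N + x / N) (φ.compContinuous (consMap x))) .atTop
      (nhds (Real.exp (-z) * gapMoment f 0 φ)) := by
  let F (N : ℕ) (x : ℝ) : ℝ :=
    voidMoment (N - j) N w (w + (z + x) / N) (φ.compContinuous (consMap x))
  have hF (N : ℕ) : Measurable (F N) :=
    measurable_voidMoment (by fun_prop) (φ.continuous.measurable.comp measurable_consSeq)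
  have hlim : Filter.Tendsto (fun N : ℕ => ∫ x in Set.Ioi 0,
      (Set.Iic (N * (1 - (w + z / N)))).indicator (F N) x) .atTop
      (nhds (∫ x in Set.Ioi 0,
        Real.exp (-(z + x)) * gapMoment f 0 (φ.compContinuous (consMap x)))) := by
    refine tendsto_integral_filter_of_dominated_convergence
      (fun x => Real.exp (-(1 / 2) * x) * ‖φ‖)
      (.of_forall fun N => ((hF N).indicator measurableSet_Iic).aestronglyMeasurable) ?_
      ((integrableOn_exp_mul_Ioi (by norm_num) 0).mul_const _) ?_
    · filter_upwards [Filter.eventually_ge_atTop (2 * j), Filter.eventually_gt_atTop 0]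
        with N hN hN0
      filter_upwards [ae_restrict_mem measurableSet_Ioi] with x (hx : 0 < x)
      exact abs_indicator_voidMoment_le hN hN0 hw hz hx.le φ
    · filter_upwards [ae_restrict_mem measurableSet_Ioi] with x (hx : 0 < x)
      refine (h x hx.le).congr' ?_
      filter_upwards [eventually_add_div_lt_one hw1 (z + x), Filter.eventually_gt_atTop 0]
        with N hN hN0
      rw [Set.indicator_of_mem ((mem_Iic_mul_one_sub_iff (Nat.cast_pos.2 hN0)).2 hN.le)]
  simp only [neg_add, Real.exp_add, mul_assoc, integral_const_mul, ← hf.gapMoment_zero_eq] at hlim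
  refine hlim.congr' ?_
  filter_upwards [eventually_add_div_lt_one hw1 z] with N hN
  rw [setIntegral_indicator measurableSet_Iic, Set.Ioi_inter_Iic,
    intervalIntegral.integral_of_le (mul_nonneg N.cast_nonneg (sub_nonneg.2 hN.le))]
  simp only [F, add_div, add_assoc]

theorem tendsto_voidMoment (hf : SolvesMaxMatchingPDE c f) (hw : 0 ≤ w)
    (hw1 : w < 1) {k : ℕ} {φ : (ℕ → ℝ) →ᵇ ℝ} (hφ : DependsOn φ (Set.Iio k)) (hz : 0 ≤ z) (j : ℕ) :
    Filter.Tendsto (fun N : ℕ => voidMoment (N - j) N w (w + z / N) φ) .atTop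
      (nhds (Real.exp (-z) * gapMoment f 0 φ)) := by
  induction k generalizing φ z j with
  | zero =>
    have hconst : φ = BoundedContinuousFunction.const _ (φ 0) := by
      ext g
      exact hφ fun i hi => absurd hi (Nat.not_lt_zero i)
    rw [hconst, hf.gapMoment_zero_const]
    exact tendsto_voidMoment_const hw hw1 hz j (φ 0)
  | succ k ih =>
    have hint := hf.tendsto_integral_voidMoment hw hw1 hz (j + 1) (φ := φ) fun x hx =>
      ih (dependsOn_compContinuous_consMap hφ x) (add_nonneg hz hx) (j + 1)
    have hfac : Filter.Tendsto (fun N : ℕ => 1 - (j : ℝ) / N) .atTop (nhds 1) := by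
      simpa using (tendsto_const_div_atTop_nhds_zero_nat (j : ℝ)).const_sub 1
    have herr : Filter.Tendsto (fun N : ℕ => w ^ (N - j) * ‖φ‖) .atTop (nhds 0) := by
      simpa using ((tendsto_pow_atTop_nhds_zero_of_lt_one hw hw1).comp
        (Filter.tendsto_sub_atTop_nat j)).mul_const ‖φ‖
    have hmain := hfac.mul hint
    rw [one_mul] at hmain
    refine tendsto_of_tendsto_of_dist hmain (squeeze_zero_norm' ?_ herr)
    filter_upwards [eventually_add_div_lt_one hw1 z, Filter.eventually_gt_atTop j] with N hN hj
    obtain ⟨n, rfl⟩ := Nat.exists_eq_add_of_lt hj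
    have hN' : ((j + n + 1 : ℕ) : ℝ) ≠ 0 := by positivity
    have h := abs_voidMoment_succ_sub_le (n := n) (ν := (j + n + 1 : ℕ)) hw
      (le_add_of_nonneg_right (by positivity)) hN.le φ.continuous.measurable φ.norm_coe_le_norm
    rw [intervalIntegral_voidMoment_consSeq hN'] at h
    rw [dist_comm, Real.dist_eq, Real.norm_eq_abs, abs_abs]
    have hsub : j + n + 1 - j = n + 1 := by lia
    have hsub' : j + n + 1 - (j + 1) = n := by lia
    rw [hsub, hsub']
    convert h using 3
    rw [← mul_assoc]
    congr 1
    push_cast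
    push_cast at hN'
    field_simp
    ring

end SolvesMaxMatchingPDE

namespace ClosestMatching
open scoped BoundedContinuousFunction

theorem voidTerm_self {n : ℕ} (ν x : ℝ) (φ : (ℕ → ℝ) → ℝ) (X : Fin n → ℝ) :
    voidTerm ν x x φ X = φ (gaps ν (Finset.univ.image X) x) :=
  if_pos fun _ h => (h.1.trans_le h.2).false

theorem meanGapSum_succ_zero (c : ℝ) (n : ℕ) (φ : (ℕ → ℝ) →ᵇ ℝ) :
    meanGapSum c (n + 1) φ 0 = ∫ x, voidMoment n (n + 1 : ℕ) x x φ ∂unifInterval := by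
  have hsum : ∫ X, gapSum (n + 1 : ℕ) φ (Finset.univ.image X) ∂unifCube (n + 1) =
      ∫ X, ∑ i : Fin (n + 1), voidTerm (n + 1 : ℕ) (X i) (X i) φ (i.removeNth X)
        ∂unifCube (n + 1) := by
    refine integral_congr_ae ?_
    filter_upwards [ae_injective_unifCube (n + 1)] with X hX
    rw [gapSum, Finset.sum_image hX.injOn]
    refine Finset.sum_congr rfl fun i _ => ?_
    rw [voidTerm_self, gaps_congr (pointsAbove_image_removeNth X i)]
  rw [meanGapSum, Function.iterate_zero, id_eq, hsum,
    integral_sum_removeNth (F := fun x X => voidTerm (n + 1 : ℕ) x x φ X)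
      (measurable_voidTerm (ψ := fun _ => φ) measurable_fst measurable_fst measurable_snd
        (φ.continuous.measurable.comp measurable_snd))
      fun x X => abs_voidTerm_le_const φ.norm_coe_le_norm X, Nat.cast_succ,
    inv_mul_cancel_left₀ (by positivity)]
  rfl

end ClosestMatching

namespace SolvesMaxMatchingPDE
open ClosestMatching
open scoped BoundedContinuousFunction

theorem tendsto_meanGapSum_zero {c : ℝ} {f : ℝ → ℝ → ℝ}
    (hf : SolvesMaxMatchingPDE c f) {k : ℕ} {φ : (ℕ → ℝ) →ᵇ ℝ} (hφ : DependsOn φ (Set.Iio k)) :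
    Filter.Tendsto (fun N => meanGapSum c N φ 0) .atTop (nhds (gapMoment f 0 φ)) := by
  have hlim : Filter.Tendsto (fun N : ℕ => ∫ x, voidMoment (N - 1) N x x φ ∂unifInterval) .atTop
      (nhds (∫ _, gapMoment f 0 φ ∂unifInterval)) := by
    refine tendsto_integral_of_dominated_convergence (fun _ => ‖φ‖) (fun N => ?_)
      (integrable_const _) (fun N => .of_forall fun x => ?_) ?_
    · exact (measurable_voidTerm (ψ := fun _ => φ) measurable_fst measurable_fst measurable_snd
        (φ.continuous.measurable.comp
          measurable_snd)).stronglyMeasurable.integral_prod_right.aestronglyMeasurable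
    · simpa [voidMoment] using norm_integral_le_of_norm_le_const (μ := unifCube (N - 1))
        (f := voidTerm N x x φ) (.of_forall (abs_voidTerm_le_const φ.norm_coe_le_norm))
    · have hne : ∀ᵐ x ∂unifInterval, x ≠ 1 := ae_restrict_of_ae (by simp [ae_iff])
      filter_upwards [ae_restrict_mem measurableSet_Icc, hne] with x hx hx1
      simpa using hf.tendsto_voidMoment hx.1 (hx.2.lt_of_ne hx1) hφ le_rfl 1
  rw [integral_const, probReal_univ, one_smul] at hlim
  refine hlim.congr' ?_
  filter_upwards [Filter.eventually_gt_atTop 0] with N hN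
  obtain ⟨n, rfl⟩ := Nat.exists_eq_succ_of_ne_zero hN.ne'
  exact (meanGapSum_succ_zero c n φ).symm

end SolvesMaxMatchingPDE

namespace ClosestMatching
open scoped BoundedContinuousFunction

/-! ### Propagation in time -/

theorem le_sum_choose_of_succ_le {a : ℕ → ℕ → ℝ} {A d : ℕ → ℝ} {h : ℝ} {L : ℕ} (hh : 0 ≤ h)
    (hA : ∀ n, ∀ l ≤ L, a n l ≤ A n)
    (hsucc : ∀ n, ∀ l < L, a n (l + 1) ≤ a n l + h * a (n + 1) l + d n) {l : ℕ} (hl : l ≤ L)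
    (r n : ℕ) : a n l ≤ ∑ i ∈ Finset.range r,
      (h ^ i * l.choose i * a (n + i) 0 + h ^ i * l.choose (i + 1) * d (n + i)) +
        h ^ r * l.choose r * A (n + r) := by
  induction l generalizing r n with
  | zero =>
    cases r with
    | zero => simpa using hA n 0 hl
    | succ r => simp [Finset.sum_range_succ']
  | succ l ih =>
    cases r with
    | zero => simpa using hA n _ hl
    | succ r =>
      refine (hsucc n l hl).trans ?_
      have hn := ih (Nat.le_of_succ_le hl) (r + 1) n
      have hn1 := mul_le_mul_of_nonneg_left (ih (Nat.le_of_succ_le hl) r (n + 1)) hh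
      refine (add_le_add_left (add_le_add hn hn1) _).trans_eq ?_
      have pascal (i : ℕ) : ((l + 1).choose (i + 1) : ℝ) = l.choose i + l.choose (i + 1) :=
        mod_cast Nat.choose_succ_succ' l i
      have hterm (i : ℕ) : h ^ (i + 1) * (l + 1).choose (i + 1) * a (n + (i + 1)) 0 +
          h ^ (i + 1) * (l + 1).choose (i + 1 + 1) * d (n + (i + 1)) =
          h ^ (i + 1) * l.choose (i + 1) * a (n + (i + 1)) 0 +
            h ^ (i + 1) * l.choose (i + 1 + 1) * d (n + (i + 1)) +
          h * (h ^ i * l.choose i * a (n + 1 + i) 0 +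
            h ^ i * l.choose (i + 1) * d (n + 1 + i)) := by
        rw [pascal, pascal, Nat.add_right_comm n 1 i, ← Nat.add_assoc n i 1]
        ring
      rw [Finset.sum_range_succ', Finset.sum_range_succ', Finset.sum_congr rfl fun i _ => hterm i,
        mul_add h, Finset.mul_sum, pascal, pascal, Nat.add_right_comm n 1 r, ← Nat.add_assoc n r 1]
      simp only [Finset.sum_add_distrib, pow_zero, Nat.choose_zero_right, Nat.add_zero]
      push_cast
      ring

theorem pow_mul_choose_le {h : ℝ} (hh : 0 ≤ h) (l i : ℕ) :
    h ^ i * l.choose i ≤ (h * l) ^ i / i.factorial := by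
  rw [mul_pow, mul_div_assoc]
  exact mul_le_mul_of_nonneg_left (Nat.choose_le_pow_div i l) (pow_nonneg hh i)

theorem le_sum_add_of_succ_le {a : ℕ → ℕ → ℝ} {A D : ℕ → ℝ} {h : ℝ} {L : ℕ} (hh : 0 ≤ h)
    (hhL : h * L ≤ 1) (ha : ∀ n l, 0 ≤ a n l) (hD : ∀ n, 0 ≤ D n) (hA : ∀ n, ∀ l ≤ L, a n l ≤ A n)
    (hsucc : ∀ n, ∀ l < L, a n (l + 1) ≤ a n l + h * a (n + 1) l + D n * h ^ 2) (r n : ℕ) :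
    a n L ≤ ∑ i ∈ Finset.range r, a (n + i) 0 + (∑ i ∈ Finset.range r, D (n + i)) * h +
      A (n + r) / r.factorial * (h * L) ^ r := by
  have hle_one (i : ℕ) : h ^ i * L.choose i ≤ 1 := by
    refine (pow_mul_choose_le hh L i).trans (div_le_one_of_le₀ ?_ (by positivity))
    exact (pow_le_one₀ (by positivity) hhL).trans (mod_cast i.factorial_pos)
  refine (le_sum_choose_of_succ_le hh hA hsucc le_rfl r n).trans (add_le_add ?_ ?_)
  · rw [Finset.sum_mul, ← Finset.sum_add_distrib]
    refine Finset.sum_le_sum fun i _ => add_le_add (mul_le_of_le_one_left (ha _ _) (hle_one i)) ?_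
    calc h ^ i * L.choose (i + 1) * (D (n + i) * h ^ 2)
        = h ^ (i + 1) * L.choose (i + 1) * (D (n + i) * h) := by ring
      _ ≤ D (n + i) * h := mul_le_of_le_one_left (mul_nonneg (hD _) hh) (hle_one (i + 1))
  · refine (mul_le_mul_of_nonneg_right (pow_mul_choose_le hh L r)
      ((ha _ 0).trans (hA _ 0 L.zero_le))).trans_eq ?_
    ring

/-- The iterated generators of the hierarchy of gap sums: `d/dt` applied `n` times to the moment of
a test function `φ` of `k` gaps is the moment of `iteratedGenerator c k φ n`. -/
noncomputable def iteratedGenerator (c : ℝ) (k : ℕ) (φ : (ℕ → ℝ) →ᵇ ℝ) : ℕ → (ℕ → ℝ) →ᵇ ℝ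
  | 0 => φ
  | n + 1 => generator c (k + n) (iteratedGenerator c k φ n)

section IteratedGenerator

variable {c : ℝ} {k : ℕ} {φ : (ℕ → ℝ) →ᵇ ℝ}

theorem dependsOn_iteratedGenerator (hφ : DependsOn φ (Set.Iio k)) (n : ℕ) :
    DependsOn (iteratedGenerator c k φ n) (Set.Iio (k + n)) := by
  induction n with
  | zero => exact hφ
  | succ n ih => exact dependsOn_generator ih

theorem norm_iteratedGenerator_le (hc : 0 < c) (k : ℕ) (φ : (ℕ → ℝ) →ᵇ ℝ) (n : ℕ) :
    ‖iteratedGenerator c k φ n‖ ≤ (4 * c) ^ n * (k + 1).ascFactorial n * ‖φ‖ := by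
  induction n with
  | zero => simp [iteratedGenerator]
  | succ n ih =>
    refine (norm_generator_le hc _ _).trans
      ((mul_le_mul_of_nonneg_left ih (by positivity)).trans_eq ?_)
    rw [Nat.ascFactorial_succ]
    push_cast
    ring

theorem norm_iteratedGenerator_div_factorial_le (hc : 0 < c) (k : ℕ) (φ : (ℕ → ℝ) →ᵇ ℝ) (n : ℕ) :
    ‖iteratedGenerator c k φ n‖ / n.factorial ≤ 2 ^ k * ‖φ‖ * (8 * c) ^ n := by
  have hchoose : ((k + n).choose n : ℝ) ≤ 2 ^ (k + n) := mod_cast Nat.choose_le_two_pow (k + n) n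
  rw [div_le_iff₀ (by positivity)]
  calc ‖iteratedGenerator c k φ n‖
      ≤ (4 * c) ^ n * (n.factorial * (k + n).choose n) * ‖φ‖ := by
        refine (norm_iteratedGenerator_le hc k φ n).trans_eq ?_
        rw [Nat.ascFactorial_eq_factorial_mul_choose]
        push_cast
        ring
    _ ≤ (4 * c) ^ n * (n.factorial * 2 ^ (k + n)) * ‖φ‖ := by gcongr
    _ = 2 ^ k * ‖φ‖ * (8 * c) ^ n * n.factorial := by
        rw [show 8 * c = 4 * c * 2 by ring, mul_pow (4 * c), pow_add]
        ring

end IteratedGenerator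

/-- The deviation of the mean gap sum after `m` of the `N` arrivals from its mean-field limit. -/
noncomputable def gapSumError (c : ℝ) (f : ℝ → ℝ → ℝ) (N : ℕ) (φ : (ℕ → ℝ) →ᵇ ℝ) (m : ℕ) : ℝ :=
  |meanGapSum c N φ m - gapMoment f (m / N) φ|

end ClosestMatching

namespace SolvesMaxMatchingPDE
open ClosestMatching
open scoped BoundedContinuousFunction

variable {c : ℝ} {f : ℝ → ℝ → ℝ} {k : ℕ} {φ : (ℕ → ℝ) →ᵇ ℝ}

theorem gapSumError_le (hc : 0 < c) (hf : SolvesMaxMatchingPDE c f) {N m : ℕ} (hN : 0 < N)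
    (hm : m ≤ N) (φ : (ℕ → ℝ) →ᵇ ℝ) :
    gapSumError c f N φ m ≤ (1 + Real.exp (4 * c) * freeMass f 1) * ‖φ‖ := by
  have ht : (m / N : ℝ) ∈ Set.Icc (0 : ℝ) 1 :=
    ⟨by positivity, div_le_one_of_le₀ (mod_cast hm) (by positivity)⟩
  rw [one_add_mul]
  exact (abs_sub _ _).trans
    (add_le_add (abs_meanGapSum_le c hN φ m) (hf.abs_gapMoment_le hc ht φ))

theorem exists_gapSumError_succ_le (hc : 0 < c) (hf : SolvesMaxMatchingPDE c f)
    (hφ : DependsOn φ (Set.Iio k)) :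
    ∃ D, 0 ≤ D ∧ ∀ N m, m < N → gapSumError c f N φ (m + 1) ≤
      gapSumError c f N φ m + (N : ℝ)⁻¹ * gapSumError c f N (generator c k φ) m +
        D * (N : ℝ)⁻¹ ^ 2 := by
  have hu := (hf.freeMass_pos (Set.right_mem_Icc.2 zero_le_one)).le
  refine ⟨8 * (k * (k + 1) + 1) * c * ‖φ‖ + Real.exp (4 * c) * freeMass f 1 *
    ‖generator c (k + 1) (generator c k φ)‖, by positivity, fun N m hm => ?_⟩
  have hN : 0 < N := m.zero_le.trans_lt hm
  have hN' : (0 : ℝ) < N := mod_cast hN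
  have htime {j : ℕ} (hj : j ≤ N) : (j / N : ℝ) ∈ Set.Icc (0 : ℝ) 1 :=
    ⟨by positivity, div_le_one_of_le₀ (mod_cast hj) hN'.le⟩
  have hincr : ((m + 1 : ℕ) / N : ℝ) - m / N = (N : ℝ)⁻¹ := by
    push_cast
    ring
  have hmean := abs_meanGapSum_succ_sub_sub_le hc hN hφ m
  have hmoment := hf.abs_gapMoment_sub_sub_le hc hφ (htime hm.le) (htime hm)
  rw [hincr] at hmoment
  set x := meanGapSum c N φ
  set y := fun j : ℕ => gapMoment f (j / N) φ
  set x' := meanGapSum c N (generator c k φ) m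
  set y' := gapMoment f (m / N) (generator c k φ)
  calc |x (m + 1) - y (m + 1)|
      = |x m - y m + (N : ℝ)⁻¹ * (x' - y') + (x (m + 1) - x m - (N : ℝ)⁻¹ * x') -
          (y (m + 1) - y m - (N : ℝ)⁻¹ * y')| := by ring_nf
    _ ≤ |x m - y m| + |(N : ℝ)⁻¹ * (x' - y')| + |x (m + 1) - x m - (N : ℝ)⁻¹ * x'| +
          |y (m + 1) - y m - (N : ℝ)⁻¹ * y'| :=
        (abs_sub _ _).trans (by gcongr; exact abs_add_three _ _ _)
    _ ≤ _ := by
        rw [abs_mul, abs_of_pos (inv_pos.2 hN'), add_mul, ← add_assoc]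
        exact add_le_add (add_le_add (add_le_add le_rfl le_rfl) hmean) hmoment

/-- Iterating the hierarchy `r` times: the last term tends to `0` as `r → ∞` only for
`8 * c * l < N`, so the convergence is propagated over short time intervals. -/
theorem exists_gapSumError_add_le (hc : 0 < c) (hf : SolvesMaxMatchingPDE c f)
    (hφ : DependsOn φ (Set.Iio k)) (r : ℕ) :
    ∃ D, ∀ N m l, 0 < N → m + l ≤ N → gapSumError c f N φ (m + l) ≤
      ∑ i ∈ Finset.range r, gapSumError c f N (iteratedGenerator c k φ i) m + D * (N : ℝ)⁻¹ +
        (1 + Real.exp (4 * c) * freeMass f 1) * (2 ^ k * ‖φ‖) * (8 * c * (l / N)) ^ r := by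
  choose D hD hsucc using fun n => hf.exists_gapSumError_succ_le hc
    (dependsOn_iteratedGenerator (c := c) hφ n)
  have hu := (hf.freeMass_pos (Set.right_mem_Icc.2 zero_le_one)).le
  refine ⟨∑ i ∈ Finset.range r, D i, fun N m l hN hml => ?_⟩
  have hN' : (0 : ℝ) < N := mod_cast hN
  have hl : (N : ℝ)⁻¹ * l ≤ 1 := by
    rw [inv_mul_le_one₀ hN']
    exact mod_cast (Nat.le_add_left l m).trans hml
  have h := le_sum_add_of_succ_le
    (a := fun n l => gapSumError c f N (iteratedGenerator c k φ n) (m + l))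
    (inv_nonneg.2 hN'.le) hl (fun _ _ => abs_nonneg _) hD
    (fun n j hj => hf.gapSumError_le hc hN (by lia) (iteratedGenerator c k φ n))
    (fun n j hj => hsucc n N (m + j) (by lia)) r 0
  simp only [zero_add, add_zero] at h
  refine h.trans (add_le_add_right ?_ _)
  calc (1 + Real.exp (4 * c) * freeMass f 1) * ‖iteratedGenerator c k φ r‖ / r.factorial *
        ((N : ℝ)⁻¹ * l) ^ r
      ≤ (1 + Real.exp (4 * c) * freeMass f 1) * (2 ^ k * ‖φ‖ * (8 * c) ^ r) *
        ((N : ℝ)⁻¹ * l) ^ r := by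
        rw [mul_div_assoc]
        gcongr
        exact norm_iteratedGenerator_div_factorial_le hc k φ r
    _ = _ := by
        rw [inv_mul_eq_div, mul_pow (8 * c)]
        ring

theorem tendsto_gapSumError_add (hc : 0 < c) (hf : SolvesMaxMatchingPDE c f) {m l : ℕ → ℕ}
    (hml : ∀ N, m N + l N ≤ N) (hl : ∀ᶠ N : ℕ in .atTop, (l N : ℝ) ≤ 1 / (16 * c) * N)
    (hm : ∀ k (φ : (ℕ → ℝ) →ᵇ ℝ), DependsOn φ (Set.Iio k) →
      Filter.Tendsto (fun N => gapSumError c f N φ (m N)) .atTop (nhds 0))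
    (hφ : DependsOn φ (Set.Iio k)) :
    Filter.Tendsto (fun N => gapSumError c f N φ (m N + l N)) .atTop (nhds 0) := by
  set K := (1 + Real.exp (4 * c) * freeMass f 1) * (2 ^ k * ‖φ‖)
  have hK : 0 ≤ K := by
    have := (hf.freeMass_pos (Set.right_mem_Icc.2 zero_le_one)).le
    positivity
  rw [Metric.tendsto_nhds]
  intro ε hε
  have hgeom : Filter.Tendsto (fun r : ℕ => K * (1 / 2 : ℝ) ^ r) .atTop (nhds 0) := by
    simpa using (tendsto_pow_atTop_nhds_zero_of_lt_one one_half_pos.le one_half_lt_one).const_mul K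
  obtain ⟨r, hr⟩ := (hgeom.eventually_lt_const (half_pos hε)).exists
  obtain ⟨D, hD⟩ := hf.exists_gapSumError_add_le hc hφ r
  have herr : Filter.Tendsto (fun N : ℕ => ∑ i ∈ Finset.range r,
      gapSumError c f N (iteratedGenerator c k φ i) (m N) + D * (N : ℝ)⁻¹) .atTop (nhds 0) := by
    simpa using (tendsto_finsetSum (Finset.range r) fun i _ =>
      hm _ _ (dependsOn_iteratedGenerator hφ i)).add
        ((tendsto_inv_atTop_nhds_zero_nat (𝕜 := ℝ)).const_mul D)
  filter_upwards [herr.eventually_lt_const (half_pos hε), hl, Filter.eventually_gt_atTop 0] with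
    N hherr hlN hN
  have hN' : (0 : ℝ) < N := mod_cast hN
  have hhalf : 8 * c * (l N / N) ≤ 1 / 2 := by
    calc 8 * c * (l N / N) ≤ 8 * c * (1 / (16 * c)) :=
          mul_le_mul_of_nonneg_left ((div_le_iff₀ hN').2 hlN) (by positivity)
      _ = 1 / 2 := by
          field_simp
          norm_num
  have hlast : K * (8 * c * (l N / N)) ^ r ≤ K * (1 / 2) ^ r := by gcongr
  rw [Real.dist_eq, sub_zero, gapSumError, abs_abs]
  exact (hD N _ _ hN (hml N)).trans_lt (by linarith)

theorem tendsto_gapSumError_of_le_mul (hc : 0 < c) (hf : SolvesMaxMatchingPDE c f) (j : ℕ)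
    {m : ℕ → ℕ} (hm : ∀ N, m N ≤ N) (hmj : ∀ N, (m N : ℝ) ≤ j / (32 * c) * N)
    (hφ : DependsOn φ (Set.Iio k)) :
    Filter.Tendsto (fun N => gapSumError c f N φ (m N)) .atTop (nhds 0) := by
  induction j generalizing m k φ with
  | zero =>
    obtain rfl : m = 0 := funext fun N => by simpa using hmj N
    simpa [gapSumError] using ((hf.tendsto_meanGapSum_zero hφ).sub_const (gapMoment f 0 φ)).abs
  | succ j ih =>
    set m' : ℕ → ℕ := fun N => min (m N) ⌊j / (32 * c) * N⌋₊
    have hm'_le (N : ℕ) : m' N ≤ m N := min_le_left _ _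
    have hm'j (N : ℕ) : (m' N : ℝ) ≤ j / (32 * c) * N :=
      (Nat.cast_le.2 (min_le_right _ _)).trans (Nat.floor_le (by positivity))
    have hadd (N : ℕ) : m' N + (m N - m' N) = m N := Nat.add_sub_cancel' (hm'_le N)
    have hincr : ∀ᶠ N : ℕ in .atTop, ((m N - m' N : ℕ) : ℝ) ≤ 1 / (16 * c) * N := by
      filter_upwards [Filter.eventually_ge_atTop ⌈32 * c⌉₊] with N hN
      have hone : 1 ≤ 1 / (32 * c) * N := by
        rw [one_div_mul_eq_div, one_le_div (by positivity)]
        exact Nat.ceil_le.1 hN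
      have hstep := hmj N
      have hdouble : 1 / (16 * c) * (N : ℝ) = 1 / (32 * c) * N + 1 / (32 * c) * N := by
        field_simp
        ring
      rw [Nat.cast_succ, add_div, add_mul] at hstep
      rw [Nat.cast_sub (hm'_le N), hdouble, sub_le_iff_le_add, Nat.cast_min]
      rcases min_cases (m N : ℝ) (⌊j / (32 * c) * N⌋₊ : ℝ) with ⟨h, -⟩ | ⟨h, -⟩ <;> rw [h]
      · linarith
      · linarith [Nat.lt_floor_add_one (j / (32 * c) * N)]
    simpa only [hadd] using hf.tendsto_gapSumError_add hc (fun N => (hadd N).trans_le (hm N)) hincr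
      (fun k φ hφ => ih (fun N => (hm'_le N).trans (hm N)) hm'j hφ) hφ

theorem tendsto_gapSumError (hc : 0 < c) (hf : SolvesMaxMatchingPDE c f) {m : ℕ → ℕ}
    (hm : ∀ N, m N ≤ N) (hφ : DependsOn φ (Set.Iio k)) :
    Filter.Tendsto (fun N => gapSumError c f N φ (m N)) .atTop (nhds 0) := by
  refine hf.tendsto_gapSumError_of_le_mul hc ⌈32 * c⌉₊ hm (fun N => ?_) hφ
  refine (Nat.cast_le.2 (hm N)).trans (le_mul_of_one_le_left N.cast_nonneg ?_)
  exact (one_le_div (by positivity)).2 (Nat.le_ceil _)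

end SolvesMaxMatchingPDE

namespace ClosestMatching

/-! ### Concentration -/

section Stability
variable {r : ℝ} {S : Finset ℝ}

theorem exists_isClosest {x y : ℝ} (hx : x ∈ S) (hxy : |x - y| < r) :
    ∃ z ∈ S, IsClosest r S y z := by
  obtain ⟨z, hz, hmin⟩ := S.exists_min_image (fun x => toLex (|x - y|, x)) ⟨x, hx⟩
  refine ⟨z, hz, ?_, fun x' hx' => Prod.Lex.toLex_le_toLex.1 (hmin x' hx')⟩
  rcases Prod.Lex.toLex_le_toLex.1 (hmin x hx) with h | h
  · exact h.trans hxy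
  · exact h.1.trans_lt hxy

theorem exists_eq_erase (S : Finset ℝ) : ∃ w, S = S.erase w :=
  (Infinite.exists_notMem_finset S).imp fun _ hw => (Finset.erase_eq_of_notMem hw).symm

theorem exists_freeAfter_eq_erase (r : ℝ) (S : Finset ℝ) (y : ℝ) :
    ∃ w, freeAfter r S y = S.erase w := by
  by_cases h : ∃ x ∈ S, IsClosest r S y x
  · obtain ⟨x, hx, hxy⟩ := h
    exact ⟨x, freeAfter_of_isClosest hx hxy⟩
  · rw [freeAfter_of_forall_not_isClosest fun x hx hxy => h ⟨x, hx, hxy⟩]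
    exact exists_eq_erase S

theorem exists_freeAfter_erase_eq (r : ℝ) (S : Finset ℝ) (z y : ℝ) :
    ∃ w, freeAfter r (S.erase z) y = (freeAfter r S y).erase w := by
  by_cases h : ∃ x ∈ S, |x - y| < r
  · obtain ⟨x, hx, hxy⟩ := h
    obtain ⟨x, hx, hxy⟩ := exists_isClosest hx hxy
    rw [freeAfter_of_isClosest hx hxy]
    rcases eq_or_ne x z with rfl | hxz
    · exact exists_freeAfter_eq_erase r _ y
    · have hxy' : IsClosest r (S.erase z) y x :=
        ⟨hxy.1, fun x' hx' => hxy.2 x' (Finset.mem_of_mem_erase hx')⟩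
      rw [freeAfter_of_isClosest (Finset.mem_erase.2 ⟨hxz, hx⟩) hxy']
      exact ⟨z, Finset.erase_right_comm⟩
  · have hfar (T : Finset ℝ) (hT : T ⊆ S) : freeAfter r T y = T :=
      freeAfter_of_forall_not_isClosest fun x hx hxy => h ⟨x, hT hx, hxy.1⟩
    exact ⟨z, by rw [hfar S subset_rfl, hfar _ (S.erase_subset z)]⟩

theorem exists_freeSet_erase_eq (r : ℝ) (S : Finset ℝ) (z : ℝ) (y : ℕ → ℝ) (m : ℕ) :
    ∃ w, freeSet r (S.erase z) y m = (freeSet r S y m).erase w := by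
  induction m with
  | zero => exact ⟨z, rfl⟩
  | succ m ih =>
    obtain ⟨w, hw⟩ := ih
    rw [freeSet, hw]
    exact exists_freeAfter_erase_eq r _ w (y m)

theorem abs_card_erase_sub_card_erase_le (S : Finset ℝ) (z w : ℝ) :
    |((S.erase z).card : ℝ) - (S.erase w).card| ≤ 1 := by
  have hz := S.pred_card_le_card_erase (a := z)
  have hw := S.pred_card_le_card_erase (a := w)
  have hz' := S.card_erase_le (a := z)
  have hw' := S.card_erase_le (a := w)
  rw [abs_sub_le_iff, sub_le_iff_le_add, sub_le_iff_le_add]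
  exact ⟨mod_cast by lia, mod_cast by lia⟩

theorem abs_card_freeSet_update_arrival_sub_le (r : ℝ) (S : Finset ℝ) (y : ℕ → ℝ) (i : ℕ) (a : ℝ)
    (m : ℕ) :
    |((freeSet r S (Function.update y i a) m).card : ℝ) - (freeSet r S y m).card| ≤ 1 := by
  suffices h : ∃ (T : Finset ℝ) (z w : ℝ), freeSet r S (Function.update y i a) m = T.erase z ∧
      freeSet r S y m = T.erase w by
    obtain ⟨T, z, w, hz, hw⟩ := h
    rw [hz, hw]
    exact abs_card_erase_sub_card_erase_le T z w
  induction m with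
  | zero =>
    obtain ⟨w, hw⟩ := exists_eq_erase S
    exact ⟨S, w, w, hw, hw⟩
  | succ m ih =>
    rcases eq_or_ne m i with rfl | hmi
    · have hcongr : freeSet r S (Function.update y m a) m = freeSet r S y m :=
        freeSet_congr r S fun j hj => Function.update_of_ne hj.ne _ _
      obtain ⟨z, hz⟩ := exists_freeAfter_eq_erase r (freeSet r S y m) a
      obtain ⟨w, hw⟩ := exists_freeAfter_eq_erase r (freeSet r S y m) (y m)
      refine ⟨freeSet r S y m, z, w, ?_, hw⟩
      rw [freeSet, hcongr, Function.update_self, hz]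
    · obtain ⟨T, z, w, hz, hw⟩ := ih
      obtain ⟨z', hz'⟩ := exists_freeAfter_erase_eq r T z (y m)
      obtain ⟨w', hw'⟩ := exists_freeAfter_erase_eq r T w (y m)
      refine ⟨freeAfter r T (y m), z', w', ?_, ?_⟩
      · rw [freeSet, hz, Function.update_of_ne hmi, hz']
      · rw [freeSet, hw, hw']

theorem exists_eq_erase_insert (S : Finset ℝ) (x : ℝ) : ∃ w, S = (insert x S).erase w := by
  by_cases hx : x ∈ S
  · rw [Finset.insert_eq_of_mem hx]
    exact exists_eq_erase S
  · exact ⟨x, (Finset.erase_insert hx).symm⟩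

theorem abs_card_freeSet_image_update_sub_le (r : ℝ) {n : ℕ} (X : Fin n → ℝ) (i : Fin n) (a : ℝ)
    (y : ℕ → ℝ) (m : ℕ) :
    |((freeSet r (Finset.univ.image (Function.update X i a)) y m).card : ℝ) -
      (freeSet r (Finset.univ.image X) y m).card| ≤ 1 := by
  set S := (Finset.univ.erase i).image X
  have himage (Z : Fin n → ℝ) : Finset.univ.image Z =
      insert (Z i) ((Finset.univ.erase i).image Z) := by
    rw [← Finset.image_insert, Finset.insert_erase (Finset.mem_univ i)]
  have hS : (Finset.univ.erase i).image (Function.update X i a) = S :=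
    Finset.image_congr fun j hj => Function.update_of_ne (Finset.ne_of_mem_erase hj) _ _
  obtain ⟨z, hz⟩ := exists_eq_erase_insert (insert a S) (X i)
  obtain ⟨w, hw⟩ := exists_eq_erase_insert (insert (X i) S) a
  obtain ⟨z', hz'⟩ := exists_freeSet_erase_eq r (insert a (insert (X i) S)) z y m
  obtain ⟨w', hw'⟩ := exists_freeSet_erase_eq r (insert a (insert (X i) S)) w y m
  rw [himage X, himage, hS, Function.update_self, hz, hw, Finset.insert_comm, hz', hw']
  exact abs_card_erase_sub_card_erase_le _ z' w'

end Stability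

section Variance
open ProbabilityTheory

theorem variance_prod_le {α β : Type*} [MeasurableSpace α] [MeasurableSpace β] {μ : Measure α}
    {ν : Measure β} [IsProbabilityMeasure μ] [IsProbabilityMeasure ν] {f : α × β → ℝ} {b : ℝ}
    (hf : MemLp f 2 (μ.prod ν)) (hb : ∀ x, Var[fun y => f (x, y); ν] ≤ b) :
    Var[f; μ.prod ν] ≤ Var[fun x => ∫ y, f (x, y) ∂ν; μ] + b := by
  have hint : Integrable f (μ.prod ν) := hf.integrable one_le_two
  have hsq : Integrable (fun p => f p ^ 2) (μ.prod ν) := hf.integrable_sq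
  have hsection : ∀ᵐ x ∂μ, Var[fun y => f (x, y); ν] =
      ∫ y, f (x, y) ^ 2 ∂ν - (∫ y, f (x, y) ∂ν) ^ 2 := by
    filter_upwards [hf.1.prodMk_left, hsq.prod_right_ae] with x hx hx2
    exact variance_eq_sub ((memLp_two_iff_integrable_sq hx).2 hx2)
  have hmean : MemLp (fun x => ∫ y, f (x, y) ∂ν) 2 μ := by
    refine (memLp_two_iff_integrable_sq hint.integral_prod_left.1).2
      (hsq.integral_prod_left.mono' (hint.integral_prod_left.1.pow 2) ?_)
    filter_upwards [hsection] with x hx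
    rw [Real.norm_of_nonneg (sq_nonneg _), ← sub_nonneg, ← hx]
    exact variance_nonneg _ _
  have hsecond : ∫ x, ∫ y, f (x, y) ^ 2 ∂ν ∂μ ≤ ∫ x, (∫ y, f (x, y) ∂ν) ^ 2 ∂μ + b := by
    have hadd : ∫ x, ((∫ y, f (x, y) ∂ν) ^ 2 + b) ∂μ = ∫ x, (∫ y, f (x, y) ∂ν) ^ 2 ∂μ + b := by
      rw [integral_add hmean.integrable_sq (integrable_const b), integral_const, probReal_univ,
        one_smul]
    rw [← hadd]
    refine integral_mono_ae hsq.integral_prod_left (hmean.integrable_sq.add (integrable_const b)) ?_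
    filter_upwards [hsection] with x hx
    exact sub_le_iff_le_add'.1 (hx.symm.trans_le (hb x))
  rw [variance_eq_sub hf, variance_eq_sub hmean]
  simp only [Pi.pow_apply]
  rw [integral_prod _ hsq, integral_prod _ hint]
  linarith

theorem abs_integral_sub_integral_le {α : Type*} [MeasurableSpace α] {μ : Measure α}
    [IsProbabilityMeasure μ] {f g : α → ℝ} {d : ℝ} (hf : Integrable f μ) (hg : Integrable g μ)
    (h : ∀ x, |f x - g x| ≤ d) : |∫ x, f x ∂μ - ∫ x, g x ∂μ| ≤ d := by
  rw [← integral_sub hf hg]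
  simpa using norm_integral_le_of_norm_le_const (μ := μ) (f := fun x => f x - g x) (.of_forall h)

theorem variance_le_sq_of_abs_sub_le {α : Type*} [MeasurableSpace α] {μ : Measure α}
    [IsProbabilityMeasure μ] {f : α → ℝ} {d : ℝ} (hf : Measurable f)
    (h : ∀ x z, |f x - f z| ≤ d) : Var[f; μ] ≤ d ^ 2 := by
  obtain ⟨z⟩ := μ.nonempty_of_neZero
  have hIcc (x : α) : f x ∈ Set.Icc (f z - d) (f z + d) :=
    Set.mem_Icc_iff_abs_le.1 (h z x)
  exact (variance_le_sq_of_bounded (.of_forall hIcc) hf.aemeasurable).trans_eq (by ring)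

/-- The Efron–Stein bound for functions with bounded differences. -/
theorem variance_pi_le {α : Type*} [MeasurableSpace α] {n : ℕ} {μ : Fin n → Measure α}
    [∀ i, IsProbabilityMeasure (μ i)] {f : (Fin n → α) → ℝ} {b d : ℝ} (hf : Measurable f)
    (hb : ∀ X, |f X| ≤ b) (hd : ∀ X i a, |f (Function.update X i a) - f X| ≤ d) :
    Var[f; Measure.pi μ] ≤ n * d ^ 2 := by
  induction n with
  | zero =>
    have h := variance_le_sq_of_abs_sub_le (μ := Measure.pi μ) (d := 0) hf fun X Z => by
      rw [Subsingleton.elim X Z, sub_self, abs_zero]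
    simpa using h
  | succ n ih =>
    set ν : Measure (Fin n → α) := Measure.pi fun i => μ i.succ
    set g : α × (Fin n → α) → ℝ := fun p => f (Fin.consEquiv (fun _ => α) p)
    have hcons : MeasurePreserving (Fin.consEquiv fun _ => α) ((μ 0).prod ν) (Measure.pi μ) := by
      simpa using (measurePreserving_piFinSuccAbove μ 0).symm
    have hg : Measurable g := hf.comp hcons.measurable
    have hsection (x : α) : Var[fun X => g (x, X); ν] ≤ n * d ^ 2 := by
      refine ih (hg.comp measurable_prodMk_left) (fun X => hb _) fun X i a => ?_
      have h := hd (Fin.cons x X) i.succ a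
      rwa [← Fin.cons_update] at h
    have hint (x : α) : Integrable (fun X => g (x, X)) ν :=
      .of_bound (hg.comp measurable_prodMk_left).aestronglyMeasurable b (.of_forall fun X => hb _)
    have hmean (x z : α) : |∫ X, g (x, X) ∂ν - ∫ X, g (z, X) ∂ν| ≤ d := by
      refine abs_integral_sub_integral_le (hint x) (hint z) fun X => ?_
      have h := hd (Fin.cons z X) 0 x
      rwa [Fin.update_cons_zero] at h
    have hfirst : Var[fun x => ∫ X, g (x, X) ∂ν; μ 0] ≤ d ^ 2 :=
      variance_le_sq_of_abs_sub_le hg.stronglyMeasurable.integral_prod_right'.measurable hmean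
    calc Var[f; Measure.pi μ]
        = Var[g; (μ 0).prod ν] := (hcons.variance_fun_comp hf.aemeasurable).symm
      _ ≤ Var[fun x => ∫ X, g (x, X) ∂ν; μ 0] + n * d ^ 2 :=
        variance_prod_le (.of_bound hg.aestronglyMeasurable b (.of_forall fun p => hb _)) hsection
      _ ≤ d ^ 2 + n * d ^ 2 := by gcongr
      _ = (n + 1 : ℕ) * d ^ 2 := by push_cast; ring

end Variance

section FreeCount
open ProbabilityTheory

/-- The number of offline points still free after the first `m` of `N` online arrivals. -/
noncomputable def freeCount (r : ℝ) (N m : ℕ) (ω : (Fin N → ℝ) × (Fin N → ℝ)) : ℝ :=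
  (freeSet r (Finset.univ.image ω.1) (extendZero ω.2) m).card

variable (r : ℝ) (N m : ℕ)

theorem extendZero_update (Y : Fin N → ℝ) (i : Fin N) (a : ℝ) :
    extendZero (Function.update Y i a) = Function.update (extendZero Y) i a := by
  ext j
  rcases eq_or_ne j i with rfl | hj
  · simp [extendZero]
  · rw [Function.update_of_ne hj]
    by_cases h : j < N
    · have hi : (⟨j, h⟩ : Fin N) ≠ i := fun h' => hj (congrArg Fin.val h')
      simp only [extendZero, h, dif_pos, Function.update_of_ne hi]
    · simp only [extendZero, h, dif_neg, not_false_eq_true]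

theorem gapSum_one (n : ℕ) : gapSum n 1 = fun S => (S.card : ℝ) := by
  ext S
  simp [gapSum]

theorem measurableOnTuples_card : MeasurableOnTuples fun S => (S.card : ℝ) :=
  gapSum_one 0 ▸ measurableOnTuples_gapSum 0 1

theorem measurable_freeCount : Measurable (freeCount r N m) := by
  have hextend : Measurable fun ω : (Fin N → ℝ) × (Fin N → ℝ) => (ω.1, extendZero ω.2) :=
    measurable_fst.prodMk ((measurable_extendZero N).comp measurable_snd)
  have hcount :=
    (measurable_comp_freeSet_image measurableOnTuples_card r m Finset.univ).comp hextend
  exact hcount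

theorem abs_freeCount_le (ω : (Fin N → ℝ) × (Fin N → ℝ)) : |freeCount r N m ω| ≤ N := by
  rw [freeCount, Nat.abs_cast, Nat.cast_le]
  calc (freeSet r (Finset.univ.image ω.1) (extendZero ω.2) m).card
      ≤ (Finset.univ.image ω.1).card := Finset.card_le_card (freeSet_subset r _ _ m)
    _ ≤ (Finset.univ : Finset (Fin N)).card := Finset.card_image_le
    _ = N := by rw [Finset.card_univ, Fintype.card_fin]

theorem integrable_freeCount : Integrable (freeCount r N m) ((unifCube N).prod (unifCube N)) :=
  .of_bound (measurable_freeCount r N m).aestronglyMeasurable N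
    (.of_forall (abs_freeCount_le r N m))

theorem variance_freeCount_le :
    Var[freeCount r N m; (unifCube N).prod (unifCube N)] ≤ 2 * N := by
  have hmeas := measurable_freeCount r N m
  have hbound := abs_freeCount_le r N m
  have hsection (X : Fin N → ℝ) : Measurable fun Y => freeCount r N m (X, Y) :=
    hmeas.comp measurable_prodMk_left
  have hint (X : Fin N → ℝ) : Integrable (fun Y => freeCount r N m (X, Y)) (unifCube N) :=
    .of_bound (hsection X).aestronglyMeasurable N (.of_forall fun Y => hbound (X, Y))
  have harrivals (X : Fin N → ℝ) : Var[fun Y => freeCount r N m (X, Y); unifCube N] ≤ N := by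
    have h := variance_pi_le (μ := fun _ => unifInterval) (hsection X) (fun Y => hbound (X, Y))
      (d := 1) fun Y i a => by
        simpa only [freeCount, extendZero_update] using
          abs_card_freeSet_update_arrival_sub_le r _ (extendZero Y) i a m
    rwa [one_pow, mul_one] at h
  have hoffline : Var[fun X => ∫ Y, freeCount r N m (X, Y) ∂unifCube N; unifCube N] ≤ N := by
    have hmean : Measurable fun X => ∫ Y, freeCount r N m (X, Y) ∂unifCube N :=
      hmeas.stronglyMeasurable.integral_prod_right'.measurable
    have h := variance_pi_le (μ := fun _ => unifInterval) (b := N) (d := 1) hmean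
      (fun X => ?_) fun X i a => ?_
    · exact h.trans_eq (by rw [one_pow, mul_one])
    · simpa using norm_integral_le_of_norm_le_const (μ := unifCube N)
        (f := fun Y => freeCount r N m (X, Y)) (.of_forall fun Y => hbound (X, Y))
    · exact abs_integral_sub_integral_le (hint _) (hint _) fun Y =>
        abs_card_freeSet_image_update_sub_le r X i a (extendZero Y) m
  calc Var[freeCount r N m; (unifCube N).prod (unifCube N)]
      ≤ Var[fun X => ∫ Y, freeCount r N m (X, Y) ∂unifCube N; unifCube N] + N :=
        variance_prod_le (.of_bound hmeas.aestronglyMeasurable N (.of_forall hbound)) harrivals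
    _ ≤ N + N := by gcongr
    _ = 2 * N := (two_mul _).symm

theorem integral_freeCount {c : ℝ} {N m : ℕ} (hm : m ≤ N) :
    ∫ ω, freeCount (c / N) N m ω ∂(unifCube N).prod (unifCube N) = N * meanGapSum c N 1 m := by
  rcases eq_or_ne N 0 with rfl | hN
  · have hzero (ω) : freeCount (c / (0 : ℕ)) 0 m ω = 0 :=
      abs_nonpos_iff.1 ((abs_freeCount_le _ 0 m ω).trans_eq Nat.cast_zero)
    simp_rw [hzero, integral_zero, Nat.cast_zero, zero_mul]
  · rw [integral_prod _ (integrable_freeCount _ N m), meanGapSum, gapSum_one,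
      mul_inv_cancel_left₀ (Nat.cast_ne_zero.2 hN)]
    congr with X
    exact integral_comp_freeSet_image measurableOnTuples_card _ X Finset.univ hm

end FreeCount

section Concentration
open ProbabilityTheory
variable {c : ℝ} {N m : ℕ}

theorem closestMatchedCount_add_freeCount {r : ℝ} (hr : 0 < r) {ω : (Fin N → ℝ) × (Fin N → ℝ)}
    (hω : Function.Injective ω.1) :
    closestMatchedCount (ENNReal.ofReal r) (Finset.univ.image ω.1) (extendZero ω.2) m +
      freeCount r N m ω = N := by
  have h := (closestState_eq_freeSet hr (Finset.univ.image ω.1) (extendZero ω.2) m).2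
  rw [Finset.card_image_of_injective _ hω, Finset.card_univ, Fintype.card_fin] at h
  rw [freeCount]
  exact mod_cast h

theorem measure_le_abs_freeCount_sub_le (hN : 0 < N) (hm : m ≤ N) {ε : ℝ} (hε : 0 < ε) :
    (unifCube N).prod (unifCube N)
        {ω | ε ≤ |freeCount (c / N) N m ω / N - meanGapSum c N 1 m|} ≤
      ENNReal.ofReal (2 / ε ^ 2 / N) := by
  have hN' : (0 : ℝ) < N := mod_cast hN
  have hmem : MemLp (freeCount (c / N) N m) 2 ((unifCube N).prod (unifCube N)) :=
    .of_bound (measurable_freeCount _ N m).aestronglyMeasurable N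
      (.of_forall (abs_freeCount_le _ N m))
  have hscale (ω) : ε ≤ |freeCount (c / N) N m ω / N - meanGapSum c N 1 m| ↔
      N * ε ≤ |freeCount (c / N) N m ω - N * meanGapSum c N 1 m| := by
    rw [← mul_le_mul_iff_right₀ hN', ← abs_of_pos hN', ← abs_mul, abs_of_pos hN', mul_sub,
      mul_div_cancel₀ _ hN'.ne']
  simp_rw [hscale, ← integral_freeCount (c := c) hm]
  refine (meas_ge_le_variance_div_sq hmem (by positivity)).trans (ENNReal.ofReal_le_ofReal ?_)
  calc Var[freeCount (c / N) N m; (unifCube N).prod (unifCube N)] / (N * ε) ^ 2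
      ≤ 2 * N / (N * ε) ^ 2 := by
        gcongr
        exact variance_freeCount_le _ N m
    _ = 2 / ε ^ 2 / N := by field_simp

theorem measure_lt_abs_closestMatchedCount_sub_le (hc : 0 < c) (hN : 0 < N) (hm : m ≤ N)
    {ε v : ℝ} (hε : 0 < ε) (hv : |meanGapSum c N 1 m - v| ≤ ε / 2) :
    (unifCube N).prod (unifCube N) {ω | ε < |(closestMatchedCount (ENNReal.ofReal (c / N))
        (Finset.univ.image ω.1) (extendZero ω.2) m : ℝ) / N - (1 - v)|} ≤
      ENNReal.ofReal (2 / (ε / 2) ^ 2 / N) := by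
  have hN' : (0 : ℝ) < N := mod_cast hN
  refine (measure_mono_ae ?_).trans (measure_le_abs_freeCount_sub_le (c := c) hN hm (half_pos hε))
  filter_upwards [Measure.quasiMeasurePreserving_fst.ae (ae_injective_unifCube N)] with ω hω hlt
  have hsum := closestMatchedCount_add_freeCount (m := m) (div_pos hc hN') hω
  have hmatched : (closestMatchedCount (ENNReal.ofReal (c / N)) (Finset.univ.image ω.1)
      (extendZero ω.2) m : ℝ) / N - (1 - v) = v - freeCount (c / N) N m ω / N := by
    rw [eq_sub_of_add_eq hsum, sub_div, div_self hN'.ne']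
    ring
  change ε < _ at hlt
  rw [hmatched, abs_sub_comm] at hlt
  have htri := abs_sub_le (freeCount (c / N) N m ω / N) (meanGapSum c N 1 m) v
  change ε / 2 ≤ _
  linarith

end Concentration

end ClosestMatching

namespace SolvesMaxMatchingPDE
open ClosestMatching

variable {c : ℝ} {f : ℝ → ℝ → ℝ}

theorem gapMoment_one (hf : SolvesMaxMatchingPDE c f) {t : ℝ} (ht : t ∈ Set.Icc (0 : ℝ) 1) :
    gapMoment f t 1 = freeMass f t := by
  have := hf.isProbabilityMeasure_gapSeqLaw ht
  simp [gapMoment]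

theorem tendsto_meanGapSum_one (hc : 0 < c) (hf : SolvesMaxMatchingPDE c f) {t : ℝ}
    (ht : t ∈ Set.Icc (0 : ℝ) 1) {m : ℕ → ℕ} (hm : ∀ N, m N ≤ N)
    (hmt : Filter.Tendsto (fun N => (m N : ℝ) / N) .atTop (nhds t)) :
    Filter.Tendsto (fun N => meanGapSum c N 1 (m N)) .atTop (nhds (freeMass f t)) := by
  have hmem (N : ℕ) : (m N : ℝ) / N ∈ Set.Icc (0 : ℝ) 1 :=
    ⟨by positivity, div_le_one_of_le₀ (mod_cast hm N) N.cast_nonneg⟩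
  have hfree : Filter.Tendsto (fun N => freeMass f (m N / N)) .atTop (nhds (freeMass f t)) :=
    (hf.hasDerivWithinAt_freeMass hc ht).continuousWithinAt.tendsto.comp
      (tendsto_nhdsWithin_iff.2 ⟨hmt, .of_forall hmem⟩)
  have herr := hf.tendsto_gapSumError hc hm (φ := 1) (k := 0) fun _ _ _ => rfl
  simp only [gapSumError, hf.gapMoment_one (hmem _)] at herr
  simpa using ((tendsto_zero_iff_abs_tendsto_zero _).2 herr).add hfree

end SolvesMaxMatchingPDE

/-- If `f` solves the max-matching PDE with parameter `c`, then for every `t ∈ [0,1]`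
the fraction `κ_N(t)/N` of matched online points after `⌊tN⌋` arrivals, for the greedy
algorithm `closest` with threshold `c/N` on `N` uniform offline and online points,
converges in probability to `1 - ∫₀^∞ f(x,t) dx`. -/
theorem stmt7 (c : ℝ) (hc : 0 < c) (f : ℝ → ℝ → ℝ) (hf : SolvesMaxMatchingPDE c f)
    (t : ℝ) (ht : t ∈ Set.Icc (0 : ℝ) 1) (ε : ℝ) (hε : 0 < ε) :
    Filter.Tendsto
      (fun N : ℕ =>
        ((unifCube N).prod (unifCube N))
          {ω | ε < |(closestMatchedCount (ENNReal.ofReal (c / N))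
              (Finset.image ω.1 Finset.univ)
              (fun i => if h : i < N then ω.2 ⟨i, h⟩ else 0)
              ⌊t * N⌋₊ : ℝ) / N
            - (1 - ∫ x in Set.Ioi (0 : ℝ), f x t)|})
      Filter.atTop (nhds 0) := by
  rw [hf.setIntegral_Ioi]
  have hfloor_le (N : ℕ) : ⌊t * N⌋₊ ≤ N :=
    Nat.floor_le_of_le (mul_le_of_le_one_left N.cast_nonneg ht.2)
  have hfloor : Filter.Tendsto (fun N : ℕ => (⌊t * N⌋₊ : ℝ) / N) .atTop (nhds t) :=
    (tendsto_nat_floor_mul_div_atTop ht.1).comp tendsto_natCast_atTop_atTop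
  have hmean := hf.tendsto_meanGapSum_one hc ht hfloor_le hfloor
  have hbound : Filter.Tendsto (fun N : ℕ => ENNReal.ofReal (2 / (ε / 2) ^ 2 / N)) .atTop
      (nhds 0) := by
    simpa using ENNReal.tendsto_ofReal (tendsto_const_div_atTop_nhds_zero_nat (2 / (ε / 2) ^ 2))
  refine tendsto_of_tendsto_of_tendsto_of_le_of_le' tendsto_const_nhds hbound
    (.of_forall fun _ => bot_le) ?_
  filter_upwards [Metric.tendsto_nhds.1 hmean (ε / 2) (half_pos hε),
    Filter.eventually_gt_atTop 0] with N hmeanN hN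
  exact ClosestMatching.measure_lt_abs_closestMatchedCount_sub_le hc hN (hfloor_le N) hε hmeanN.le
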